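/- Let F → E → B be a rational fibration with minimal model ΛW,d_B → ΛW⊗ΛV,D → ΛV,d, where F is a rational Poincaré duality space with e_0(F) = n, B is a wedge of odd-dimensional spheres, and ΛW,d_B is the bigraded minimal model of B with quadratic differential. Let α ∈ Λ^{≥n}V be a d-cocycle representing the fundamental class of F and let u ∈ W be a generator of lowest degree (so d_B u = 0). Then there is an element η ∈ Λ^{≥n+1}(W⊕V) with η ∈ (ΛW)_+⊗ΛV such that D(uα + η) = 0, and moreover the D-cocycle uα + η ∈ Λ^{≥n+1}(W⊕V) is not D-exact. -/

import Mathlib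

/-!
Write `ΛW ⊗ ΛV` for the total algebra, identified through `FibrationModel.mu` and
`FibrationModel.Theta` with the tensor product of base and fibre.

*The total differential raises word length* (`FibrationModel.d_L`). The generators of `W` have odd
degree (`BigradedSullivan.V_even`): the base has no even cohomology, so an even generator would have
a nonzero differential, quadratic in odd generators of smaller lower degree, hence of even degree.
Let `λ` be a linear form on `ΛW` of odd degree vanishing on decomposables. Then
`θ = (λ ⊗ 1) ∘ D` restricted to `ΛV` is a derivation commuting with `d` (`FibrationModel.theta_mul`,
`FibrationModel.theta_d`). If `D v` had a component along a generator of `W`, for some `λ` the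
scalar `θ v` would be nonzero. This is impossible, because the cohomology of `F` is bounded
(`Sullivan.no_derivation`): evaluating the exponential of `θ` at the augmentation gives an algebra
map `ΛV → ℚ[[X]]` nonzero on `v` and annihilating the coboundaries and the generators of smaller
degree, while a power of `v` becomes a coboundary once these generators are killed
(`Stage.exists_kill_below`).

*Construction of `η`.* The obstruction `D(uα) = - u Dα` has word length at least `n + 2`. There is
a homotopy `h` on `ΛW` with `d_B h = 1` on coboundaries, of word length `-1` and lower degree `+1`
(`BigradedSullivan.exists_h`). The component of lower degree `0` of `u Dα` is a `d_B`-boundary since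
`Dα` lies in the ideal of `Λ⁺W` and products vanish in the cohomology of `B`
(`FibrationModel.base_exact`); the homotopy pushes the obstruction to positive lower degree, where
the leading component is always a `d_B`-boundary because `H₊(ΛW, d_B) = 0`
(`FibrationModel.leading_exact`). In a fixed degree the lower degree is bounded
(`BigradedSullivan.exists_bound`), so finitely many steps produce `η` (`FibrationModel.kill`).

*Non-exactness* (`FibrationModel.not_exact`). Let `λ` be dual to `u`, so that `λ` vanishes in
positive lower degree. If `uα + η = D y`, applying `λ ⊗ 1` gives `α = θ y₀ - d (λ ⊗ 1) y`, where
`y₀`, the image of `y` in `ΛV`, is a cocycle of degree above the formal dimension of `F`. So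
`y₀ = d w`, and `α = d (θ w - (λ ⊗ 1) y)` is a coboundary, against the choice of `α`.
-/

/-!
A self-contained framework for rational homotopy theory at the level of Sullivan models,
following the conventions of G. Lupton, "Variations on a conjecture of Halperin".

All spaces are simply connected CW complexes of finite type over ℚ; following the paper,
a space is represented by its Sullivan minimal model (a minimal Sullivan algebra), and a
rational fibration `F → E → B` is represented by (the minimal model of the fibration,
i.e.) a KS-extension  `M_B → M_B ⊗ ΛV → ΛV`  whose quotient `ΛV, d` is a minimal model
of the fibre `F`; the total space `E` is represented by the middle (KS) algebra, which is
quasi-isomorphic to the minimal model of `E`.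
-/

namespace RHT

/-- A non-negatively graded, graded-commutative differential graded algebra over `ℚ`
(a cochain algebra) : the basic algebraic object of rational homotopy theory. -/
structure CDGA : Type 1 where
  A : Type
  [ringA : Ring A]
  [algA : Algebra ℚ A]
  grading : ℕ → Submodule ℚ A
  [gradedA : GradedAlgebra grading]
  gcomm : ∀ {i j : ℕ} {x y : A}, x ∈ grading i → y ∈ grading j →
    x * y = ((-1 : ℚ) ^ (i * j)) • (y * x)
  d : A →ₗ[ℚ] A
  d_mem : ∀ {i : ℕ} {x : A}, x ∈ grading i → d x ∈ grading (i + 1)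
  d_sq : ∀ x : A, d (d x) = 0
  leibniz : ∀ {i : ℕ} (x y : A), x ∈ grading i →
    d (x * y) = d x * y + ((-1 : ℚ) ^ i) • (x * d y)

attribute [instance] CDGA.ringA CDGA.algA CDGA.gradedA

namespace CDGA

/-- `x` is a coboundary. -/
def IsExact (C : CDGA) (x : C.A) : Prop := ∃ y : C.A, C.d y = x

def cocycles (C : CDGA) (i : ℕ) : Submodule ℚ C.A := C.grading i ⊓ LinearMap.ker C.d

def coboundaries (C : CDGA) (i : ℕ) : Submodule ℚ C.A := C.grading i ⊓ LinearMap.range C.d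

/-- The degree `i` cohomology of a cochain algebra. -/
abbrev cohomology (C : CDGA) (i : ℕ) : Type :=
  ↥(C.cocycles i) ⧸ (Submodule.comap (C.cocycles i).subtype (C.coboundaries i))

/-- The differential vanishes identically. -/
def ZeroDiff (C : CDGA) : Prop := ∀ x : C.A, C.d x = 0

/-- The rational cup-length of (the cohomology of) a cochain algebra: the greatest `n`
such that some `n`-fold product of cocycles of positive degree is not a coboundary. -/
noncomputable def cup0 (C : CDGA) : ℕ :=
  sSup {n | ∃ l : List C.A, l.length = n ∧
    (∀ x ∈ l, (∃ i, 0 < i ∧ x ∈ C.grading i) ∧ C.d x = 0) ∧ ¬ C.IsExact l.prod}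

/-- All `(n+1)`-fold products of elements of the augmentation ideal vanish. -/
def NilpotentOfLength (C : CDGA) (n : ℕ) : Prop :=
  ∀ l : List C.A, l.length = n + 1 → (∀ x ∈ l, ∃ i, 0 < i ∧ x ∈ C.grading i) →
    l.prod = 0

end CDGA

/-- A morphism of cochain algebras: a `ℚ`-algebra map preserving degrees and
commuting with the differentials. -/
structure Hom (C D : CDGA) where
  toAlgHom : C.A →ₐ[ℚ] D.A
  map_grading : ∀ {i : ℕ} {x : C.A}, x ∈ C.grading i → toAlgHom x ∈ D.grading i
  comm_d : ∀ x : C.A, toAlgHom (C.d x) = D.d (toAlgHom x)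

/-- A morphism of cochain algebras is a quasi-isomorphism if it induces an isomorphism
on cohomology (stated elementwise: surjectivity and injectivity on cohomology classes). -/
def QuasiIso {C D : CDGA} (f : Hom C D) : Prop :=
  (∀ y : D.A, D.d y = 0 → ∃ x : C.A, C.d x = 0 ∧ D.IsExact (f.toAlgHom x - y)) ∧
  (∀ x : C.A, C.d x = 0 → D.IsExact (f.toAlgHom x) → C.IsExact x)

/-- A (cofibrant) cochain algebra is formal if it admits a quasi-isomorphism to a cochain
algebra with zero differential (its cohomology algebra).  A space is formal iff its
minimal model (or any Sullivan model of it) is formal in this sense. -/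
def Formal (C : CDGA) : Prop :=
  ∃ (H : CDGA) (f : Hom C H), H.ZeroDiff ∧ QuasiIso f

/-- A Sullivan algebra: a cochain algebra which is free graded-commutative on a
(simply connected, finite type) graded vector space `V` of generators.  Freeness is
encoded by the universal property of the free graded-commutative algebra. -/
structure Sullivan extends CDGA where
  V : ℕ → Submodule ℚ A
  V_le : ∀ i, V i ≤ grading i
  V_zero : V 0 = ⊥
  V_one : V 1 = ⊥
  V_fin : ∀ i, FiniteDimensional ℚ (V i)
  generates : Algebra.adjoin ℚ (⋃ i, (V i : Set A)) = ⊤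
  free : ∀ (C : Type) [instC : Ring C] [instC2 : Algebra ℚ C] (𝒞 : ℕ → Submodule ℚ C),
    (1 : C) ∈ 𝒞 0 →
    (∀ i j (x y : C), x ∈ 𝒞 i → y ∈ 𝒞 j → x * y ∈ 𝒞 (i + j)) →
    (∀ i j (x y : C), x ∈ 𝒞 i → y ∈ 𝒞 j → x * y = ((-1 : ℚ) ^ (i * j)) • (y * x)) →
    ∀ f : (i : ℕ) → V i →ₗ[ℚ] C, (∀ i (v : V i), f i v ∈ 𝒞 i) →
    ∃! φ : A →ₐ[ℚ] C, ∀ i (v : V i), φ (v : A) = f i v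

namespace Sullivan

variable (S : Sullivan)

/-- The span of the generators. -/
def genSpan : Submodule ℚ S.A := ⨆ i, S.V i

/-- `Λ^{≥ n} V` : the ideal spanned by products of at least `n` generators. -/
def lengthGE (n : ℕ) : Submodule ℚ S.A := S.genSpan ^ n * (⊤ : Submodule ℚ S.A)

/-- Minimality: the differential is decomposable. -/
def Minimal : Prop := ∀ x ∈ S.genSpan, S.d x ∈ S.lengthGE 2

/-- The (space modelled by the) Sullivan algebra is elliptic: finitely many generators
(finite-dimensional rational homotopy) and finite-dimensional cohomology. -/
def Elliptic : Prop :=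
  (∃ N, ∀ i, N ≤ i → S.V i = ⊥) ∧
  (∀ i, FiniteDimensional ℚ (S.toCDGA.cohomology i)) ∧
  (∃ N, ∀ i, N ≤ i → Subsingleton (S.toCDGA.cohomology i))

/-- Positive Euler characteristic : `Σ (-1)^i dim H^i > 0`. -/
def PosEuler : Prop :=
  ∃ N : ℕ, (∀ i, N ≤ i → Subsingleton (S.toCDGA.cohomology i)) ∧
    0 < ∑ i ∈ Finset.range N,
      ((-1 : ℤ) ^ i * (Module.finrank ℚ (S.toCDGA.cohomology i) : ℤ))

/-- `S` is the minimal model of the odd sphere `S^m` : one generator, in odd degree `m`,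
and zero differential. -/
def OddSphere (m : ℕ) : Prop :=
  Odd m ∧ Module.finrank ℚ (S.V m) = 1 ∧ (∀ j, j ≠ m → S.V j = ⊥) ∧ S.toCDGA.ZeroDiff

/-- `S` models a space which rationally is a wedge of odd-dimensional spheres:
it is formal, has no cohomology in positive even degrees, and all products of
positive-degree cohomology classes vanish. -/
def WedgeOddSpheres : Prop :=
  Formal S.toCDGA ∧
  (∀ k, 0 < k → ∀ x ∈ S.grading (2 * k), S.d x = 0 → S.toCDGA.IsExact x) ∧
  (∀ i j (x y : S.A), 0 < i → 0 < j → x ∈ S.grading i → y ∈ S.grading j →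
    S.d x = 0 → S.d y = 0 → S.toCDGA.IsExact (x * y))

/-- `S` models a rational Poincaré duality space with fundamental class in degree `N`. -/
def PoincareDuality (N : ℕ) : Prop :=
  (∀ i, FiniteDimensional ℚ (S.toCDGA.cohomology i)) ∧
  (∀ i, N < i → Subsingleton (S.toCDGA.cohomology i)) ∧
  (Module.finrank ℚ (S.toCDGA.cohomology N) = 1) ∧
  (∀ i (x : S.A), i ≤ N → x ∈ S.grading i → S.d x = 0 → ¬ S.toCDGA.IsExact x →
    ∃ y ∈ S.grading (N - i), S.d y = 0 ∧ ¬ S.toCDGA.IsExact (x * y))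

/-- Toomer's invariant `e₀` (of the space with minimal model `S`) : the greatest `n`
such that some non-coboundary cocycle lies in `Λ^{≥n} V`. -/
noncomputable def e0 : ℕ :=
  sSup {n | ∃ x ∈ S.lengthGE n, S.d x = 0 ∧ ¬ S.toCDGA.IsExact x}

/-- The set of even-degree generators. -/
def evenGenSet : Set S.A := ⋃ k, (S.V (2 * k) : Set S.A)

/-- `Λ(V^even)` as a submodule. -/
def evenSub : Submodule ℚ S.A :=
  Subalgebra.toSubmodule (Algebra.adjoin ℚ S.evenGenSet)

/-- The span of the odd-degree generators. -/
def oddGenSpan : Submodule ℚ S.A := ⨆ k, S.V (2 * k + 1)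

/-- A pure Sullivan algebra: `d(V^even) = 0` and `d(V^odd) ⊆ Λ(V^even)`. -/
def Pure : Prop :=
  (∀ k, ∀ v ∈ S.V (2 * k), S.d v = 0) ∧
  (∀ k, ∀ v ∈ S.V (2 * k + 1), S.d v ∈ S.evenSub)

/-- For a pure Sullivan algebra, the lower (second) grading:
`(ΛV)_k = Λ(V^even) ⊗ Λ^k(V^odd)`. -/
def pureLow (k : ℕ) : Submodule ℚ S.A := S.evenSub * S.oddGenSpan ^ k

/-- The part of positive lower degree `(ΛV)_+`. -/
def pureLowPlus : Submodule ℚ S.A := ⨆ k, S.pureLow (k + 1)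

/-- The cohomology of `S` is spherically generated: every cocycle agrees, modulo
coboundaries, with an element of the subalgebra generated by the cocycles lying in
the generating space `V` (the spherical classes). -/
def SphericallyGenerated : Prop :=
  ∀ x : S.A, S.d x = 0 →
    ∃ y ∈ Algebra.adjoin ℚ {w : S.A | w ∈ S.genSpan ∧ S.d w = 0},
      S.toCDGA.IsExact (x - y)

end Sullivan

/-- A bigraded (minimal) Sullivan algebra: the bigraded model of a formal space.
The lower grading `low` is multiplicative, the generators split into pure lower
degrees, the differential lowers the lower degree by exactly one, and all cocycles
of positive lower degree are coboundaries (`H_+ = 0`). -/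
structure BigradedSullivan extends Sullivan where
  low : ℕ → Submodule ℚ A
  low_one : (1 : A) ∈ low 0
  low_mul : ∀ i j (x y : A), x ∈ low i → y ∈ low j → x * y ∈ low (i + j)
  low_internal : DirectSum.IsInternal low
  V_low : ∀ i, V i = ⨆ k, (V i ⊓ low k)
  d_low_zero : ∀ x ∈ low 0, d x = 0
  d_low : ∀ k, ∀ x ∈ low (k + 1), d x ∈ low k
  acyclic_plus : ∀ k, ∀ x ∈ low (k + 1), d x = 0 → ∃ y : A, d y = x

/-- The lower-degree-`0` part of the generators: `V_k` for `k = 0`, etc. -/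
def BigradedSullivan.lowGens (S : BigradedSullivan) (k : ℕ) : Submodule ℚ S.A :=
  ⨆ i, (S.V i ⊓ S.low k)

/-- The universal property of a KS-extension `B → B ⊗ ΛV` : the total algebra is the
free graded-commutative algebra over `B` on the (lifted) generating space `V`. -/
def RelativelyFree (B T : CDGA) (incl : Hom B T) (V : ℕ → Submodule ℚ T.A) : Prop :=
  ∀ (C : Type) [instC : Ring C] [instC2 : Algebra ℚ C] (𝒞 : ℕ → Submodule ℚ C),
    (1 : C) ∈ 𝒞 0 →
    (∀ i j (x y : C), x ∈ 𝒞 i → y ∈ 𝒞 j → x * y ∈ 𝒞 (i + j)) →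
    (∀ i j (x y : C), x ∈ 𝒞 i → y ∈ 𝒞 j → x * y = ((-1 : ℚ) ^ (i * j)) • (y * x)) →
    ∀ (g : B.A →ₐ[ℚ] C), (∀ i (x : B.A), x ∈ B.grading i → g x ∈ 𝒞 i) →
    ∀ (f : (i : ℕ) → V i →ₗ[ℚ] C), (∀ i (v : V i), f i v ∈ 𝒞 i) →
    ∃! φ : T.A →ₐ[ℚ] C, (∀ x : B.A, φ (incl.toAlgHom x) = g x) ∧
      (∀ i (v : V i), φ (v : T.A) = f i v)

/-- The KS (Koszul–Sullivan) condition: the lifted generators admit a well-ordered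
basis `{v_α}` with `D v_α ∈ B ⊗ Λ(V_{<α})`. -/
def KSBasisCondition (B T : CDGA) (incl : Hom B T) (V : ℕ → Submodule ℚ T.A) : Prop :=
  ∃ (ι : Set ℕ) (b : ι → T.A),
    LinearIndependent ℚ b ∧
    Submodule.span ℚ (Set.range b) = (⨆ i, V i) ∧
    (∀ α : ι, ∃ i, b α ∈ V i) ∧
    (∀ α : ι, T.d (b α) ∈
      Algebra.adjoin ℚ
        (Set.range (incl.toAlgHom : B.A → T.A) ∪ b '' {β : ι | (β : ℕ) < (α : ℕ)}))

/-- `incl : B → T` is a KS-extension of `B`. -/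
def IsRelKS (B T : CDGA) (incl : Hom B T) : Prop :=
  ∃ V : ℕ → Submodule ℚ T.A, (∀ i, V i ≤ T.grading i) ∧
    RelativelyFree B T incl V ∧ KSBasisCondition B T incl V

/-- A model of a rational fibration `F → E → B` with base algebra `B` (a Sullivan model
of the base, or e.g. its cohomology `H(B)` when the base is formal) and fibre a Sullivan
algebra `F = (ΛV, d)`: a KS-extension `B → B ⊗ ΛV → ΛV` whose quotient by the ideal
generated by `B⁺` is `F`.  The total algebra `T` represents the total space `E`. -/
structure FibrationModel (B : CDGA) (F : Sullivan) where
  T : CDGA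
  incl : Hom B T
  proj : Hom T F.toCDGA
  V : ℕ → Submodule ℚ T.A
  V_le : ∀ i, V i ≤ T.grading i
  incl_inj : Function.Injective (incl.toAlgHom : B.A → T.A)
  relFree : RelativelyFree B T incl V
  ksBasis : KSBasisCondition B T incl V
  proj_incl : ∀ i, 0 < i → ∀ x ∈ B.grading i, proj.toAlgHom (incl.toAlgHom x) = 0
  proj_V : ∀ i, (V i).map (proj.toAlgHom.toLinearMap) = F.V i
  fiber_inj : ∀ x ∈ Subalgebra.toSubmodule (Algebra.adjoin ℚ (⋃ i, (V i : Set T.A))),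
    proj.toAlgHom x = 0 → x = 0
  ker_proj : ∀ x : T.A, proj.toAlgHom x = 0 ↔
    x ∈ (Submodule.map (incl.toAlgHom.toLinearMap) (⨆ i, B.grading (i + 1))) *
      (⊤ : Submodule ℚ T.A)

namespace FibrationModel

variable {B : CDGA} {F : Sullivan} (P : FibrationModel B F)

/-- The copy `1 ⊗ ΛV ⊆ B ⊗ ΛV` of the fibre inside the total algebra: the subalgebra
generated by the lifted generators. -/
def fiberSub : Submodule ℚ P.T.A :=
  Subalgebra.toSubmodule (Algebra.adjoin ℚ (⋃ i, (P.V i : Set P.T.A)))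

/-- The image `B ⊗ 1 ⊆ B ⊗ ΛV` of the base. -/
def baseSub : Submodule ℚ P.T.A := LinearMap.range (P.incl.toAlgHom.toLinearMap)

/-- The span of the lifted fibre generators. -/
def fiberGenSpan : Submodule ℚ P.T.A := ⨆ i, P.V i

/-- The span of all generators (base generators `W` together with the fibre ones). -/
def totalGenSpan (W : Submodule ℚ B.A) : Submodule ℚ P.T.A :=
  Submodule.map P.incl.toAlgHom.toLinearMap W ⊔ P.fiberGenSpan

/-- `Λ^{≥n}(W ⊕ V)` in the total algebra. -/
def totalLengthGE (W : Submodule ℚ B.A) (n : ℕ) : Submodule ℚ P.T.A :=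
  (P.totalGenSpan W) ^ n * (⊤ : Submodule ℚ P.T.A)

/-- The part of the fibre copy `1 ⊗ ΛV` lying over a submodule `K ⊆ ΛV`. -/
def fiberComap (K : Submodule ℚ F.A) : Submodule ℚ P.T.A :=
  P.fiberSub ⊓ Submodule.comap P.proj.toAlgHom.toLinearMap K

/-- The span of the even-degree lifted generators. -/
def evenGenSpan : Submodule ℚ P.T.A := ⨆ k, P.V (2 * k)

/-- `Λ(V^even)` inside the total algebra. -/
def evenSub : Submodule ℚ P.T.A :=
  Subalgebra.toSubmodule (Algebra.adjoin ℚ (⋃ k, (P.V (2 * k) : Set P.T.A)))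

/-- `Λ⁺(V^even)` inside the total algebra. -/
def evenPlus : Submodule ℚ P.T.A := P.evenGenSpan * P.evenSub

/-- The fibration (model) is totally non-cohomologous to zero: the projection onto the
fibre (modelling the fibre inclusion `j : F → E`) is surjective on cohomology. -/
def TNCZ : Prop :=
  ∀ y : F.A, F.d y = 0 → ∃ x : P.T.A, P.T.d x = 0 ∧
    CDGA.IsExact F.toCDGA (P.proj.toAlgHom x - y)

end FibrationModel

/-- A (quasi-isomorphism) ladder between two fibration models: quasi-isomorphisms of
base, total and fibre algebras making both squares commute. -/
structure FibLadder {B B' : CDGA} {F F' : Sullivan}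
    (P : FibrationModel B F) (P' : FibrationModel B' F') where
  fB : Hom B B'
  fT : Hom P.T P'.T
  fF : Hom F.toCDGA F'.toCDGA
  hB : QuasiIso fB
  hT : QuasiIso fT
  hF : QuasiIso fF
  commB : ∀ x : B.A, fT.toAlgHom (P.incl.toAlgHom x) = P'.incl.toAlgHom (fB.toAlgHom x)
  commF : ∀ x : P.T.A,
    fF.toAlgHom (P.proj.toAlgHom x) = P'.proj.toAlgHom (fT.toAlgHom x)

/-- Two fibration models are quasi-isomorphic (model the same rational fibration). -/
def ModelPair {B B' : CDGA} {F F' : Sullivan}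
    (P : FibrationModel B F) (P' : FibrationModel B' F') : Prop :=
  Nonempty (FibLadder P P') ∨ Nonempty (FibLadder P' P)

/-- An isomorphism of KS-extensions. -/
def FibIso {B B' : CDGA} {F F' : Sullivan}
    (P : FibrationModel B F) (P' : FibrationModel B' F') : Prop :=
  ∃ L : FibLadder P P', Function.Bijective (L.fB.toAlgHom : B.A → B'.A) ∧
    Function.Bijective (L.fT.toAlgHom : P.T.A → P'.T.A) ∧
    Function.Bijective (L.fF.toAlgHom : F.A → F'.A)

/-- `cat₀ ≤ n` (Félix–Halperin): the projection `p_n : ΛV → ΛV/Λ^{≥n+1}V` makes `ΛV`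
into a homotopy retract: for a relative KS-model `ΛV → R → ΛV/Λ^{≥n+1}V` of `p_n`
there is a retraction `ρ : R → ΛV` restricting to the identity on `ΛV`. -/
def catLe (S : Sullivan) (n : ℕ) : Prop :=
  ∃ (Q : CDGA) (q : Hom S.toCDGA Q),
    Function.Surjective (q.toAlgHom : S.A → Q.A) ∧
    (∀ x : S.A, q.toAlgHom x = 0 ↔ x ∈ S.lengthGE (n + 1)) ∧
    ∃ (R : CDGA) (ι : Hom S.toCDGA R) (ψ : Hom R Q) (ρ : Hom R S.toCDGA),
      IsRelKS S.toCDGA R ι ∧ QuasiIso ψ ∧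
      (∀ x : S.A, ψ.toAlgHom (ι.toAlgHom x) = q.toAlgHom x) ∧
      (∀ x : S.A, ρ.toAlgHom (ι.toAlgHom x) = x)

/-- The rational Lusternik–Schnirelmann category of the space with minimal model `S`. -/
noncomputable def cat0 (S : Sullivan) : ℕ := sInf {n | catLe S n}

/-- The rational cone-length (Cornea): the least `n` such that the minimal model is
quasi-isomorphic to a cochain algebra whose augmentation ideal has vanishing
`(n+1)`-fold products. -/
noncomputable def cl0 (S : Sullivan) : ℕ :=
  sInf {n | ∃ (Q : CDGA) (f : Hom S.toCDGA Q), QuasiIso f ∧ CDGA.NilpotentOfLength Q n}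

/-- For a formal space the invariants `cup₀, e₀, cat₀, cl₀` all agree; `nil₀` denotes
their common value (here represented by `cat₀`). -/
noncomputable def nil0 (S : Sullivan) : ℕ := cat0 S

end RHT

/-! ### Graded algebra preliminaries -/

namespace RHT

/-- If a multiplicative family of subspaces spans a set of algebra generators, then it spans the
whole algebra. -/
lemma iSup_eq_top_of_gen {A ι : Type*} [Ring A] [Algebra ℚ A] [AddMonoid ι]
    (𝓑 : ι → Submodule ℚ A) (h1 : (1 : A) ∈ 𝓑 0)
    (hmul : ∀ i j x y, x ∈ 𝓑 i → y ∈ 𝓑 j → x * y ∈ 𝓑 (i + j))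
    (G : Set A) (hG : Algebra.adjoin ℚ G = ⊤) (hgen : ∀ x ∈ G, x ∈ ⨆ i, 𝓑 i) :
    ⨆ i, 𝓑 i = ⊤ := by
  have h1' : (1 : A) ∈ ⨆ i, 𝓑 i := Submodule.mem_iSup_of_mem 0 h1
  have hm : ∀ x y : A, x ∈ ⨆ i, 𝓑 i → y ∈ ⨆ i, 𝓑 i → x * y ∈ ⨆ i, 𝓑 i := by
    intro x y hx hy
    induction hx using Submodule.iSup_induction' with
    | mem i x hx =>
      induction hy using Submodule.iSup_induction' with
      | mem j y hy => exact Submodule.mem_iSup_of_mem _ (hmul i j x y hx hy)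
      | zero => simp
      | add a b _ _ ha hb => rw [mul_add]; exact add_mem ha hb
    | zero => simp
    | add a b _ _ ha hb => rw [add_mul]; exact add_mem ha hb
  rw [eq_top_iff]
  intro x _
  have hx : x ∈ Algebra.adjoin ℚ G := by rw [hG]; trivial
  induction hx using Algebra.adjoin_induction with
  | mem x hx => exact hgen x hx
  | algebraMap r => rw [Algebra.algebraMap_eq_smul_one]; exact Submodule.smul_mem _ _ h1'
  | add x y _ _ hx hy => exact add_mem (hx trivial) (hy trivial)
  | mul x y _ _ hx hy => exact hm x y (hx trivial) (hy trivial)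

/-- A family of projections separating a spanning family of subspaces forces every subfamily that
still spans to be the whole family. -/
lemma eq_of_le_of_iSup_eq_top {A ι : Type*} [AddCommGroup A] [Module ℚ A]
    (𝓐 𝓑 : ι → Submodule ℚ A) (pr : ι → A →ₗ[ℚ] A)
    (hpr : ∀ i x, x ∈ 𝓐 i → pr i x = x) (hpr' : ∀ i j x, i ≠ j → x ∈ 𝓐 j → pr i x = 0)
    (hle : ∀ i, 𝓑 i ≤ 𝓐 i) (htop : ⨆ i, 𝓑 i = ⊤) (i : ι) : 𝓐 i ≤ 𝓑 i := by
  have key : ∀ x : A, pr i x ∈ 𝓑 i := by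
    intro x
    have hx : x ∈ ⨆ i, 𝓑 i := by rw [htop]; trivial
    induction hx using Submodule.iSup_induction' with
    | mem j x hx =>
      by_cases h : i = j
      · subst h; rw [hpr i x (hle i hx)]; exact hx
      · rw [hpr' i j x h (hle j hx)]; exact zero_mem _
    | zero => simp
    | add a b _ _ ha hb => rw [map_add]; exact add_mem ha hb
  intro x hx
  rw [← hpr i x hx]; exact key x

namespace CDGA

variable (C : CDGA)

/-- The degree `i` component of an element. -/
def pr (i : ℕ) : C.A →ₗ[ℚ] C.A :=
  (C.grading i).subtype ∘ₗ (DirectSum.component ℚ ℕ (fun i => C.grading i) i) ∘ₗ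
    (DirectSum.decomposeLinearEquiv C.grading).toLinearMap

lemma pr_mem (i : ℕ) (x : C.A) : C.pr i x ∈ C.grading i := by
  simp [pr]

lemma pr_apply (i : ℕ) (x : C.A) : C.pr i x = (DirectSum.decompose C.grading x i : C.A) := rfl

lemma pr_of_mem {i : ℕ} {x : C.A} (hx : x ∈ C.grading i) : C.pr i x = x := by
  rw [pr_apply, DirectSum.decompose_of_mem_same _ hx]

lemma pr_of_ne {i j : ℕ} {x : C.A} (h : i ≠ j) (hx : x ∈ C.grading j) : C.pr i x = 0 := by
  rw [pr_apply, DirectSum.decompose_of_mem_ne _ hx h.symm]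

lemma iSup_grading : ⨆ i, C.grading i = ⊤ :=
  (DirectSum.Decomposition.isInternal C.grading).submodule_iSup_eq_top

/-- Linear statements may be checked on homogeneous elements. -/
@[elab_as_elim]
lemma hom_ind {p : C.A → Prop} (h : ∀ i, ∀ x ∈ C.grading i, p x) (h0 : p 0)
    (hadd : ∀ x y, p x → p y → p (x + y)) (x : C.A) : p x := by
  have hx : x ∈ ⨆ i, C.grading i := by rw [C.iSup_grading]; trivial
  induction hx using Submodule.iSup_induction' with
  | mem j x hx => exact h j x hx
  | zero => exact h0
  | add a b _ _ ha hb => exact hadd a b ha hb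

lemma eq_zero_of_pr (x : C.A) (h : ∀ i, C.pr i x = 0) : x = 0 := by
  apply (DirectSum.decompose C.grading).injective
  ext i
  simpa [pr_apply] using h i

lemma pr_d (i : ℕ) (x : C.A) : C.pr (i + 1) (C.d x) = C.d (C.pr i x) := by
  induction x using C.hom_ind with
  | h j x hx =>
    by_cases h : i = j
    · subst h; rw [pr_of_mem _ hx, pr_of_mem _ (C.d_mem hx)]
    · rw [pr_of_ne _ h hx, pr_of_ne _ (by omega) (C.d_mem hx), map_zero]
  | h0 => simp
  | hadd x y hx hy => simp [hx, hy]

lemma pr_zero_d (x : C.A) : C.pr 0 (C.d x) = 0 := by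
  induction x using C.hom_ind with
  | h j x hx => exact pr_of_ne _ (by omega) (C.d_mem hx)
  | h0 => simp
  | hadd x y hx hy => simp [hx, hy]

/-- The degree of a homogeneous primitive of a homogeneous exact element can be prescribed. -/
lemma exact_hom {i : ℕ} {x : C.A} (hx : x ∈ C.grading (i + 1)) (h : C.IsExact x) :
    ∃ y ∈ C.grading i, C.d y = x := by
  obtain ⟨y, rfl⟩ := h
  exact ⟨C.pr i y, C.pr_mem i y, by rw [← C.pr_d, C.pr_of_mem hx]⟩

/-- The underlying linear map of the parity involution. -/
def tauL : C.A →ₗ[ℚ] C.A :=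
  (DirectSum.toModule ℚ ℕ C.A (fun i => ((-1 : ℚ) ^ i) • (C.grading i).subtype)) ∘ₗ
    (DirectSum.decomposeLinearEquiv C.grading).toLinearMap

lemma tauL_of_mem {i : ℕ} {x : C.A} (hx : x ∈ C.grading i) :
    C.tauL x = (-1 : ℚ) ^ i • x := by
  simp only [tauL, LinearMap.comp_apply, LinearEquiv.coe_coe,
    DirectSum.decomposeLinearEquiv_apply]
  rw [DirectSum.decompose_of_mem _ hx]
  erw [DirectSum.toModule_lof]
  simp

/-- The parity involution `x ↦ (-1)^|x| x`. -/
def tau : C.A →ₐ[ℚ] C.A :=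
  AlgHom.ofLinearMap C.tauL (by
    rw [C.tauL_of_mem (SetLike.GradedOne.one_mem)]; simp) (by
    intro x y
    induction x using C.hom_ind with
    | h i x hx =>
      induction y using C.hom_ind with
      | h j y hy =>
        rw [C.tauL_of_mem hx, C.tauL_of_mem hy, C.tauL_of_mem (SetLike.GradedMul.mul_mem hx hy),
          pow_add, smul_mul_smul_comm]
      | h0 => simp
      | hadd a b ha hb => simp only [mul_add, map_add, ha, hb]
    | h0 => simp
    | hadd a b ha hb => simp only [add_mul, map_add, ha, hb])

lemma tau_of_mem {i : ℕ} {x : C.A} (hx : x ∈ C.grading i) :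
    C.tau x = (-1 : ℚ) ^ i • x := C.tauL_of_mem hx

lemma tau_tau (x : C.A) : C.tau (C.tau x) = x := by
  induction x using C.hom_ind with
  | h i x hx =>
    rw [C.tau_of_mem hx, map_smul, C.tau_of_mem hx, smul_smul, ← mul_pow]; simp
  | h0 => simp
  | hadd a b ha hb => simp only [map_add, ha, hb]

lemma tau_d (x : C.A) : C.tau (C.d x) = - C.d (C.tau x) := by
  induction x using C.hom_ind with
  | h i x hx =>
    rw [C.tau_of_mem hx, map_smul, C.tau_of_mem (C.d_mem hx), pow_succ]; simp
  | h0 => simp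
  | hadd a b ha hb => simp only [map_add, ha, hb]; abel

lemma tau_mem {i : ℕ} {x : C.A} (hx : x ∈ C.grading i) : C.tau x ∈ C.grading i := by
  rw [C.tau_of_mem hx]; exact Submodule.smul_mem _ _ hx

/-- Leibniz rule without homogeneity assumption. -/
lemma d_mul (x y : C.A) : C.d (x * y) = C.d x * y + C.tau x * C.d y := by
  induction x using C.hom_ind with
  | h i x hx => rw [C.leibniz x y hx, C.tau_of_mem hx, smul_mul_assoc]
  | h0 => simp
  | hadd a b ha hb => simp only [add_mul, map_add, ha, hb]; abel

lemma d_one : C.d 1 = 0 := by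
  have := C.d_mul 1 1
  simpa using this

lemma comm_even {i : ℕ} {x : C.A} (hx : x ∈ C.grading i) (hi : Even i) (y : C.A) :
    x * y = y * x := by
  induction y using C.hom_ind with
  | h j y hy => rw [C.gcomm hx hy, (hi.mul_right j).neg_one_pow, one_smul]
  | h0 => simp
  | hadd a b ha hb => simp only [add_mul, mul_add, ha, hb]

lemma comm_odd {i : ℕ} {x : C.A} (hx : x ∈ C.grading i) (hi : Odd i) (y : C.A) :
    x * y = C.tau y * x := by
  induction y using C.hom_ind with
  | h j y hy =>
    rw [C.gcomm hx hy, C.tau_of_mem hy, pow_mul, hi.neg_one_pow, smul_mul_assoc]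
  | h0 => simp
  | hadd a b ha hb => simp only [add_mul, mul_add, map_add, ha, hb]

lemma mul_mem {i j : ℕ} {x y : C.A} (hx : x ∈ C.grading i) (hy : y ∈ C.grading j) :
    x * y ∈ C.grading (i + j) := SetLike.GradedMul.mul_mem hx hy

lemma one_mem : (1 : C.A) ∈ C.grading 0 := SetLike.GradedOne.one_mem

/-- A homogeneous element can be moved across a factor, at the cost of the parity involution. -/
lemma exists_comm {i : ℕ} {x : C.A} (hx : x ∈ C.grading i) (y : C.A) :
    ∃ y', x * y = y' * x := by
  rcases Nat.even_or_odd i with h | h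
  · exact ⟨y, C.comm_even hx h y⟩
  · exact ⟨C.tau y, C.comm_odd hx h y⟩

lemma exists_comm' {i : ℕ} {x : C.A} (hx : x ∈ C.grading i) (y : C.A) :
    ∃ y', y * x = x * y' := by
  rcases Nat.even_or_odd i with h | h
  · exact ⟨y, (C.comm_even hx h y).symm⟩
  · exact ⟨C.tau y, by rw [C.comm_odd hx h, C.tau_tau]⟩

/-- If a homogeneous `x * y` has `x` homogeneous then `y` may be replaced by one of its
components. -/
lemma pr_mul {i : ℕ} {x : C.A} (hx : x ∈ C.grading i) (k : ℕ) (y : C.A) :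
    C.pr (i + k) (x * y) = x * C.pr k y := by
  induction y using C.hom_ind with
  | h j y hy =>
    by_cases h : k = j
    · subst h; rw [pr_of_mem _ hy, pr_of_mem _ (C.mul_mem hx hy)]
    · rw [pr_of_ne _ h hy, pr_of_ne _ (by omega) (C.mul_mem hx hy), mul_zero]
  | h0 => simp
  | hadd a b ha hb => simp only [mul_add, map_add, ha, hb]

lemma pr_mul_lt {i k : ℕ} {x : C.A} (hx : x ∈ C.grading i) (hk : k < i) (y : C.A) :
    C.pr k (x * y) = 0 := by
  induction y using C.hom_ind with
  | h j y hy => exact pr_of_ne _ (by omega) (C.mul_mem hx hy)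
  | h0 => simp
  | hadd a b ha hb => simp only [mul_add, map_add, ha, hb, add_zero]

end CDGA

end RHT

/-! ### Sullivan algebras: augmentation, indecomposables, word length -/

namespace RHT
namespace Sullivan

variable (S : Sullivan)

lemma hom_ext {C : Type*} [Ring C] [Algebra ℚ C] (φ ψ : S.A →ₐ[ℚ] C)
    (h : ∀ i, ∀ v ∈ S.V i, φ v = ψ v) : φ = ψ := by
  refine AlgHom.ext_of_adjoin_eq_top S.generates ?_
  intro x hx
  obtain ⟨i, hi⟩ := Set.mem_iUnion.1 hx
  exact h i x hi

@[elab_as_elim]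
lemma gen_ind {p : S.A → Prop} (hV : ∀ i, ∀ v ∈ S.V i, p v) (h1 : p 1)
    (hsmul : ∀ (r : ℚ) x, p x → p (r • x))
    (hadd : ∀ x y, p x → p y → p (x + y)) (hmul : ∀ x y, p x → p y → p (x * y)) (x : S.A) :
    p x := by
  have hx : x ∈ Algebra.adjoin ℚ (⋃ i, (S.V i : Set S.A)) := by rw [S.generates]; trivial
  induction hx using Algebra.adjoin_induction with
  | mem x hx => obtain ⟨i, hi⟩ := Set.mem_iUnion.1 hx; exact hV i x hi
  | algebraMap r => rw [Algebra.algebraMap_eq_smul_one]; exact hsmul r 1 h1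
  | add x y _ _ hx hy => exact hadd x y hx hy
  | mul x y _ _ hx hy => exact hmul x y hx hy

/-- An algebra map which is homogeneous on generators is homogeneous. -/
lemma grade_map {C : Type*} [Ring C] [Algebra ℚ C] (𝒞 : ℕ → Submodule ℚ C)
    (h1 : (1 : C) ∈ 𝒞 0) (hmul : ∀ i j (x y : C), x ∈ 𝒞 i → y ∈ 𝒞 j → x * y ∈ 𝒞 (i + j))
    (φ : S.A →ₐ[ℚ] C) (h : ∀ i, ∀ v ∈ S.V i, φ v ∈ 𝒞 i) {i : ℕ} {x : S.A}
    (hx : x ∈ S.grading i) : φ x ∈ 𝒞 i := by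
  have htop : ⨆ i, (S.grading i ⊓ (𝒞 i).comap φ.toLinearMap) = ⊤ := by
    refine iSup_eq_top_of_gen (fun i => S.grading i ⊓ (𝒞 i).comap φ.toLinearMap) ?_ ?_ _
      S.generates ?_
    · exact ⟨S.one_mem, by simpa using h1⟩
    · rintro i j x y ⟨hx, hx'⟩ ⟨hy, hy'⟩
      refine ⟨S.mul_mem hx hy, ?_⟩
      have := hmul i j _ _ hx' hy'
      simpa using this
    · intro x hx
      obtain ⟨i, hi⟩ := Set.mem_iUnion.1 hx
      exact Submodule.mem_iSup_of_mem i ⟨S.V_le i hi, h i x hi⟩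
  exact (eq_of_le_of_iSup_eq_top S.grading _ S.pr (fun i x => S.pr_of_mem)
    (fun i j x => S.pr_of_ne) (fun i => inf_le_left) htop i hx).2


lemma exists_aug : ∃ φ : S.A →ₐ[ℚ] ℚ, ∀ i, ∀ v ∈ S.V i, φ v = 0 := by
  obtain ⟨φ, hφ, -⟩ := S.free ℚ (fun i => if i = 0 then ⊤ else ⊥) (by simp)
    (by
      intro i j x y hx hy
      rcases Nat.eq_zero_or_pos (i + j) with h | h
      · simp [h]
      · rw [if_neg h.ne']
        by_cases hi : i = 0
        · rw [if_neg (by omega)] at hy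
          simp [(Submodule.mem_bot ℚ).1 hy]
        · rw [if_neg hi] at hx
          simp [(Submodule.mem_bot ℚ).1 hx])
    (by
      intro i j x y hx hy
      by_cases hi : i = 0
      · simp [hi, mul_comm]
      · rw [if_neg hi] at hx
        simp [(Submodule.mem_bot ℚ).1 hx])
    (fun _ => 0) (fun _ _ => zero_mem _)
  exact ⟨φ, fun i v hv => hφ i ⟨v, hv⟩⟩

/-- The augmentation, killing all generators. -/
noncomputable def aug : S.A →ₐ[ℚ] ℚ := S.exists_aug.choose

lemma aug_V {i : ℕ} {v : S.A} (hv : v ∈ S.V i) : S.aug v = 0 := S.exists_aug.choose_spec i v hv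

lemma aug_of_pos {i : ℕ} (hi : 0 < i) {x : S.A} (hx : x ∈ S.grading i) : S.aug x = 0 := by
  have := S.grade_map (fun i => if i = 0 then ⊤ else ⊥) (by simp) (by
      intro i j x y hx hy
      rcases Nat.eq_zero_or_pos (i + j) with h | h
      · simp [h]
      · rw [if_neg h.ne']
        by_cases hi : i = 0
        · rw [if_neg (by omega)] at hy
          simp [(Submodule.mem_bot ℚ).1 hy]
        · rw [if_neg hi] at hx
          simp [(Submodule.mem_bot ℚ).1 hx]) S.aug
      (fun i v hv => by rw [S.aug_V hv]; exact zero_mem _) hx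
  rw [if_neg hi.ne'] at this
  simpa using this

/-- The augmentation ideal, as the span of the elements of positive degree. -/
def plus : Submodule ℚ S.A := ⨆ i, S.grading (i + 1)

lemma mem_plus {i : ℕ} (hi : 0 < i) {x : S.A} (hx : x ∈ S.grading i) : x ∈ S.plus := by
  obtain ⟨j, rfl⟩ : ∃ j, i = j + 1 := ⟨i - 1, by omega⟩
  exact Submodule.mem_iSup_of_mem j hx

lemma V_pos {i : ℕ} {v : S.A} (hv : v ∈ S.V i) (h0 : v ≠ 0) : 2 ≤ i := by
  by_contra! h
  interval_cases i
  · rw [S.V_zero] at hv; exact h0 (by simpa using hv)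
  · rw [S.V_one] at hv; exact h0 (by simpa using hv)

lemma V_plus {i : ℕ} {v : S.A} (hv : v ∈ S.V i) : v ∈ S.plus := by
  by_cases h : v = 0
  · rw [h]; exact zero_mem _
  · exact S.mem_plus (by have := S.V_pos hv h; omega) (S.V_le i hv)

lemma aug_plus {x : S.A} (hx : x ∈ S.plus) : S.aug x = 0 := by
  induction hx using Submodule.iSup_induction' with
  | mem j x hx => exact S.aug_of_pos (by omega) hx
  | zero => simp
  | add a b _ _ ha hb => rw [map_add, ha, hb, add_zero]

lemma grading_zero {x : S.A} (hx : x ∈ S.grading 0) : x = S.aug x • (1 : S.A) := by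
  have htop : ⨆ i, (if i = 0 then Submodule.span ℚ {(1 : S.A)} else S.grading i) = ⊤ := by
    refine iSup_eq_top_of_gen _ ?_ ?_ _ S.generates ?_
    · simp
    · intro i j x y hx hy
      by_cases hi : i = 0
      · subst hi
        rw [if_pos rfl] at hx
        obtain ⟨r, rfl⟩ := Submodule.mem_span_singleton.1 hx
        rw [zero_add, smul_mul_assoc, one_mul]; exact Submodule.smul_mem _ _ hy
      · by_cases hj : j = 0
        · subst hj
          rw [if_pos rfl] at hy
          obtain ⟨r, rfl⟩ := Submodule.mem_span_singleton.1 hy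
          rw [add_zero, mul_smul_comm, mul_one]; exact Submodule.smul_mem _ _ hx
        · rw [if_neg hi] at hx
          rw [if_neg hj] at hy
          rw [if_neg (by omega)]; exact S.mul_mem hx hy
    · intro x hx
      obtain ⟨i, hi⟩ := Set.mem_iUnion.1 hx
      by_cases h : x = 0
      · rw [h]; exact zero_mem _
      · refine Submodule.mem_iSup_of_mem i ?_
        rw [if_neg (by have := S.V_pos hi h; omega)]; exact S.V_le i hi
  have := eq_of_le_of_iSup_eq_top S.grading _ S.pr (fun i x => S.pr_of_mem)
    (fun i j x => S.pr_of_ne) (fun i => by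
      by_cases hi : i = 0
      · subst hi
        rw [if_pos rfl, Submodule.span_singleton_le_iff_mem]; exact S.one_mem
      · rw [if_neg hi]) htop 0 hx
  rw [if_pos rfl] at this
  obtain ⟨r, rfl⟩ := Submodule.mem_span_singleton.1 this
  simp

lemma sub_aug_mem (x : S.A) : x - S.aug x • (1 : S.A) ∈ S.plus := by
  induction x using S.hom_ind with
  | h i x hx =>
    rcases Nat.eq_zero_or_pos i with rfl | hi
    · rw [← S.grading_zero hx, sub_self]; exact zero_mem _
    · rw [S.aug_of_pos hi hx, zero_smul, sub_zero]; exact S.mem_plus hi hx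
  | h0 => simp
  | hadd a b ha hb =>
    have := add_mem ha hb
    rw [map_add, add_smul]; convert this using 1; abel

lemma mem_plus_iff {x : S.A} : x ∈ S.plus ↔ S.aug x = 0 :=
  ⟨S.aug_plus, fun h => by simpa [h] using S.sub_aug_mem x⟩

lemma plus_mul {x : S.A} (hx : x ∈ S.plus) (y : S.A) : x * y ∈ S.plus := by
  rw [mem_plus_iff] at *; simp [hx]

lemma mul_plus {x : S.A} (hx : x ∈ S.plus) (y : S.A) : y * x ∈ S.plus := by
  rw [mem_plus_iff] at *; simp [hx]

lemma tau_plus {x : S.A} (hx : x ∈ S.plus) : S.tau x ∈ S.plus := by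
  induction hx using Submodule.iSup_induction' with
  | mem j x hx => exact S.mem_plus (by omega) (S.tau_mem hx)
  | zero => simp
  | add a b _ _ ha hb => rw [map_add]; exact add_mem ha hb

lemma pr_plus {x : S.A} (hx : x ∈ S.plus) (i : ℕ) : S.pr i x ∈ S.plus := by
  induction hx using Submodule.iSup_induction' with
  | mem j x hx =>
    by_cases h : i = j + 1
    · subst h; rw [S.pr_of_mem hx]; exact S.mem_plus (by omega) hx
    · rw [S.pr_of_ne h hx]; exact zero_mem _
  | zero => simp
  | add a b _ _ ha hb => rw [map_add]; exact add_mem ha hb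

lemma grading_one {x : S.A} (hx : x ∈ S.grading 1) : x = 0 := by
  have := S.grade_map (fun i => if i = 1 then ⊥ else ⊤) (by simp) (by
      intro i j x y hx hy
      by_cases h : i + j = 1
      · rw [if_pos h]
        by_cases hi : i = 1
        · rw [if_pos hi] at hx
          simp [(Submodule.mem_bot ℚ).1 hx]
        · rw [if_pos (by omega)] at hy
          simp [(Submodule.mem_bot ℚ).1 hy]
      · simp [h]) (AlgHom.id ℚ S.A)
      (fun i v hv => by
        by_cases hi : i = 1
        · subst hi; rw [S.V_one] at hv; simpa using hv
        · simp [hi]) hx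
  simpa using this

/-- The decomposable elements. -/
def dec : Submodule ℚ S.A := S.plus * S.plus

lemma dec_mul {x : S.A} (hx : x ∈ S.dec) (y : S.A) : x * y ∈ S.dec := by
  refine Submodule.mul_induction_on hx ?_ ?_
  · intro a ha b hb; rw [mul_assoc]; exact Submodule.mul_mem_mul ha (S.plus_mul hb y)
  · intro a b ha hb; rw [add_mul]; exact add_mem ha hb

lemma mul_dec {x : S.A} (hx : x ∈ S.dec) (y : S.A) : y * x ∈ S.dec := by
  refine Submodule.mul_induction_on hx ?_ ?_
  · intro a ha b hb; rw [← mul_assoc]; exact Submodule.mul_mem_mul (S.mul_plus ha y) hb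
  · intro a b ha hb; rw [mul_add]; exact add_mem ha hb

lemma dec_le_plus {x : S.A} (hx : x ∈ S.dec) : x ∈ S.plus := by
  refine Submodule.mul_induction_on hx ?_ ?_
  · intro a ha b hb; exact S.plus_mul ha b
  · intro a b ha hb; exact add_mem ha hb

lemma genSpan_le_plus : S.genSpan ≤ S.plus := iSup_le fun _ _ hv => S.V_plus hv

lemma lengthGE_two_le : S.lengthGE 2 ≤ S.dec := by
  rw [lengthGE, pow_two, Submodule.mul_le]
  intro x hx y _
  exact S.dec_mul (mul_le_mul' S.genSpan_le_plus S.genSpan_le_plus hx) y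

lemma d_mem_dec (hmin : S.Minimal) (x : S.A) : S.d x ∈ S.dec := by
  induction x using S.gen_ind with
  | hV i v hv => exact S.lengthGE_two_le (hmin v (Submodule.mem_iSup_of_mem i hv))
  | h1 => rw [S.d_one]; exact zero_mem _
  | hsmul r x hx => rw [map_smul]; exact Submodule.smul_mem _ _ hx
  | hadd x y hx hy => rw [map_add]; exact add_mem hx hy
  | hmul x y hx hy => rw [S.d_mul]; exact add_mem (S.dec_mul hx y) (S.mul_dec hy _)

lemma pr_dec {x : S.A} (hx : x ∈ S.dec) (i : ℕ) : S.pr i x ∈ S.dec := by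
  refine Submodule.mul_induction_on hx ?_ ?_
  · intro a ha b hb
    induction ha using Submodule.iSup_induction' with
    | mem j a ha =>
      rcases lt_or_ge i (j + 1) with h | h
      · rw [S.pr_mul_lt ha h]; exact zero_mem _
      · obtain ⟨k, rfl⟩ := Nat.exists_eq_add_of_le h
        rw [S.pr_mul ha]
        exact Submodule.mul_mem_mul (S.mem_plus (by omega) ha) (S.pr_plus hb k)
    | zero => simp
    | add a b _ _ ha hb => rw [add_mul, map_add]; exact add_mem ha hb
  · intro a b ha hb; rw [map_add]; exact add_mem ha hb

/-- A linear form on the generators of degree `i` extends to a form on the whole algebra vanishing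
on decomposables, on scalars and on generators of other degrees. -/
lemma exists_indec (i : ℕ) (ℓ : S.V i →ₗ[ℚ] ℚ) : ∃ lam : S.A →ₗ[ℚ] ℚ,
    (∀ v : S.V i, lam v = ℓ v) ∧ (∀ j, j ≠ i → ∀ x ∈ S.grading j, lam x = 0) ∧
    (∀ x ∈ S.dec, lam x = 0) ∧ lam 1 = 0 := by
  classical
  -- the algebra map to the dual numbers `v ↦ ℓ(v) ε`
  let 𝒞 : ℕ → Submodule ℚ (DualNumber ℚ) := fun j =>
    if j = 0 then ⊤ else LinearMap.range (TrivSqZeroExt.inrHom ℚ ℚ)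
  have hmul : ∀ a b (x y : DualNumber ℚ), x ∈ 𝒞 a → y ∈ 𝒞 b → x * y ∈ 𝒞 (a + b) := by
    intro a b x y hx hy
    simp only [𝒞] at *
    rcases Nat.eq_zero_or_pos (a + b) with h | h
    · simp [h]
    · rw [if_neg h.ne']
      by_cases ha : a = 0
      · rw [if_neg (by omega)] at hy
        obtain ⟨r, rfl⟩ := hy
        exact ⟨x.fst * r, by ext <;> simp [mul_comm]⟩
      · rw [if_neg ha] at hx
        obtain ⟨r, rfl⟩ := hx
        exact ⟨r * y.fst, by ext <;> simp [mul_comm]⟩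
  let f : (j : ℕ) → S.V j →ₗ[ℚ] DualNumber ℚ := fun j =>
    if h : j = i then (TrivSqZeroExt.inrHom ℚ ℚ) ∘ₗ ℓ ∘ₗ
      (LinearEquiv.ofEq _ _ (congrArg S.V h)).toLinearMap else 0
  obtain ⟨φ, hφ, -⟩ := S.free (DualNumber ℚ) 𝒞 (by simp [𝒞]) hmul
    (by
      intro a b x y hx hy
      by_cases ha : a = 0
      · simp [ha, mul_comm]
      · by_cases hb : b = 0
        · simp [hb, mul_comm]
        · simp only [𝒞, if_neg ha, if_neg hb] at hx hy
          obtain ⟨r, rfl⟩ := hx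
          obtain ⟨s, rfl⟩ := hy
          simp)
    f (by
      intro j v
      by_cases hj : j = 0
      · simp [𝒞, hj]
      · simp only [𝒞, if_neg hj, f]
        by_cases h : j = i
        · rw [dif_pos h]; exact ⟨_, rfl⟩
        · rw [dif_neg h]; exact zero_mem _)
  have hfst : ∀ x, (φ x).fst = S.aug x := by
    have : (TrivSqZeroExt.fstHom ℚ ℚ ℚ).comp φ = S.aug := by
      refine S.hom_ext _ _ ?_
      intro j v hv
      rw [S.aug_V hv, AlgHom.comp_apply, hφ j ⟨v, hv⟩]
      by_cases h : j = i
      · subst h; simp [f]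
      · simp [f, h]
    exact fun x => DFunLike.congr_fun this x
  let lam : S.A →ₗ[ℚ] ℚ := (TrivSqZeroExt.sndHom ℚ ℚ) ∘ₗ φ.toLinearMap
  have hdec : ∀ x ∈ S.dec, lam x = 0 := by
    intro x hx
    refine Submodule.mul_induction_on hx ?_ ?_
    · intro a ha b hb
      simp [lam, hfst, S.aug_plus ha, S.aug_plus hb]
    · intro a b ha hb; rw [map_add, ha, hb, add_zero]
  refine ⟨lam ∘ₗ S.pr i, ?_, ?_, ?_, ?_⟩
  · intro v
    rw [LinearMap.comp_apply, S.pr_of_mem (S.V_le i v.2)]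
    simp only [lam, LinearMap.comp_apply, AlgHom.toLinearMap_apply, hφ i v]
    simp [f]
  · intro j hj x hx
    rw [LinearMap.comp_apply, S.pr_of_ne (Ne.symm hj) hx, map_zero]
  · intro x hx
    exact hdec _ (S.pr_dec hx i)
  · by_cases hi : i = 0
    · subst hi
      rw [LinearMap.comp_apply, S.pr_of_mem S.one_mem]; simp [lam]
    · rw [LinearMap.comp_apply, S.pr_of_ne hi S.one_mem, map_zero]

/-- A generator which is decomposable vanishes. -/
lemma V_dec {i : ℕ} {v : S.A} (hv : v ∈ S.V i) (hd : v ∈ S.dec) : v = 0 := by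
  have : (⟨v, hv⟩ : S.V i) = 0 := by
    rw [← Module.forall_dual_apply_eq_zero_iff ℚ]
    intro ℓ
    obtain ⟨lam, h1, -, h2, -⟩ := S.exists_indec i ℓ
    rw [← h1]; exact h2 v hd
  simpa using congrArg Subtype.val this

end Sullivan
end RHT

/-! ### Killing a cocycle by adjoining a variable -/

namespace RHT

/-- A graded-commutative differential algebra, with an integral grading which need not be
exhaustive, and with an explicit parity involution `τ`. Unlike for `CDGA`, a free variable can be
adjoined without re-establishing a direct sum decomposition. -/
structure SD : Type 1 where
  C : Type
  [ring : Ring C]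
  [alg : Algebra ℚ C]
  τ : C →ₐ[ℚ] C
  gr : ℤ → Submodule ℚ C
  gr_neg : ∀ {n x}, x ∈ gr n → n < 0 → x = 0
  one_mem : 1 ∈ gr 0
  mul_mem : ∀ {m n x y}, x ∈ gr m → y ∈ gr n → x * y ∈ gr (m + n)
  τ_even : ∀ {n x}, x ∈ gr n → Even n → τ x = x
  τ_odd : ∀ {n x}, x ∈ gr n → Odd n → τ x = -x
  τ_τ : ∀ x, τ (τ x) = x
  comm_even : ∀ {n x}, x ∈ gr n → Even n → ∀ y, x * y = y * x
  comm_odd : ∀ {n x}, x ∈ gr n → Odd n → ∀ y, x * y = τ y * x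
  d : C →ₗ[ℚ] C
  d_gr : ∀ {n x}, x ∈ gr n → d x ∈ gr (n + 1)
  d_mul : ∀ x y, d (x * y) = d x * y + τ x * d y
  d_d : ∀ x, d (d x) = 0
  d_τ : ∀ x, d (τ x) = - τ (d x)

attribute [instance] SD.ring SD.alg

namespace SD

lemma τ_gr (C : SD) {n : ℤ} {x : C.C} (hx : x ∈ C.gr n) : C.τ x ∈ C.gr n := by
  rcases Int.even_or_odd n with h | h
  · rw [C.τ_even hx h]; exact hx
  · rw [C.τ_odd hx h]; exact neg_mem hx

lemma mem_cast (C : SD) {m n : ℤ} (h : m = n) {x : C.C} (hx : x ∈ C.gr m) : x ∈ C.gr n := h ▸ hx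

lemma sq_odd (C : SD) {n : ℤ} {x : C.C} (hx : x ∈ C.gr n) (h : Odd n) : x * x = 0 := by
  have := C.comm_odd hx h x
  rw [C.τ_odd hx h, neg_mul] at this
  have h2 : (2 : ℚ) • (x * x) = 0 := by
    rw [two_smul]; nth_rewrite 1 [this]; simp
  exact (smul_eq_zero.1 h2).resolve_left (by norm_num)

/-- The graded-commutativity sign rule. -/
lemma gcomm (C : SD) {i j : ℕ} {x y : C.C} (hx : x ∈ C.gr i) (hy : y ∈ C.gr j) :
    x * y = ((-1 : ℚ) ^ (i * j)) • (y * x) := by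
  rcases Nat.even_or_odd i with h | h
  · rw [C.comm_even hx (by exact_mod_cast h), (h.mul_right j).neg_one_pow, one_smul]
  · rw [C.comm_odd hx (by exact_mod_cast h), pow_mul, h.neg_one_pow]
    rcases Nat.even_or_odd j with h' | h'
    · rw [C.τ_even hy (by exact_mod_cast h'), h'.neg_one_pow, one_smul]
    · rw [C.τ_odd hy (by exact_mod_cast h'), h'.neg_one_pow, neg_mul, neg_smul, one_smul]

/-- The integral grading of a cochain algebra. -/
def zgr (B : CDGA) (n : ℤ) : Submodule ℚ B.A := if 0 ≤ n then B.grading n.toNat else ⊥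

lemma zgr_nat (B : CDGA) (n : ℕ) : zgr B n = B.grading n := by simp [zgr]

lemma zgr_exists {B : CDGA} {n : ℤ} {x : B.A} (hx : x ∈ zgr B n) :
    x = 0 ∨ ∃ k : ℕ, n = k ∧ x ∈ B.grading k := by
  unfold zgr at hx
  split_ifs at hx with h
  · exact Or.inr ⟨n.toNat, by omega, hx⟩
  · exact Or.inl (by simpa using hx)

/-- A cochain algebra, viewed as an `SD`. -/
def ofCDGA (B : CDGA) : SD where
  C := B.A
  τ := B.tau
  gr := zgr B
  gr_neg := by
    intro n x hx hn
    rcases zgr_exists hx with h | ⟨k, rfl, hk⟩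
    · exact h
    · omega
  one_mem := by simpa [zgr] using B.one_mem
  mul_mem := by
    intro m n x y hx hy
    rcases zgr_exists hx with rfl | ⟨k, rfl, hk⟩
    · rw [zero_mul]; exact zero_mem _
    rcases zgr_exists hy with rfl | ⟨l, rfl, hl⟩
    · rw [mul_zero]; exact zero_mem _
    have := B.mul_mem hk hl
    rw [← zgr_nat] at this
    exact_mod_cast this
  τ_even := by
    intro n x hx hn
    rcases zgr_exists hx with rfl | ⟨k, rfl, hk⟩
    · simp
    · rw [B.tau_of_mem hk, Even.neg_one_pow (by exact_mod_cast hn), one_smul]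
  τ_odd := by
    intro n x hx hn
    rcases zgr_exists hx with rfl | ⟨k, rfl, hk⟩
    · simp
    · rw [B.tau_of_mem hk, Odd.neg_one_pow (by exact_mod_cast hn), neg_smul, one_smul]
  τ_τ := B.tau_tau
  comm_even := by
    intro n x hx hn y
    rcases zgr_exists hx with rfl | ⟨k, rfl, hk⟩
    · simp
    · exact B.comm_even hk (by exact_mod_cast hn) y
  comm_odd := by
    intro n x hx hn y
    rcases zgr_exists hx with rfl | ⟨k, rfl, hk⟩
    · simp
    · exact B.comm_odd hk (by exact_mod_cast hn) y
  d := B.d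
  d_gr := by
    intro n x hx
    rcases zgr_exists hx with rfl | ⟨k, rfl, hk⟩
    · rw [map_zero]; exact zero_mem _
    have := B.d_mem hk
    rw [← zgr_nat] at this
    exact_mod_cast this
  d_mul := B.d_mul
  d_d := B.d_sq
  d_τ := fun x => by rw [B.tau_d, neg_neg]

end SD

/-- `C'` is obtained from `C` by freely adjoining a variable `s` of degree `e` with `d s = c`;
`mon k a` is the element `a s^k` and `coef k` extracts the coefficient of `s^k`. -/
structure Adj (C : SD) (c : C.C) (e : ℤ) (C' : SD) where
  i : C.C →ₐ[ℚ] C'.C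
  coef : ℕ → C'.C →ₗ[ℚ] C.C
  mon : ℕ → C.C →ₗ[ℚ] C'.C
  i_gr : ∀ {n x}, x ∈ C.gr n → i x ∈ C'.gr n
  i_τ : ∀ x, C'.τ (i x) = i (C.τ x)
  i_d : ∀ x, C'.d (i x) = i (C.d x)
  coef_gr : ∀ {n x} (k : ℕ), x ∈ C'.gr n → coef k x ∈ C.gr (n - k * e)
  mon_gr : ∀ {n a} (k : ℕ), a ∈ C.gr n → mon k a ∈ C'.gr (n + k * e)
  mon_zero : ∀ a, mon 0 a = i a
  coef_ext : ∀ x, (∀ k, coef k x = 0) → x = 0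
  coef_fin : ∀ x, ∃ K, ∀ k, K ≤ k → coef k x = 0
  coef_mon : ∀ j k a, (Even e ∨ k ≤ 1) → coef j (mon k a) = if j = k then a else 0
  i_mul_mon : ∀ k a b, mon k (a * b) = i a * mon k b
  coef_i_mul : ∀ k a x, coef k (i a * x) = a * coef k x
  coef_zero_mul : ∀ x y, coef 0 (x * y) = coef 0 x * coef 0 y
  coef_d : ∀ k x, coef k (C'.d x) =
    C.d (coef k x) + ((k : ℚ) + 1) • (C.τ (coef (k + 1) x) * c)
  coef_odd : Odd e → ∀ k x, 2 ≤ k → coef k x = 0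
  s_mul_zero : ∀ x, coef 0 (mon 1 1 * x) = 0
  s_mul_even : Even e → ∀ k x, coef (k + 1) (mon 1 1 * x) = coef k x
  s_mul_odd : Odd e → ∀ x, coef 1 (mon 1 1 * x) = C.τ (coef 0 x)

namespace PolyAdj

open Polynomial

variable (C : SD) (c : C.C)

/-- The differential of `C[s]` with `d s = c`, for `s` of even degree. -/
noncomputable def D : C.C[X] →ₗ[ℚ] C.C[X] :=
  Polynomial.lsum fun k : ℕ =>
    ((monomial k).restrictScalars ℚ) ∘ₗ C.d +
      (k : ℚ) • (((monomial (k - 1)).restrictScalars ℚ) ∘ₗ (LinearMap.mulRight ℚ c) ∘ₗ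
        C.τ.toLinearMap)

lemma D_monomial (k : ℕ) (a : C.C) : D C c (monomial k a) =
    monomial k (C.d a) + (k : ℚ) • monomial (k - 1) (C.τ a * c) := by
  simp [D, Polynomial.lsum_apply, Polynomial.sum_monomial_index]

lemma coeff_D (k : ℕ) (p : C.C[X]) : (D C c p).coeff k =
    C.d (p.coeff k) + ((k : ℚ) + 1) • (C.τ (p.coeff (k + 1)) * c) := by
  induction p using Polynomial.induction_on' with
  | add p q hp hq => simp only [map_add, coeff_add, hp, hq, add_mul, smul_add]; abel
  | monomial n a =>
    rw [D_monomial, coeff_add, coeff_smul, coeff_monomial, coeff_monomial, coeff_monomial,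
      coeff_monomial]
    rcases n with _ | n
    · by_cases h : 0 = k
      · subst h; simp
      · simp [h]
    · by_cases h : n = k
      · subst h; simp
      · by_cases hk : n + 1 = k
        · subst hk; simp
        · simp [hk, h]

/-- Adjoining a polynomial variable of even degree. -/
noncomputable def sd {e : ℤ} (he : Even e) (he0 : 0 ≤ e) (hc : c ∈ C.gr (e + 1))
    (hdc : C.d c = 0) : SD where
  C := C.C[X]
  τ := Polynomial.mapAlgHom C.τ
  gr n := 
    { carrier := {p | ∀ k : ℕ, p.coeff k ∈ C.gr (n - k * e)}
      add_mem' := fun {p q} hp hq k => by rw [coeff_add]; exact add_mem (hp k) (hq k)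
      zero_mem' := fun k => by rw [coeff_zero]; exact zero_mem _
      smul_mem' := fun r p hp k => by rw [coeff_smul]; exact Submodule.smul_mem _ _ (hp k) }
  gr_neg := by
    intro n p hp hn
    ext k
    exact C.gr_neg (hp k) (by nlinarith [(Nat.cast_nonneg k : (0 : ℤ) ≤ k)])
  one_mem := by
    intro k
    rw [coeff_one]
    split_ifs with h
    · subst h; simpa using C.one_mem
    · exact zero_mem _
  mul_mem := by
    intro m n p q hp hq k
    rw [coeff_mul]
    refine sum_mem fun x hx => ?_
    have := C.mul_mem (hp x.1) (hq x.2)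
    refine C.mem_cast ?_ this
    rw [← Finset.HasAntidiagonal.mem_antidiagonal.1 hx]; push_cast; ring
  τ_even := by
    intro n p hp hn
    ext k
    simp only [coe_mapAlgHom, coeff_map]
    exact C.τ_even (hp k) (hn.sub (he.mul_left _))
  τ_odd := by
    intro n p hp hn
    ext k
    simp only [coe_mapAlgHom, coeff_map, coeff_neg]
    exact C.τ_odd (hp k) (hn.sub_even (he.mul_left _))
  τ_τ := by
    intro p
    ext k
    simp [coeff_map, C.τ_τ]
  comm_even := by
    intro n p hp hn q
    ext k
    rw [coeff_mul, coeff_mul, ← Finset.Nat.sum_antidiagonal_swap]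
    refine Finset.sum_congr rfl fun x _ => ?_
    exact C.comm_even (hp x.2) (hn.sub (he.mul_left _)) _
  comm_odd := by
    intro n p hp hn q
    ext k
    rw [coeff_mul, coeff_mul, ← Finset.Nat.sum_antidiagonal_swap]
    refine Finset.sum_congr rfl fun x _ => ?_
    simp only [coe_mapAlgHom, coeff_map]
    exact C.comm_odd (hp x.2) (hn.sub_even (he.mul_left _)) _
  d := D C c
  d_gr := by
    intro n p hp k
    rw [coeff_D]
    refine add_mem (C.mem_cast (by ring) (C.d_gr (hp k))) (Submodule.smul_mem _ _ ?_)
    refine C.mem_cast ?_ (C.mul_mem (C.τ_gr (hp (k + 1))) hc)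
    push_cast; ring
  d_mul := by
    intro p q
    induction p using Polynomial.induction_on' with
    | add p q hp hq => simp only [add_mul, map_add, hp, hq]; abel
    | monomial j a =>
      induction q using Polynomial.induction_on' with
      | add p q hp hq => simp only [mul_add, map_add, hp, hq]; abel
      | monomial k b =>
        have hcb : ∀ x, c * x = C.τ x * c := C.comm_odd hc he.add_one
        simp only [coe_mapAlgHom, map_monomial, monomial_mul_monomial, D_monomial, C.d_mul,
          mul_add, add_mul, smul_mul_assoc, mul_smul_comm, RingHom.coe_coe, map_mul, map_add,
          Nat.cast_add, add_smul, mul_assoc, hcb]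
        rcases j with _ | j <;> rcases k with _ | k <;>
          simp [add_assoc, add_comm, add_left_comm]
  d_d := by
    intro p
    have hcc : c * c = 0 := C.sq_odd hc he.add_one
    induction p using Polynomial.induction_on' with
    | add p q hp hq => simp only [map_add, hp, hq, add_zero]
    | monomial k a =>
      simp only [D_monomial, map_add, map_smul, C.d_d, C.d_mul, C.d_τ, C.τ_τ, map_mul, hdc,
        C.τ_odd hc he.add_one, mul_assoc, neg_mul, hcc, mul_zero, map_zero, mul_neg]
      simp
  d_τ := by
    intro p
    induction p using Polynomial.induction_on' with
    | add p q hp hq => simp only [map_add, hp, hq]; abel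
    | monomial k a =>
      simp only [coe_mapAlgHom, map_monomial, D_monomial, RingHom.coe_coe, C.d_τ, C.τ_τ,
        Polynomial.map_add, map_neg]
      rw [← coe_mapAlgHom, map_smul]
      simp [map_monomial, C.τ_τ, C.τ_odd hc he.add_one, add_comm]

/-- Coefficient extraction, as a `ℚ`-linear map. -/
noncomputable def coefL (k : ℕ) : C.C[X] →ₗ[ℚ] C.C := (lcoeff C.C k).restrictScalars ℚ

/-- `a ↦ a s^k`, as a `ℚ`-linear map. -/
noncomputable def monL (k : ℕ) : C.C →ₗ[ℚ] C.C[X] := (monomial k).restrictScalars ℚ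

/-- The structure maps of the polynomial extension. -/
noncomputable def adj {e : ℤ} (he : Even e) (he0 : 0 ≤ e) (hc : c ∈ C.gr (e + 1))
    (hdc : C.d c = 0) : Adj C c e (sd C c he he0 hc hdc) where
  i := { (Polynomial.C : C.C →+* C.C[X]) with commutes' := fun r => rfl }
  coef := coefL C
  mon := monL C
  i_gr := by
    intro n x hx k
    show (Polynomial.C x).coeff k ∈ _
    rw [coeff_C]
    split_ifs with h
    · subst h; simpa using hx
    · exact zero_mem _
  i_τ := fun x => by
    show (Polynomial.C x).map _ = Polynomial.C _
    simp
  i_d := fun x => by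
    show D C c (Polynomial.C x) = Polynomial.C _
    rw [← monomial_zero_left, D_monomial]; simp
  coef_gr := fun {n x} k hx => hx k
  mon_gr := by
    intro n a k ha j
    show (monomial k a).coeff j ∈ _
    rw [coeff_monomial]
    split_ifs with h
    · subst h; simpa using ha
    · exact zero_mem _
  mon_zero := fun a => rfl
  coef_ext := fun x h => Polynomial.ext h
  coef_fin := fun x => ⟨x.natDegree + 1, fun k hk => coeff_eq_zero_of_natDegree_lt hk⟩
  coef_mon := by
    intro j k a _
    show (monomial k a).coeff j = _
    rw [coeff_monomial]; simp [eq_comm]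
  i_mul_mon := fun k a b => by
    show monomial k (a * b) = Polynomial.C a * monomial k b
    rw [C_mul_monomial]
  coef_i_mul := fun k a (x : C.C[X]) => by
    show (Polynomial.C a * x).coeff k = _
    rw [coeff_C_mul]; rfl
  coef_zero_mul := fun x y => mul_coeff_zero x y
  coef_d := fun k x => coeff_D C c k x
  coef_odd := fun h => absurd he (Int.not_even_iff_odd.2 h)
  s_mul_zero := fun (x : C.C[X]) => by
    show (monomial 1 (1 : C.C) * x).coeff 0 = 0
    rw [mul_coeff_zero]; simp [coeff_monomial]
  s_mul_even := fun _ k (x : C.C[X]) => by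
    show (monomial 1 (1 : C.C) * x).coeff (k + 1) = x.coeff k
    rw [← X, coeff_X_mul]
  s_mul_odd := fun h => absurd he (Int.not_even_iff_odd.2 h)

end PolyAdj

/-- The underlying space `C ⊕ C s` of the exterior extension by a variable `s` of odd degree. -/
def OddExt (C : SD) : Type := C.C × C.C

namespace OddExt

variable (C : SD)

instance : AddCommGroup (OddExt C) := inferInstanceAs (AddCommGroup (C.C × C.C))
instance : Module ℚ (OddExt C) := inferInstanceAs (Module ℚ (C.C × C.C))

variable {C}

/-- The element `a + b s`. -/
def mk (a b : C.C) : OddExt C := (a, b)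
/-- The coefficient of `1`. -/
def re (x : OddExt C) : C.C := x.1
/-- The coefficient of `s`. -/
def im (x : OddExt C) : C.C := x.2

@[ext] lemma ext {x y : OddExt C} (h1 : x.re = y.re) (h2 : x.im = y.im) : x = y := Prod.ext h1 h2

@[simp] lemma mk_re (a b : C.C) : (mk a b).re = a := rfl
@[simp] lemma mk_im (a b : C.C) : (mk a b).im = b := rfl
@[simp] lemma add_re (x y : OddExt C) : (x + y).re = x.re + y.re := rfl
@[simp] lemma add_im (x y : OddExt C) : (x + y).im = x.im + y.im := rfl
@[simp] lemma neg_re (x : OddExt C) : (-x).re = -x.re := rfl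
@[simp] lemma neg_im (x : OddExt C) : (-x).im = -x.im := rfl
@[simp] lemma smul_re (r : ℚ) (x : OddExt C) : (r • x).re = r • x.re := rfl
@[simp] lemma smul_im (r : ℚ) (x : OddExt C) : (r • x).im = r • x.im := rfl
@[simp] lemma zero_re : (0 : OddExt C).re = 0 := rfl
@[simp] lemma zero_im : (0 : OddExt C).im = 0 := rfl

instance : One (OddExt C) := ⟨mk 1 0⟩
instance : Mul (OddExt C) := ⟨fun x y => mk (x.re * y.re) (x.re * y.im + x.im * C.τ y.re)⟩

@[simp] lemma one_re : (1 : OddExt C).re = 1 := rfl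
@[simp] lemma one_im : (1 : OddExt C).im = 0 := rfl
@[simp] lemma mul_re (x y : OddExt C) : (x * y).re = x.re * y.re := rfl
@[simp] lemma mul_im (x y : OddExt C) : (x * y).im = x.re * y.im + x.im * C.τ y.re := rfl

instance : Ring (OddExt C) :=
  { (inferInstance : AddCommGroup (OddExt C)) with
    mul := (· * ·)
    one := 1
    zero_mul := fun x => by ext <;> simp
    mul_zero := fun x => by ext <;> simp
    one_mul := fun x => by ext <;> simp
    mul_one := fun x => by ext <;> simp
    mul_assoc := fun x y z => by ext <;> simp [mul_assoc, mul_add, add_mul, add_assoc]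
    left_distrib := fun x y z => by ext <;> simp [mul_add]; abel
    right_distrib := fun x y z => by ext <;> simp [add_mul]; abel }

instance : Algebra ℚ (OddExt C) :=
  Algebra.ofModule (fun r x y => by ext <;> simp [smul_add]) (fun r x y => by
    ext <;> simp [smul_add])

variable (C)

/-- The parity involution of the exterior extension. -/
def tau : OddExt C →ₐ[ℚ] OddExt C :=
  AlgHom.ofLinearMap
    { toFun := fun x => mk (C.τ x.re) (-C.τ x.im)
      map_add' := fun x y => by ext <;> simp; abel
      map_smul' := fun r x => by ext <;> simp }
    (by ext <;> simp) (fun x y => by ext <;> simp; abel)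

@[simp] lemma tau_re (x : OddExt C) : (tau C x).re = C.τ x.re := rfl
@[simp] lemma tau_im (x : OddExt C) : (tau C x).im = -C.τ x.im := rfl

/-- The differential of the exterior extension with `d s = c`. -/
def D (c : C.C) : OddExt C →ₗ[ℚ] OddExt C where
  toFun := fun x => mk (C.d x.re + C.τ x.im * c) (C.d x.im)
  map_add' := fun x y => by ext <;> simp [add_mul]; abel
  map_smul' := fun r x => by ext <;> simp

@[simp] lemma D_re (c : C.C) (x : OddExt C) : (D C c x).re = C.d x.re + C.τ x.im * c := rfl
@[simp] lemma D_im (c : C.C) (x : OddExt C) : (D C c x).im = C.d x.im := rfl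

/-- Adjoining an exterior variable of odd degree. -/
def sd (c : C.C) {e : ℤ} (he : Odd e) (he0 : 0 ≤ e) (hc : c ∈ C.gr (e + 1))
    (hdc : C.d c = 0) : SD where
  C := OddExt C
  τ := tau C
  gr n :=
    { carrier := {x | x.re ∈ C.gr n ∧ x.im ∈ C.gr (n - e)}
      add_mem' := fun {p q} hp hq => ⟨add_mem hp.1 hq.1, add_mem hp.2 hq.2⟩
      zero_mem' := ⟨zero_mem _, zero_mem _⟩
      smul_mem' := fun r p hp => ⟨Submodule.smul_mem _ r hp.1, Submodule.smul_mem _ r hp.2⟩ }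
  gr_neg := by
    intro n x hx hn
    ext
    · exact C.gr_neg hx.1 hn
    · exact C.gr_neg hx.2 (by omega)
  one_mem := ⟨C.one_mem, zero_mem _⟩
  mul_mem := by
    intro m n x y hx hy
    refine ⟨C.mul_mem hx.1 hy.1, add_mem ?_ ?_⟩
    · exact C.mem_cast (by ring) (C.mul_mem hx.1 hy.2)
    · exact C.mem_cast (by ring) (C.mul_mem hx.2 (C.τ_gr hy.1))
  τ_even := by
    intro n x hx hn
    ext
    · exact C.τ_even hx.1 hn
    · simp [C.τ_odd hx.2 (hn.sub_odd he)]
  τ_odd := by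
    intro n x hx hn
    ext
    · exact C.τ_odd hx.1 hn
    · simp [C.τ_even hx.2 (hn.sub_odd he)]
  τ_τ := fun x => by ext <;> simp [C.τ_τ]
  comm_even := by
    intro n x hx hn y
    ext
    · exact C.comm_even hx.1 hn _
    · simp [C.comm_even hx.1 hn, C.comm_odd hx.2 (hn.sub_odd he), C.τ_τ, C.τ_even hx.1 hn,
        add_comm]
  comm_odd := by
    intro n x hx hn y
    ext
    · exact C.comm_odd hx.1 hn _
    · simp [C.comm_odd hx.1 hn, C.comm_even hx.2 (hn.sub_odd he), C.τ_odd hx.1 hn,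
        add_comm]
  d := D C c
  d_gr := by
    intro n x hx
    refine ⟨add_mem (C.d_gr hx.1) ?_, C.mem_cast (by ring) (C.d_gr hx.2)⟩
    exact C.mem_cast (by ring) (C.mul_mem (C.τ_gr hx.2) hc)
  d_mul := by
    intro x y
    have hcb : ∀ x, c * x = x * c := C.comm_even hc he.add_one
    have hct : C.τ c = c := C.τ_even hc he.add_one
    ext
    · simp [C.d_mul, add_mul, mul_add, mul_assoc, hcb, C.τ_τ]; abel
    · simp [C.d_mul, add_mul, mul_add, mul_assoc, hcb, hct, C.τ_τ, C.d_τ]; abel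
  d_d := by
    intro x
    ext
    · simp [C.d_d, C.d_mul, C.d_τ, hdc]
    · simp [C.d_d]
  d_τ := by
    intro x
    have hct : C.τ c = c := C.τ_even hc he.add_one
    ext
    · simp [C.d_τ, hct, C.τ_τ]; abel
    · simp [C.d_τ]

/-- The `k`-th coefficient, for `k = 0, 1`. -/
def coefL (k : ℕ) : OddExt C →ₗ[ℚ] C.C where
  toFun := fun x => if k = 0 then x.re else if k = 1 then x.im else 0
  map_add' := fun x y => by split_ifs <;> simp
  map_smul' := fun r x => by split_ifs <;> simp

/-- `a ↦ a s^k`. -/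
def monL (k : ℕ) : C.C →ₗ[ℚ] OddExt C where
  toFun := fun a => if k = 0 then mk a 0 else if k = 1 then mk 0 a else 0
  map_add' := fun x y => by split_ifs <;> ext <;> simp
  map_smul' := fun r x => by split_ifs <;> ext <;> simp

/-- The inclusion of the coefficients. -/
def inc : C.C →ₐ[ℚ] OddExt C :=
  AlgHom.ofLinearMap (monL C 0) rfl (fun x y => by ext <;> simp [monL])

lemma s_re (x : OddExt C) : (mk 0 1 * x).re = 0 := by simp

lemma s_im (x : OddExt C) : (mk 0 1 * x).im = C.τ x.re := by simp

/-- The structure maps of the exterior extension. -/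
def adj (c : C.C) {e : ℤ} (he : Odd e) (he0 : 0 ≤ e) (hc : c ∈ C.gr (e + 1))
    (hdc : C.d c = 0) : Adj C c e (sd C c he he0 hc hdc) where
  i := inc C
  coef := coefL C
  mon := monL C
  i_gr := fun {n x} hx => ⟨hx, zero_mem _⟩
  i_τ := fun x => by
    show tau C (mk x 0) = mk (C.τ x) 0
    ext <;> simp
  i_d := fun x => by
    show D C c (mk x 0) = mk (C.d x) 0
    ext <;> simp
  coef_gr := by
    intro n x k hx
    rcases k with _ | _ | k
    · exact C.mem_cast (by simp) hx.1
    · exact C.mem_cast (by simp) hx.2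
    · exact zero_mem _
  mon_gr := by
    intro n x k hx
    rcases k with _ | _ | k
    · exact ⟨C.mem_cast (by simp) hx, zero_mem _⟩
    · exact ⟨zero_mem _, C.mem_cast (by simp) hx⟩
    · exact zero_mem _
  mon_zero := fun a => rfl
  coef_ext := fun x h => ext (h 0) (h 1)
  coef_fin := fun x => ⟨2, fun k hk => by
    show (if k = 0 then x.re else if k = 1 then x.im else 0) = 0
    rw [if_neg (by omega), if_neg (by omega)]⟩
  coef_mon := by
    intro j k a hk
    have hk : k ≤ 1 := hk.resolve_left (Int.not_even_iff_odd.2 he)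
    show (if j = 0 then re (if k = 0 then mk a 0 else if k = 1 then mk 0 a else 0) else
      if j = 1 then im (if k = 0 then mk a 0 else if k = 1 then mk 0 a else 0) else 0) = _
    interval_cases k
    · rcases j with _ | _ | j <;> simp
    · rcases j with _ | _ | j <;> simp
  i_mul_mon := by
    intro k a b
    show (if k = 0 then mk (a * b) 0 else if k = 1 then mk 0 (a * b) else 0) =
      mk a 0 * (if k = 0 then mk b 0 else if k = 1 then mk 0 b else 0)
    rcases k with _ | _ | k <;> ext <;> simp
  coef_i_mul := by
    intro k a (x : OddExt C)
    show (if k = 0 then re (mk a 0 * x) else if k = 1 then im (mk a 0 * x) else 0) =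
      a * (if k = 0 then x.re else if k = 1 then x.im else 0)
    rcases k with _ | _ | k <;> simp
  coef_zero_mul := fun x y => rfl
  coef_d := by
    intro k (x : OddExt C)
    show (if k = 0 then re (D C c x) else if k = 1 then im (D C c x) else 0) =
      C.d (if k = 0 then x.re else if k = 1 then x.im else 0) +
        ((k : ℚ) + 1) • (C.τ (if k + 1 = 0 then x.re else if k + 1 = 1 then x.im else 0) * c)
    rcases k with _ | _ | k <;> simp
  coef_odd := fun _ k x hk => by
    show (if k = 0 then x.re else if k = 1 then x.im else 0) = 0
    rw [if_neg (by omega), if_neg (by omega)]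
  s_mul_zero := fun (x : OddExt C) => s_re C x
  s_mul_even := fun h => absurd h (Int.not_even_iff_odd.2 he)
  s_mul_odd := fun _ (x : OddExt C) => s_im C x

end OddExt

/-- Any cocycle of positive degree can be killed. -/
lemma exists_adj (C : SD) (c : C.C) {e : ℤ} (he0 : 0 ≤ e) (hc : c ∈ C.gr (e + 1))
    (hdc : C.d c = 0) : ∃ C' : SD, Nonempty (Adj C c e C') := by
  rcases Int.even_or_odd e with h | h
  · exact ⟨_, ⟨PolyAdj.adj C c h he0 hc hdc⟩⟩
  · exact ⟨_, ⟨OddExt.adj C c h he0 hc hdc⟩⟩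

end RHT

/-! ### Division by a generator -/

namespace RHT

namespace Sullivan

variable (S : Sullivan)

/-- The elements of degree at least `N`. -/
def ge (N : ℕ) : Submodule ℚ S.A := ⨆ j, S.grading (j + N)

lemma mem_ge {i N : ℕ} (h : N ≤ i) {x : S.A} (hx : x ∈ S.grading i) : x ∈ S.ge N := by
  obtain ⟨j, rfl⟩ : ∃ j, i = j + N := ⟨i - N, by omega⟩
  exact Submodule.mem_iSup_of_mem j hx

variable {S} in
@[elab_as_elim]
lemma ge_induct {N : ℕ} {p : (x : S.A) → x ∈ S.ge N → Prop}
    (h : ∀ i (hi : N ≤ i) x (hx : x ∈ S.grading i), p x (S.mem_ge hi hx)) (h0 : p 0 (zero_mem _))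
    (hadd : ∀ x y hx hy, p x hx → p y hy → p (x + y) (add_mem hx hy)) {x : S.A}
    (hx : x ∈ S.ge N) : p x hx := by
  induction hx using Submodule.iSup_induction' with
  | mem j x hx => exact h _ (by omega) x hx
  | zero => exact h0
  | add x y _ _ hx hy => exact hadd x y _ _ hx hy

lemma ge_mul {N : ℕ} {x : S.A} (hx : x ∈ S.ge N) (y : S.A) : x * y ∈ S.ge N := by
  induction hx using ge_induct with
  | h i hi x hx =>
    induction y using S.hom_ind with
    | h j y hy => exact S.mem_ge (by omega) (S.mul_mem hx hy)
    | h0 => rw [mul_zero]; exact zero_mem _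
    | hadd y z hy hz => rw [mul_add]; exact add_mem hy hz
  | h0 => rw [zero_mul]; exact zero_mem _
  | hadd x z _ _ hx hz => rw [add_mul]; exact add_mem hx hz

lemma ge_mul_ge (N M : ℕ) : S.ge N * S.ge M ≤ S.ge (N + M) := by
  rw [Submodule.mul_le]
  intro x hx y hy
  induction hx using ge_induct with
  | h i hi x hx =>
    induction hy using ge_induct with
    | h j hj y hy => exact S.mem_ge (by omega) (S.mul_mem hx hy)
    | h0 => rw [mul_zero]; exact zero_mem _
    | hadd y z _ _ hy hz => rw [mul_add]; exact add_mem hy hz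
  | h0 => rw [zero_mul]; exact zero_mem _
  | hadd x z _ _ hx hz => rw [add_mul]; exact add_mem hx hz

lemma plus_eq_ge : S.plus = S.ge 1 := rfl

lemma tau_ge {N : ℕ} {x : S.A} (hx : x ∈ S.ge N) : S.tau x ∈ S.ge N := by
  induction hx using ge_induct with
  | h i hi x hx => exact S.mem_ge hi (S.tau_mem hx)
  | h0 => rw [map_zero]; exact zero_mem _
  | hadd x z _ _ hx hz => rw [map_add]; exact add_mem hx hz

lemma tau_dec {x : S.A} (hx : x ∈ S.dec) : S.tau x ∈ S.dec := by
  refine Submodule.mul_induction_on hx ?_ ?_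
  · intro a ha b hb; rw [map_mul]; exact Submodule.mul_mem_mul (S.tau_plus ha) (S.tau_plus hb)
  · intro a b ha hb; rw [map_add]; exact add_mem ha hb

/-- An algebra map killing the generators of degree `< i` kills all elements of positive degree
`< i`. -/
lemma map_low {C : Type*} [Ring C] [Algebra ℚ C] (φ : S.A →ₐ[ℚ] C) {i : ℕ}
    (h : ∀ j < i, ∀ v ∈ S.V j, φ v = 0) {j : ℕ} (hj : 0 < j) (hji : j < i) {x : S.A}
    (hx : x ∈ S.grading j) : φ x = 0 := by
  have := S.grade_map (fun j => if 0 < j ∧ j < i then ⊥ else ⊤) (by simp) (by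
      intro a b x y hx hy
      by_cases h : 0 < a + b ∧ a + b < i
      · rcases Nat.eq_zero_or_pos a with rfl | ha
        · have hb : 0 < b ∧ b < i := by omega
          simp only [hb, and_self, if_true, Submodule.mem_bot] at hy
          subst hy; rw [mul_zero]; exact zero_mem _
        · have hb : 0 < a ∧ a < i := by omega
          simp only [hb, and_self, if_true, Submodule.mem_bot] at hx
          subst hx; rw [zero_mul]; exact zero_mem _
      · simp only [h, if_false, Submodule.mem_top]) φ (by
      intro j v hv
      by_cases h' : 0 < j ∧ j < i
      · rw [h j h'.2 v hv]; exact zero_mem _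
      · simp only [h', if_false, Submodule.mem_top]) hx
  simpa [hj, hji] using this

/-- An algebra map killing the generators of degree `< i` kills the decomposables of degree
`i + 1`. -/
lemma map_dec {C : Type*} [Ring C] [Algebra ℚ C] (φ : S.A →ₐ[ℚ] C) {i : ℕ}
    (h : ∀ j < i, ∀ v ∈ S.V j, φ v = 0) {x : S.A} (hx : x ∈ S.dec)
    (hxi : x ∈ S.grading (i + 1)) : φ x = 0 := by
  rw [← S.pr_of_mem hxi]
  clear hxi
  refine Submodule.mul_induction_on hx ?_ ?_
  · intro a ha b hb
    induction ha using ge_induct with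
    | h j hj a ha =>
      induction hb using ge_induct with
      | h l hl b hb =>
        by_cases hjl : j + l = i + 1
        · rw [S.pr_of_mem (hjl ▸ S.mul_mem ha hb), map_mul]
          by_cases hj1 : j = 1
          · subst hj1; rw [S.grading_one ha]; simp
          · rw [S.map_low φ h (j := l) hl (by omega) hb, mul_zero]
        · rw [S.pr_of_ne (Ne.symm hjl) (S.mul_mem ha hb), map_zero]
      | h0 => simp
      | hadd x y _ _ hx hy => rw [mul_add, map_add, map_add, hx, hy, add_zero]
    | h0 => simp
    | hadd x y _ _ hx hy => rw [add_mul, map_add, map_add, hx, hy, add_zero]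
  · intro x y hx hy; rw [map_add, map_add, hx, hy, add_zero]

/-- The algebra `S[s]` with a free variable `s` of degree `i`, with its coefficient maps. -/
lemma exists_var (S : Sullivan) (i : ℕ) : ∃ (C' : SD) (s : C'.C) (inc : S.A →ₐ[ℚ] C'.C)
    (co : ℕ → C'.C →ₗ[ℚ] S.A),
    (∀ n, ∀ x ∈ S.grading n, inc x ∈ C'.gr n) ∧ s ∈ C'.gr i ∧
    (∀ a, co 0 (inc a) = a) ∧ co 0 s = 0 ∧ (∀ x y, co 0 (x * y) = co 0 x * co 0 y) ∧
    (∀ k a x, co k (inc a * x) = a * co k x) ∧ (∀ x, ∃ K, ∀ k, K ≤ k → co k x = 0) ∧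
    (Even i → ∀ k x, co (k + 1) (s * x) = co k x) ∧
    (Odd i → ∀ x, co 1 (s * x) = S.tau (co 0 x)) := by
  obtain ⟨C', ⟨E⟩⟩ := exists_adj (SD.ofCDGA S.toCDGA) 0 (e := (i : ℤ)) (by positivity)
    (zero_mem _) (map_zero _)
  refine ⟨C', E.mon 1 1, E.i, E.coef, fun n x hx => E.i_gr ?_, ?_, fun a => ?_, ?_,
    E.coef_zero_mul, E.coef_i_mul, E.coef_fin, fun h => E.s_mul_even (by exact_mod_cast h),
    fun h => E.s_mul_odd (by exact_mod_cast h)⟩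
  · show _ ∈ SD.zgr _ _
    rw [SD.zgr_nat]; exact hx
  · exact C'.mem_cast (by simp) (E.mon_gr 1 (SD.ofCDGA S.toCDGA).one_mem)
  · exact (congrArg (E.coef 0) (E.mon_zero a)).symm.trans
      ((E.coef_mon _ _ _ (Or.inr (by norm_num))).trans (if_pos rfl))
  · exact (E.coef_mon _ _ _ (Or.inr le_rfl)).trans (if_neg (by norm_num))

section division

variable {S} {i : ℕ} {v : S.A} (hv : v ∈ S.V i) (hv0 : v ≠ 0)
include hv hv0

lemma exists_lam : ∃ lam : S.A →ₗ[ℚ] ℚ, lam v = 1 ∧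
    ∀ j, j ≠ i → ∀ x ∈ S.grading j, lam x = 0 := by
  obtain ⟨ℓ, hℓ⟩ : ∃ ℓ : S.V i →ₗ[ℚ] ℚ, ℓ ⟨v, hv⟩ ≠ 0 := by
    by_contra! h
    exact hv0 (congrArg Subtype.val ((Module.forall_dual_apply_eq_zero_iff ℚ (⟨v, hv⟩ : S.V i)).1 h))
  obtain ⟨lam, h1, h2, -, -⟩ := S.exists_indec i ℓ
  refine ⟨(ℓ ⟨v, hv⟩)⁻¹ • lam, ?_, fun j hj x hx => by simp [h2 j hj x hx]⟩
  have := h1 ⟨v, hv⟩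
  simp only [LinearMap.smul_apply, smul_eq_mul]
  rw [this]; exact inv_mul_cancel₀ hℓ

/-- There is a retraction of `S` which kills the generator `v` and fixes a complement. -/
lemma exists_kill : ∃ (κ : S.A →ₐ[ℚ] S.A) (lam : S.A →ₗ[ℚ] ℚ), lam v = 1 ∧
    (∀ j, j ≠ i → ∀ x ∈ S.grading j, lam x = 0) ∧
    (∀ j, ∀ w ∈ S.V j, κ w = w - lam w • v) ∧
    (∀ j, ∀ x ∈ S.grading j, κ x ∈ S.grading j) ∧ κ v = 0 ∧
    (∀ x, ∃ h, x - κ x = v * h) := by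
  obtain ⟨lam, h1, h2⟩ := exists_lam hv hv0
  obtain ⟨κ, hκ, -⟩ := S.free S.A S.grading S.one_mem (fun _ _ _ _ => S.mul_mem)
    (fun _ _ _ _ => S.gcomm)
    (fun j => (LinearMap.id - lam.smulRight v) ∘ₗ (S.V j).subtype) (by
      intro j w
      simp only [LinearMap.comp_apply, LinearMap.sub_apply, LinearMap.smulRight_apply,
        Submodule.subtype_apply, LinearMap.id_apply]
      refine sub_mem (S.V_le j w.2) ?_
      by_cases hj : j = i
      · subst hj; exact Submodule.smul_mem _ _ (S.V_le _ hv)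
      · rw [h2 j hj _ (S.V_le j w.2), zero_smul]; exact zero_mem _)
  have hV : ∀ j, ∀ w ∈ S.V j, κ w = w - lam w • v := fun j w hw => hκ j ⟨w, hw⟩
  refine ⟨κ, lam, h1, h2, hV, fun j x hx => ?_, by rw [hV i v hv, h1]; simp, fun x => ?_⟩
  · refine S.grade_map S.grading S.one_mem (fun _ _ _ _ => S.mul_mem) κ ?_ hx
    intro j w hw
    rw [hV j w hw]
    refine sub_mem (S.V_le j hw) ?_
    by_cases hj : j = i
    · subst hj; exact Submodule.smul_mem _ _ (S.V_le _ hv)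
    · rw [h2 j hj _ (S.V_le j hw), zero_smul]; exact zero_mem _
  · induction x using S.gen_ind with
    | hV j w hw =>
      rw [hV j w hw]; exact ⟨lam w • 1, by rw [mul_smul_comm, mul_one]; abel⟩
    | h1 => exact ⟨0, by simp⟩
    | hsmul r x hx =>
      obtain ⟨h, hh⟩ := hx
      exact ⟨r • h, by rw [map_smul, ← smul_sub, hh, mul_smul_comm]⟩
    | hadd x y hx hy =>
      obtain ⟨h, hh⟩ := hx
      obtain ⟨k, hk⟩ := hy
      exact ⟨h + k, by rw [map_add, mul_add, ← hh, ← hk]; abel⟩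
    | hmul x y hx hy =>
      obtain ⟨h, hh⟩ := hx
      obtain ⟨k, hk⟩ := hy
      obtain ⟨z, hz⟩ := S.exists_comm' (S.V_le i hv) (κ x)
      refine ⟨h * y + z * k, ?_⟩
      rw [mul_add, ← mul_assoc, ← mul_assoc, ← hh, ← hz, mul_assoc, ← hk, map_mul]
      noncomm_ring

/-- An even generator is a non-zero-divisor, and the annihilator of an odd generator is the ideal
it generates. -/
lemma annihilator {f : S.A} (hf : v * f = 0) :
    (Even i → f = 0) ∧ (Odd i → ∃ h, f = v * h) := by
  obtain ⟨lam, h1, h2⟩ := exists_lam hv hv0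
  obtain ⟨C', s, inc, co, inc_gr, s_gr, hi0, hs0, co_mul, co_inc, co_fin, hev, hodd⟩ :=
    exists_var S i
  obtain ⟨φ, hφ, -⟩ := S.free C'.C (fun n => C'.gr n) C'.one_mem
    (fun a b _ _ hx hy => C'.mem_cast (by push_cast; rfl) (C'.mul_mem hx hy))
    (fun _ _ _ _ hx hy => C'.gcomm hx hy)
    (fun j => (inc.toLinearMap + lam.smulRight s) ∘ₗ (S.V j).subtype) (by
      intro j w
      simp only [LinearMap.comp_apply, LinearMap.add_apply, LinearMap.smulRight_apply,
        Submodule.subtype_apply, AlgHom.toLinearMap_apply]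
      refine add_mem (inc_gr j _ (S.V_le j w.2)) ?_
      · by_cases hj : j = i
        · subst hj
          exact Submodule.smul_mem _ _ s_gr
        · rw [h2 j hj _ (S.V_le j w.2), zero_smul]; exact zero_mem _)
  have hV : ∀ j, ∀ w ∈ S.V j, φ w = inc w + lam w • s := fun j w hw => hφ j ⟨w, hw⟩
  have hφv : φ v = inc v + s := by rw [hV i v hv, h1, one_smul]
  have hid : ∀ x : S.A, co 0 (φ x) = x := by
    intro x
    induction x using S.gen_ind with
    | hV j w hw =>
      rw [hV j w hw, map_add, map_smul, hi0, hs0, smul_zero, add_zero]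
    | h1 => rw [map_one, ← map_one inc]; exact hi0 1
    | hsmul r x hx => rw [map_smul, map_smul, hx]
    | hadd x y hx hy => rw [map_add, map_add, hx, hy]
    | hmul x y hx hy => rw [map_mul, co_mul, hx, hy]
  have h0 : (inc v + s) * φ f = 0 := by rw [← hφv, ← map_mul, hf, map_zero]
  constructor
  · intro he
    have hrec : ∀ k, co k (φ f) = - (v * co (k + 1) (φ f)) := by
      intro k
      have := congrArg (co (k + 1)) h0
      rw [add_mul, map_add, co_inc, hev he, map_zero] at this
      exact eq_neg_of_add_eq_zero_right this
    obtain ⟨K, hK⟩ := co_fin (φ f)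
    have hz : ∀ j k, K ≤ k + j → co k (φ f) = 0 := by
      intro j
      induction j with
      | zero => exact fun k hk => hK k hk
      | succ j ih =>
        intro k hk
        rw [hrec k, ih (k + 1) (by omega), mul_zero, neg_zero]
    rw [← hid f]
    exact hz K 0 (by omega)
  · intro ho
    have := congrArg (co 1) h0
    rw [add_mul, map_add, co_inc, hodd ho, map_zero, hid] at this
    have h3 : S.tau f = - (v * co 1 (φ f)) := eq_neg_of_add_eq_zero_right this
    have h4 := congrArg S.tau h3
    rw [S.tau_tau, map_neg, map_mul, S.tau_of_mem (S.V_le i hv), ho.neg_one_pow] at h4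
    exact ⟨S.tau (co 1 (φ f)), h4.trans (by simp)⟩

lemma plus_of_mul_dec {g : S.A} (h : v * g ∈ S.dec) : g ∈ S.plus := by
  rw [mem_plus_iff]
  by_contra h0
  have h1 : v * (g - S.aug g • (1 : S.A)) ∈ S.dec :=
    Submodule.mul_mem_mul (S.V_plus hv) (S.sub_aug_mem g)
  have h2 : S.aug g • v ∈ S.dec := by
    have := sub_mem h h1
    rwa [← mul_sub, sub_sub_cancel, mul_smul_comm, mul_one] at this
  have h3 := Submodule.smul_mem _ (S.aug g)⁻¹ h2
  rw [smul_smul, inv_mul_cancel₀ h0, one_smul] at h3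
  exact hv0 (S.V_dec hv h3)

end division

end Sullivan

end RHT

/-! ### Killing the generators of low degree -/

namespace RHT

namespace SD

lemma τ_pm (C : SD) {n : ℤ} {x : C.C} (hx : x ∈ C.gr n) : C.τ x = x ∨ C.τ x = -x := by
  rcases Int.even_or_odd n with h | h
  · exact Or.inl (C.τ_even hx h)
  · exact Or.inr (C.τ_odd hx h)

end SD

namespace Adj

variable {C C' : SD} {c : C.C} {e : ℤ} (E : Adj C c e C')
include E

lemma coef_mon_self {k : ℕ} (a : C.C) (h : Even e ∨ k ≤ 1) : E.coef k (E.mon k a) = a := by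
  rw [E.coef_mon _ _ _ h, if_pos rfl]

lemma coef_mon_ne {j k : ℕ} (a : C.C) (h : Even e ∨ k ≤ 1) (hjk : j ≠ k) :
    E.coef j (E.mon k a) = 0 := by
  rw [E.coef_mon _ _ _ h, if_neg hjk]

lemma coef_zero_i (a : C.C) : E.coef 0 (E.i a) = a := by
  rw [← E.mon_zero, E.coef_mon_self _ (Or.inr (by norm_num))]

/-- The coefficient of `s^0`, as an algebra map. -/
noncomputable def coefHom : C'.C →ₐ[ℚ] C.C :=
  AlgHom.ofLinearMap (E.coef 0) (by rw [← map_one E.i]; exact E.coef_zero_i 1) E.coef_zero_mul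

lemma coef_vanish {k : ℕ} (h : ¬ (Even e ∨ k ≤ 1)) (x : C'.C) : E.coef k x = 0 := by
  push Not at h
  exact E.coef_odd (Int.not_even_iff_odd.1 h.1) k x (by omega)

/-- An element is the sum of its monomials. -/
lemma mem_of_coef {W : Submodule ℚ C.C} {W' : Submodule ℚ C'.C}
    (hW : ∀ k, ∀ x ∈ W, E.mon k x ∈ W') {y : C'.C} (hy : ∀ k, E.coef k y ∈ W) : y ∈ W' := by
  obtain ⟨K, hK⟩ := E.coef_fin y
  induction K generalizing y with
  | zero => rw [E.coef_ext y (fun k => hK k (by omega))]; exact zero_mem _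
  | succ K ih =>
    by_cases hp : Even e ∨ K ≤ 1
    · have h1 := ih (y := y - E.mon K (E.coef K y)) (fun k => by
          rw [map_sub]
          by_cases hk : k = K
          · subst hk; rw [E.coef_mon_self _ hp, sub_self]; exact zero_mem _
          · rw [E.coef_mon_ne _ hp hk, sub_zero]; exact hy k) (fun k hk => by
          rw [map_sub]
          by_cases hk' : k = K
          · subst hk'; rw [E.coef_mon_self _ hp, sub_self]
          · rw [E.coef_mon_ne _ hp hk', sub_zero]; exact hK k (by omega))
      simpa using add_mem h1 (hW K _ (hy K))
    · refine ih hy fun k hk => ?_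
      by_cases hk' : k = K
      · rw [hk', E.coef_vanish hp]
      · exact hK k (by omega)

/-- If cocycles in `Y` are coboundaries of elements of `W`, compatibly with the differential of
the new variable, then the same holds after adjoining the variable: the primitive is built from
the top coefficient downwards. -/
lemma descent {Y W : ℤ → Submodule ℚ C.C} {W' : Submodule ℚ C'.C} (m : ℤ)
    (hYW : ∀ n, ∀ y ∈ Y n, C.d y = 0 → ∃ w ∈ W n, C.d w = y)
    (hWY : ∀ n, ∀ w ∈ W n, C.τ w * c ∈ Y (n + e))
    (hW : ∀ k : ℕ, (Even e ∨ k ≤ 1) → ∀ x ∈ W (m - k * e), E.mon k x ∈ W') {y : C'.C}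
    (hy : ∀ k : ℕ, E.coef k y ∈ Y (m - k * e)) (hdy : C'.d y = 0) : ∃ w ∈ W', C'.d w = y := by
  obtain ⟨K, hK⟩ := E.coef_fin y
  induction K generalizing y with
  | zero =>
    exact ⟨0, zero_mem _, by rw [map_zero, E.coef_ext y (fun k => hK k (by omega))]⟩
  | succ K ih =>
    by_cases hp : Even e ∨ K ≤ 1
    · have hd : C.d (E.coef K y) = 0 := by
        have := congrArg (E.coef K) hdy
        rwa [E.coef_d, hK (K + 1) le_rfl, map_zero, map_zero, zero_mul, smul_zero,
          add_zero] at this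
      obtain ⟨w, hw, hwy⟩ := hYW _ _ (hy K) hd
      have hco : ∀ k, E.coef k (C'.d (E.mon K w)) =
          if k = K then E.coef K y else if k + 1 = K then (K : ℚ) • (C.τ w * c) else 0 := by
        intro k
        rw [E.coef_d]
        split_ifs with h1 h2
        · subst h1
          rw [E.coef_mon_self _ hp, E.coef_mon_ne _ hp (by omega), hwy]; simp
        · subst h2
          rw [E.coef_mon_self _ hp, E.coef_mon_ne _ hp (by omega)]; simp
        · rw [E.coef_mon_ne _ hp h1, E.coef_mon_ne _ hp h2]; simp
      obtain ⟨w', hw', hwy'⟩ := ih (y := y - C'.d (E.mon K w)) (fun k => by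
          rw [map_sub, hco]
          refine sub_mem (hy k) ?_
          split_ifs with h1 h2
          · subst h1; exact hy k
          · subst h2
            refine Submodule.smul_mem _ _ ?_
            have := hWY _ w hw
            convert this using 2
            push_cast; ring
          · exact zero_mem _) (by rw [map_sub, hdy, C'.d_d, sub_zero]) (fun k hk => by
          rw [map_sub, hco]
          split_ifs with h1 h2
          · subst h1; exact sub_self _
          · omega
          · rw [hK k (by omega), sub_zero])
      exact ⟨w' + E.mon K w, add_mem hw' (hW K hp w hw), by rw [map_add, hwy', sub_add_cancel]⟩
    · refine ih hy hdy fun k hk => ?_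
      by_cases hk' : k = K
      · rw [hk', E.coef_vanish hp]
      · exact hK k (by omega)

end Adj

/-- The right ideal generated by the image of `K`. -/
def idl {A C : Type*} [Ring A] [Algebra ℚ A] [Ring C] [Algebra ℚ C] (ι : A →ₐ[ℚ] C)
    (K : Submodule ℚ A) : Submodule ℚ C := K.map ι.toLinearMap * ⊤

section idl

variable {A C : Type*} [Ring A] [Algebra ℚ A] [Ring C] [Algebra ℚ C] (ι : A →ₐ[ℚ] C)

lemma idl_mem {K : Submodule ℚ A} {x : A} (hx : x ∈ K) (y : C) : ι x * y ∈ idl ι K :=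
  Submodule.mul_mem_mul (Submodule.mem_map_of_mem hx) trivial

lemma idl_mem' {K : Submodule ℚ A} {x : A} (hx : x ∈ K) : ι x ∈ idl ι K := by
  simpa using idl_mem ι hx 1

lemma idl_mono {K L : Submodule ℚ A} (h : K ≤ L) : idl ι K ≤ idl ι L :=
  mul_le_mul' (Submodule.map_mono h) le_rfl

variable {ι} in
@[elab_as_elim]
lemma idl_induct {K : Submodule ℚ A} {p : (y : C) → y ∈ idl ι K → Prop}
    (h : ∀ x (hx : x ∈ K) y, p (ι x * y) (idl_mem ι hx y))
    (hadd : ∀ x y hx hy, p x hx → p y hy → p (x + y) (add_mem hx hy)) {y : C}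
    (hy : y ∈ idl ι K) : p y hy := by
  refine Submodule.mul_induction_on' (M := K.map ι.toLinearMap) (N := ⊤) ?_ ?_ hy
  · rintro _ ⟨x, hx, rfl⟩ y -
    exact h x hx y
  · intro x hx y hy; exact hadd x y hx hy

lemma idl_mul {K : Submodule ℚ A} {x : C} (hx : x ∈ idl ι K) (y : C) : x * y ∈ idl ι K := by
  induction hx using idl_induct with
  | h x hx z => rw [mul_assoc]; exact idl_mem ι hx _
  | hadd x z _ _ hx hz => rw [add_mul]; exact add_mem hx hz

end idl

/-- An algebra `X` obtained from `F` by adjoining variables which kill some of the generators of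
`F`. The corresponding quotient of `F` is embedded in `F` as the image of the idempotent `π`, and
`p` is the projection of `X` onto it. Two kinds of cocycles of `X` are required to be coboundaries:
those in the kernel of `p` and in the ideal generated by the decomposables of `F` (`acyclic`), and
those in the ideal generated by the elements of `F` of degree `> N` (`high`). By `gπ`, the map `g` factors through the quotient. -/
structure Stage (F : Sullivan) (N : ℕ) {G : Type} [Ring G] [Algebra ℚ G] (g : F.A →ₐ[ℚ] G) where
  X : SD
  ι : F.A →ₐ[ℚ] X.C
  π : F.A →ₐ[ℚ] F.A
  p : X.C →ₐ[ℚ] F.A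
  ι_gr : ∀ n, ∀ x ∈ F.grading n, ι x ∈ X.gr n
  ι_d : ∀ x, X.d (ι x) = ι (F.d x)
  π_gr : ∀ n, ∀ x ∈ F.grading n, π x ∈ F.grading n
  π_V : ∀ n, ∀ v ∈ F.V n, π v ∈ F.V n
  pι : ∀ x, p (ι x) = π x
  πp : ∀ x, π (p x) = p x
  p_gr : ∀ n, ∀ x ∈ X.gr n, p x ∈ SD.zgr F.toCDGA n
  p_d : ∀ x, p (X.d x) = π (F.d (p x))
  gπ : ∀ x, g (π x) = g x
  d_mem : ∀ x, X.d x ∈ idl ι F.plus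
  acyclic : ∀ n, ∀ y ∈ X.gr n, y ∈ idl ι F.dec → p y = 0 → X.d y = 0 →
    ∃ w ∈ X.gr (n - 1), w ∈ idl ι F.plus ∧ p w = 0 ∧ X.d w = y
  high : ∀ y ∈ idl ι (F.ge (N + 1)), X.d y = 0 → ∃ w ∈ idl ι (F.ge N), X.d w = y

namespace Stage

variable {F : Sullivan} {N : ℕ} {G : Type} [Ring G] [Algebra ℚ G] {g : F.A →ₐ[ℚ] G}
  (S : Stage F N g)

lemma ππ (x : F.A) : S.π (S.π x) = S.π x := by
  have := S.πp (S.ι x)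
  rwa [S.pι] at this

lemma ι_τ (x : F.A) : S.X.τ (S.ι x) = S.ι (F.tau x) := by
  induction x using F.hom_ind with
  | h i x hx =>
    rw [F.tau_of_mem hx, map_smul]
    rcases Nat.even_or_odd i with h | h
    · rw [S.X.τ_even (S.ι_gr _ x hx) (by exact_mod_cast h), h.neg_one_pow, one_smul]
    · rw [S.X.τ_odd (S.ι_gr _ x hx) (by exact_mod_cast h), h.neg_one_pow, neg_smul, one_smul]
  | h0 => simp
  | hadd x y hx hy => simp only [map_add, hx, hy]

lemma τ_idl {K : Submodule ℚ F.A} (hK : ∀ x ∈ K, F.tau x ∈ K) {y : S.X.C}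
    (hy : y ∈ idl S.ι K) : S.X.τ y ∈ idl S.ι K := by
  induction hy using idl_induct with
  | h x hx y => rw [map_mul, S.ι_τ]; exact idl_mem _ (hK x hx) _
  | hadd x y _ _ hx hy => rw [map_add]; exact add_mem hx hy

lemma mul_ι (y : S.X.C) (x : F.A) (M : ℕ) (hx : x ∈ F.ge M) : y * S.ι x ∈ idl S.ι (F.ge M) := by
  induction hx using Sullivan.ge_induct with
  | h i hi x hx =>
    rcases Nat.even_or_odd i with h | h
    · rw [← S.X.comm_even (S.ι_gr _ x hx) (by exact_mod_cast h)]
      exact idl_mem _ (F.mem_ge hi hx) _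
    · rw [← S.X.τ_τ y, ← S.X.comm_odd (S.ι_gr _ x hx) (by exact_mod_cast h)]
      exact idl_mem _ (F.mem_ge hi hx) _
  | h0 => simp
  | hadd x z _ _ hx hz => rw [map_add, mul_add]; exact add_mem hx hz

lemma idl_mul_idl {M : ℕ} {K L : Submodule ℚ F.A} (hKL : K * F.ge M ≤ L) {x y : S.X.C}
    (hx : x ∈ idl S.ι K) (hy : y ∈ idl S.ι (F.ge M)) : x * y ∈ idl S.ι L := by
  induction hx using idl_induct with
  | h a ha x =>
    induction hy using idl_induct with
    | h b hb y =>
      rw [mul_assoc, ← mul_assoc x]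
      have h1 := S.mul_ι x b M hb
      generalize x * S.ι b = z at h1
      induction h1 using idl_induct with
      | h b' hb' z =>
        rw [mul_assoc, ← mul_assoc, ← map_mul]
        exact idl_mem _ (hKL (Submodule.mul_mem_mul ha hb')) _
      | hadd z z' _ _ hz hz' => rw [add_mul, mul_add]; exact add_mem hz hz'
    | hadd y z _ _ hy hz => rw [mul_add]; exact add_mem hy hz
  | hadd x z _ _ hx hz => rw [add_mul]; exact add_mem hx hz

lemma d_idl (hmin : F.Minimal) {x : S.X.C} (hx : x ∈ idl S.ι F.plus) :
    S.X.d x ∈ idl S.ι F.dec := by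
  induction hx using idl_induct with
  | h a ha x =>
    rw [S.X.d_mul, S.ι_d, S.ι_τ]
    exact add_mem (idl_mem _ (F.d_mem_dec hmin a) _)
      (S.idl_mul_idl (M := 1) le_rfl (idl_mem' _ (F.tau_plus ha)) (S.d_mem x))
  | hadd x y _ _ hx hy => rw [map_add]; exact add_mem hx hy

lemma p_dec {y : S.X.C} (hy : y ∈ idl S.ι F.dec) : S.p y ∈ F.dec := by
  induction hy using idl_induct with
  | h x hx y =>
    rw [map_mul, S.pι]
    refine F.dec_mul ?_ _
    refine Submodule.mul_induction_on hx ?_ ?_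
    · intro a ha b hb
      rw [map_mul]
      have : ∀ a ∈ F.plus, S.π a ∈ F.plus := fun a ha => by
        induction ha using Sullivan.ge_induct with
        | h i hi a ha => exact F.mem_plus hi (S.π_gr _ a ha)
        | h0 => simp
        | hadd x y _ _ hx hy => rw [map_add]; exact add_mem hx hy
      exact Submodule.mul_mem_mul (this a ha) (this b hb)
    · intro a b ha hb; rw [map_add]; exact add_mem ha hb
  | hadd x y _ _ hx hy => rw [map_add]; exact add_mem hx hy

/-- A generator of lowest surviving degree lifts to a cocycle in the ideal generated by `F⁺`. -/
lemma exists_c (hmin : F.Minimal) {i : ℕ} (hkill : ∀ j < i, ∀ v ∈ F.V j, S.π v = 0) {v : F.A}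
    (hv : v ∈ F.V i) :
    ∃ c ∈ S.X.gr i, S.X.d c = 0 ∧ c ∈ idl S.ι F.plus ∧ S.p c = S.π v := by
  have h1 : S.π (F.d v) = 0 := F.map_dec S.π hkill (F.d_mem_dec hmin v) (F.d_mem (F.V_le i hv))
  obtain ⟨q, hq1, hq2, hq3, hq4⟩ := S.acyclic ((i + 1 : ℕ) : ℤ) (S.ι (F.d v))
    (S.ι_gr _ _ (F.d_mem (F.V_le i hv))) (idl_mem' _ (F.d_mem_dec hmin v)) (by rw [S.pι, h1])
    (by rw [S.ι_d, F.d_sq, map_zero])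
  refine ⟨S.ι v - q, sub_mem (S.ι_gr _ v (F.V_le i hv)) (S.X.mem_cast (by push_cast; ring) hq1),
    by rw [map_sub, S.ι_d, hq4, sub_self], sub_mem (idl_mem' _ (F.V_plus hv)) hq2,
    by rw [map_sub, S.pι, hq3, sub_zero]⟩

end Stage

end RHT

namespace RHT

namespace Stage

variable {F : Sullivan} {N : ℕ} {G : Type} [Ring G] [Algebra ℚ G] {g : F.A →ₐ[ℚ] G}
  (S : Stage F N g) {c : S.X.C} {e : ℤ} {C' : SD} (E : Adj S.X c e C')

lemma coef_idl {K : Submodule ℚ F.A} {y : C'.C} (hy : y ∈ idl (E.i.comp S.ι) K) (k : ℕ) :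
    E.coef k y ∈ idl S.ι K := by
  induction hy using idl_induct with
  | h x hx y => rw [AlgHom.comp_apply, E.coef_i_mul]; exact idl_mem _ hx _
  | hadd x y _ _ hx hy => rw [map_add]; exact add_mem hx hy

lemma mon_idl {K : Submodule ℚ F.A} {y : S.X.C} (hy : y ∈ idl S.ι K) (k : ℕ) :
    E.mon k y ∈ idl (E.i.comp S.ι) K := by
  induction hy using idl_induct with
  | h x hx y => rw [E.i_mul_mon]; exact idl_mem (E.i.comp S.ι) hx _
  | hadd x y _ _ hx hy => rw [map_add]; exact add_mem hx hy

lemma coef_d_dec (hmin : F.Minimal) (hc : c ∈ idl S.ι F.plus) {y : C'.C}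
    (hy : y ∈ idl (E.i.comp S.ι) F.plus) (k : ℕ) : E.coef k (C'.d y) ∈ idl S.ι F.dec := by
  rw [E.coef_d]
  refine add_mem (S.d_idl hmin (S.coef_idl E hy k)) (Submodule.smul_mem _ _ ?_)
  exact S.idl_mul_idl (M := 1) le_rfl
    (S.τ_idl (fun x hx => F.tau_plus hx) (S.coef_idl E hy (k + 1))) hc

lemma d_mem_adj (hc : c ∈ idl S.ι F.plus) (y : C'.C) :
    C'.d y ∈ idl (E.i.comp S.ι) F.plus := by
  refine E.mem_of_coef (W := idl S.ι F.plus) (fun k x hx => S.mon_idl E hx k) fun k => ?_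
  rw [E.coef_d]
  refine add_mem (S.d_mem _) (Submodule.smul_mem _ _ ?_)
  refine S.idl_mul_idl (M := 1) (K := ⊤) (L := F.plus) ?_ ?_ hc
  · rw [Submodule.mul_le]
    exact fun x _ y hy => F.mul_plus hy x
  · simpa using idl_mem S.ι (K := ⊤) (x := 1) trivial (S.X.τ (E.coef (k + 1) y))

/-- The field `high` is inherited when a variable is adjoined, by descent on the coefficients. -/
lemma high_adj (hc : c ∈ idl S.ι F.plus) (y : C'.C)
    (hy : y ∈ idl (E.i.comp S.ι) (F.ge (N + 1))) (hdy : C'.d y = 0) :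
    ∃ w ∈ idl (E.i.comp S.ι) (F.ge N), C'.d w = y := by
  refine E.descent (Y := fun _ => idl S.ι (F.ge (N + 1))) (W := fun _ => idl S.ι (F.ge N)) 0
    (fun _ y hy hdy => S.high y hy hdy) ?_ ?_ ?_ hdy
  · intro n w hw
    exact S.idl_mul_idl (M := 1) (F.ge_mul_ge N 1) (S.τ_idl (fun x hx => F.tau_ge hx) hw) hc
  · intro k _ x hx; exact S.mon_idl E hx k
  · intro k; exact S.coef_idl E hy k

lemma p_pm {n : ℤ} {x : S.X.C} (hx : x ∈ S.X.gr n) : F.tau (S.p x) = S.p x ∨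
    F.tau (S.p x) = - S.p x :=
  (SD.ofCDGA F.toCDGA).τ_pm (S.p_gr n x hx)

section step

variable {i : ℕ} {v : F.A} (hv : v ∈ F.V i) (hv0 : v ≠ 0) (hpc : S.p c = v) (hie : (i : ℤ) = e + 1)
  {κ : F.A →ₐ[ℚ] F.A} (hκ : ∀ x, ∃ h, x - κ x = v * h)
include hv hv0 hpc hie hκ

/-- Divisibility by `v` of the first coefficient which does not yet vanish on the quotient. -/
lemma coef_div {n : ℤ} {y : C'.C} (hy : y ∈ C'.gr n) (hdy : C'.d y = 0)
    (hpy : κ (S.p (E.coef 0 y)) = 0) (K : ℕ) (hK : ∀ k < K, S.p (E.coef k y) = 0) :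
    (¬ (Even e ∨ K + 1 ≤ 1) → S.p (E.coef K y) = 0) ∧ ∃ h, S.p (E.coef K y) = v * h := by
  rcases K with _ | K
  · refine ⟨fun h => absurd (Or.inr le_rfl) h, ?_⟩
    obtain ⟨h, hh⟩ := hκ (S.p (E.coef 0 y))
    exact ⟨h, by rw [← hh, hpy, sub_zero]⟩
  · have h1 := congrArg S.p (congrArg (E.coef K) hdy)
    rw [E.coef_d, map_add, S.p_d, hK K (by omega), map_zero, map_zero, map_zero, zero_add,
      map_smul, map_zero] at h1
    have h2 := (smul_eq_zero.1 h1).resolve_left (by positivity)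
    have hgr := E.coef_gr (K + 1) hy
    have h3 : S.p (E.coef (K + 1) y) * v = 0 := by
      rw [map_mul, hpc] at h2
      rcases S.X.τ_pm hgr with h | h
      · rwa [h] at h2
      · rw [h, map_neg, neg_mul, neg_eq_zero] at h2; exact h2
    have h4 : v * S.p (E.coef (K + 1) y) = 0 := by
      rcases Nat.even_or_odd i with h | h
      · rw [F.comm_even (F.V_le i hv) h, h3]
      · rw [F.comm_odd (F.V_le i hv) h]
        rcases S.p_pm hgr with h' | h'
        · rw [h', h3]
        · rw [h', neg_mul, h3, neg_zero]
    obtain ⟨h5, h6⟩ := F.annihilator hv hv0 h4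
    refine ⟨fun h => h5 ?_, ?_⟩
    · push Not at h
      have := (Int.not_even_iff_odd.1 h.1).add_one
      rw [← hie] at this
      exact_mod_cast this
    · rcases Nat.even_or_odd i with h | h
      · exact ⟨0, by rw [h5 h, mul_zero]⟩
      · exact h6 h

variable (hπv : S.π v = v) (hkill : ∀ j < i, ∀ w ∈ F.V j, S.π w = 0) (hmin : F.Minimal)
  (hκv : κ v = 0)
include hπv hkill hmin hκv

lemma κπd (f : F.A) : κ (S.π (F.d f)) = κ (S.π (F.d (κ f))) := by
  obtain ⟨h, hh⟩ := hκ f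
  have h1 : S.π (F.d v) = 0 := F.map_dec S.π hkill (F.d_mem_dec hmin v) (F.d_mem (F.V_le i hv))
  rw [← sub_eq_zero, ← map_sub, ← map_sub, ← map_sub, hh, F.d_mul, map_add, map_mul, h1,
    zero_mul, zero_add, map_mul, map_mul, F.tau_of_mem (F.V_le i hv), map_smul, hπv, map_smul,
    hκv, smul_zero, zero_mul]

lemma p_d_adj (y : C'.C) : κ (S.p (E.coef 0 (C'.d y))) =
    κ (S.π (F.d (κ (S.p (E.coef 0 y))))) := by
  rw [← S.κπd hv hv0 hpc hie hκ hπv hkill hmin hκv, E.coef_d, map_add, map_smul, map_mul, hpc,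
    S.p_d, map_add, map_smul, map_mul, hκv, mul_zero, smul_zero, add_zero]

variable (hc : c ∈ idl S.ι F.plus)
include hc

/-- Coefficient by coefficient, a cocycle in the kernel of the new quotient map can be moved into
the kernel of the old one. -/
lemma clear {n : ℤ} {y : C'.C} (hy : y ∈ C'.gr n) (hdy : C'.d y = 0)
    (hpy : κ (S.p (E.coef 0 y)) = 0) (hyd : y ∈ idl (E.i.comp S.ι) F.dec) (K : ℕ) :
    ∃ w ∈ C'.gr (n - 1), w ∈ idl (E.i.comp S.ι) F.plus ∧ κ (S.p (E.coef 0 w)) = 0 ∧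
      ∀ k < K, S.p (E.coef k (y - C'.d w)) = 0 := by
  induction K with
  | zero => exact ⟨0, zero_mem _, zero_mem _, by simp, fun k hk => by omega⟩
  | succ K ih =>
    obtain ⟨w, hw1, hw2, hw3, hw4⟩ := ih
    have hz : y - C'.d w ∈ C'.gr n := sub_mem hy (C'.mem_cast (by ring) (C'.d_gr hw1))
    have hzdec : E.coef K (y - C'.d w) ∈ idl S.ι F.dec := by
      rw [map_sub]; exact sub_mem (S.coef_idl E hyd K) (S.coef_d_dec E hmin hc hw2 K)
    obtain ⟨h1, h, hh⟩ := S.coef_div E hv hv0 hpc hie hκ hz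
      (by rw [map_sub, hdy, C'.d_d, sub_zero])
      (by
        rw [map_sub, map_sub, map_sub, hpy,
          S.p_d_adj E hv hv0 hpc hie hκ hπv hkill hmin hκv, hw3]; simp) K hw4
    by_cases hf : S.p (E.coef K (y - C'.d w)) = 0
    · refine ⟨w, hw1, hw2, hw3, fun k hk => ?_⟩
      by_cases hkK : k = K
      · rw [hkK, hf]
      · exact hw4 k (by omega)
    have hp : Even e ∨ K + 1 ≤ 1 := by
      by_contra h; exact hf (h1 h)
    have hgr := S.p_gr _ _ (E.coef_gr K hz)
    have hdec := S.p_dec hzdec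
    have hππ := S.πp (E.coef K (y - C'.d w))
    set f := S.p (E.coef K (y - C'.d w)) with hfdef
    obtain ⟨l, hl, hfl⟩ := (SD.zgr_exists hgr).resolve_left hf
    have hil : i ≤ l := by
      by_contra hlt
      refine hf ?_
      rw [← F.pr_of_mem hfl, hh, F.pr_mul_lt (F.V_le i hv) (by omega)]
    obtain ⟨r, rfl⟩ : ∃ r, l = i + r := ⟨l - i, by omega⟩
    have hfv : f = v * F.pr r h := by
      rw [← F.pr_mul (F.V_le i hv), ← hh, F.pr_of_mem hfl]
    have hh1 := F.pr_mem r h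
    set h1 := F.pr r h with hh1def
    have hplus : h1 ∈ F.plus := F.plus_of_mul_dec hv hv0 (hfv ▸ hdec)
    have hfv' : f = v * S.π h1 := by
      rw [hfv, map_mul, hπv] at hππ; rw [hfv, hππ]
    have hx := S.ι_gr r h1 hh1
    have hx2 : S.ι h1 ∈ idl S.ι F.plus := idl_mem' _ hplus
    obtain ⟨σ, hσ⟩ : ∃ σ : ℚ, σ • (S.p (S.X.τ (S.ι h1) * c)) = f := by
      have hτ := (SD.ofCDGA F.toCDGA).τ_pm
        (show S.π h1 ∈ SD.zgr F.toCDGA r by rw [SD.zgr_nat]; exact S.π_gr r h1 hh1)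
      have hτ : F.tau (S.π h1) = S.π h1 ∨ F.tau (S.π h1) = -S.π h1 := hτ
      have e1 : ∃ σ : ℚ, σ • (S.π h1 * v) = f := by
        rcases Nat.even_or_odd i with h | h
        · exact ⟨1, by rw [one_smul, hfv', F.comm_even (F.V_le i hv) h]⟩
        · rcases hτ with h' | h'
          · exact ⟨1, by rw [one_smul, hfv', F.comm_odd (F.V_le i hv) h, h']⟩
          · exact ⟨-1, by rw [hfv', F.comm_odd (F.V_le i hv) h, h', neg_smul, one_smul, neg_mul]⟩
      obtain ⟨σ, hσ⟩ := e1
      rcases S.X.τ_pm hx with h' | h'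
      · exact ⟨σ, by rw [h', map_mul, S.pι, hpc, hσ]⟩
      · exact ⟨-σ, by rw [h', map_mul, map_neg, S.pι, hpc, neg_mul, smul_neg, neg_smul, neg_neg, hσ]⟩
    set x := (σ * ((K : ℚ) + 1)⁻¹) • S.ι h1 with hxdef
    have hco : ∀ k ≤ K, S.p (E.coef k (C'.d (E.mon (K + 1) x))) = if k = K then f else 0 := by
      intro k hk
      rw [E.coef_d, E.coef_mon_ne _ hp (by omega), map_zero, zero_add]
      split_ifs with hkK
      · subst hkK
        rw [E.coef_mon_self _ hp, hxdef, map_smul, map_smul S.X.τ, smul_mul_assoc, map_smul, smul_smul, ← hσ]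
        congr 1
        have : (k : ℚ) + 1 ≠ 0 := by positivity
        field_simp
      · rw [E.coef_mon_ne _ hp (by omega)]; simp
    refine ⟨w + E.mon (K + 1) x, add_mem hw1 ?_, add_mem hw2 ?_, ?_, ?_⟩
    · refine C'.mem_cast ?_ (E.mon_gr (K + 1) (Submodule.smul_mem _ _ hx))
      have : n - K * e = e + 1 + r := by rw [hl, ← hie]; push_cast; ring
      push_cast
      linear_combination -this
    · exact S.mon_idl E (Submodule.smul_mem _ _ hx2) _
    · rw [map_add, E.coef_mon_ne _ hp (by omega), add_zero, hw3]
    · intro k hk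
      rw [map_add, ← sub_sub, map_sub, map_sub, hco k (by omega)]
      split_ifs with hkK
      · rw [hkK, ← hfdef, sub_self]
      · rw [hw4 k (by omega), sub_zero]

/-- The field `acyclic` is inherited when a variable is adjoined: first `clear` moves the cocycle
into the kernel of the old projection, then descent on the coefficients applies. -/
lemma acyclic_adj (he : 0 < e) (hcgr : c ∈ S.X.gr i) (n : ℤ) {y : C'.C} (hy : y ∈ C'.gr n)
    (hyd : y ∈ idl (E.i.comp S.ι) F.dec)
    (hpy : κ (S.p (E.coef 0 y)) = 0) (hdy : C'.d y = 0) :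
    ∃ w ∈ C'.gr (n - 1), w ∈ idl (E.i.comp S.ι) F.plus ∧ κ (S.p (E.coef 0 w)) = 0 ∧
      C'.d w = y := by
  obtain ⟨w, hw1, hw2, hw3, hw4⟩ := S.clear E hv hv0 hpc hie hκ hπv hkill hmin hκv hc hy hdy hpy
    hyd (n.toNat + 1)
  have hz : y - C'.d w ∈ C'.gr n := sub_mem hy (C'.mem_cast (by ring) (C'.d_gr hw1))
  have hall : ∀ k, S.p (E.coef k (y - C'.d w)) = 0 := by
    intro k
    by_cases hk : k < n.toNat + 1
    · exact hw4 k hk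
    · have h1 := E.coef_gr k hz
      rw [S.X.gr_neg h1, map_zero]
      have : n < k := by omega
      have : (k : ℤ) ≤ k * e := by nlinarith
      omega
  obtain ⟨w', hw', hwy'⟩ := E.descent
    (Y := fun m => S.X.gr m ⊓ idl S.ι F.dec ⊓ LinearMap.ker S.p.toLinearMap)
    (W := fun m => S.X.gr (m - 1) ⊓ idl S.ι F.plus ⊓ LinearMap.ker S.p.toLinearMap)
    (W' := C'.gr (n - 1) ⊓ idl (E.i.comp S.ι) F.plus ⊓
      LinearMap.ker (κ.toLinearMap ∘ₗ S.p.toLinearMap ∘ₗ E.coef 0)) n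
    (by
      rintro m y ⟨⟨h1, h2⟩, h3⟩ h4
      obtain ⟨w, a1, a2, a3, a4⟩ := S.acyclic m y h1 h2 h3 h4
      exact ⟨w, ⟨⟨a1, a2⟩, a3⟩, a4⟩)
    (by
      rintro m w ⟨⟨h1, h2⟩, h3⟩
      have h3 : S.p w = 0 := h3
      refine ⟨⟨?_, ?_⟩, ?_⟩
      · exact S.X.mem_cast (by rw [hie]; ring) (S.X.mul_mem (S.X.τ_gr h1) hcgr)
      · exact S.idl_mul_idl (M := 1) le_rfl (S.τ_idl (fun x hx => F.tau_plus hx) h2) hc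
      · show S.p _ = 0
        rcases S.X.τ_pm h1 with h | h <;> rw [h, map_mul] <;> simp [h3])
    (by
      rintro k hp x ⟨⟨h1, h2⟩, h3⟩
      have h3 : S.p x = 0 := h3
      refine ⟨⟨C'.mem_cast (by ring) (E.mon_gr k h1), S.mon_idl E h2 k⟩, ?_⟩
      show κ (S.p (E.coef 0 (E.mon k x))) = 0
      rw [E.coef_mon _ _ _ hp]
      split_ifs <;> simp [h3])
    (y := y - C'.d w)
    (fun k => ⟨⟨E.coef_gr k hz, by
      rw [map_sub]; exact sub_mem (S.coef_idl E hyd k) (S.coef_d_dec E hmin hc hw2 k)⟩, hall k⟩)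
    (by rw [map_sub, hdy, C'.d_d, sub_zero])
  obtain ⟨⟨h1, h2⟩, h3⟩ := hw'
  have h3 : κ (S.p (E.coef 0 w')) = 0 := h3
  exact ⟨w' + w, add_mem h1 hw1, add_mem h2 hw2, by rw [map_add, map_add, map_add, h3, hw3, add_zero],
    by rw [map_add, hwy', sub_add_cancel]⟩

end step

/-- Killing one more generator of the lowest surviving degree. -/
lemma step (hmin : F.Minimal) {i : ℕ} (hi : 2 ≤ i) {v : F.A} (hv : v ∈ F.V i) (hv0 : v ≠ 0)
    (hπv : S.π v = v) (hkill : ∀ j < i, ∀ w ∈ F.V j, S.π w = 0) (hgv : g v = 0) :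
    ∃ (S' : Stage F N g) (lam : F.A →ₗ[ℚ] ℚ), lam v = 1 ∧
      ∀ j, ∀ w ∈ F.V j, S'.π w = S.π w - lam (S.π w) • v := by
  obtain ⟨κ, lam, h1, h2, hκV, hκgr, hκv, hκ⟩ := F.exists_kill hv hv0
  obtain ⟨c, hcgr, hdc, hc, hpc⟩ := S.exists_c hmin hkill hv
  rw [hπv] at hpc
  have hie : (i : ℤ) = ((i : ℤ) - 1) + 1 := by ring
  obtain ⟨C', ⟨E⟩⟩ := exists_adj S.X c (e := (i : ℤ) - 1) (by omega) (S.X.mem_cast hie hcgr) hdc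
  have hpco : ∀ x, (κ.comp (S.p.comp E.coefHom)) x = κ (S.p (E.coef 0 x)) := fun x => rfl
  have hκπκ : ∀ x, κ (S.π (κ x)) = κ (S.π x) := by
    intro x
    obtain ⟨h, hh⟩ := hκ x
    rw [← sub_eq_zero, ← map_sub, ← map_sub, ← neg_sub, hh, map_neg, map_neg, map_mul, map_mul,
      hπv, hκv, zero_mul, neg_zero]
  have hgκ : ∀ x, g (κ x) = g x := by
    intro x
    obtain ⟨h, hh⟩ := hκ x
    rw [← sub_eq_zero, ← map_sub, ← neg_sub, hh, map_neg, map_mul, hgv, zero_mul, neg_zero]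
  refine ⟨
    { X := C'
      ι := E.i.comp S.ι
      π := κ.comp S.π
      p := κ.comp (S.p.comp E.coefHom)
      ι_gr := fun n x hx => E.i_gr (S.ι_gr n x hx)
      ι_d := fun x => by rw [AlgHom.comp_apply, E.i_d, S.ι_d]; rfl
      π_gr := fun n x hx => hκgr n _ (S.π_gr n x hx)
      π_V := fun n w hw => ?_
      pι := fun x => by rw [hpco, AlgHom.comp_apply, E.coef_zero_i, S.pι]; rfl
      πp := fun x => by rw [hpco, AlgHom.comp_apply, hκπκ, S.πp]
      p_gr := fun n x hx => ?_
      p_d := fun x => by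
        rw [hpco, hpco, S.p_d_adj E hv hv0 hpc hie hκ hπv hkill hmin hκv]; rfl
      gπ := fun x => by rw [AlgHom.comp_apply, hgκ, S.gπ]
      d_mem := S.d_mem_adj E hc
      acyclic := fun n y hy hyd hpy hdy =>
        S.acyclic_adj E hv hv0 hpc hie hκ hπv hkill hmin hκv hc (by omega) hcgr n hy hyd hpy hdy
      high := S.high_adj E hc }, lam, h1, ?_⟩
  · rw [AlgHom.comp_apply, hκV n _ (S.π_V n w hw)]
    refine sub_mem (S.π_V n w hw) ?_
    by_cases hn : n = i
    · subst hn; exact Submodule.smul_mem _ _ hv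
    · rw [h2 n hn _ (S.π_gr n w (F.V_le n hw)), zero_smul]; exact zero_mem _
  · rw [hpco]
    have := S.p_gr n _ (S.X.mem_cast (by simp) (E.coef_gr 0 hx))
    rcases SD.zgr_exists this with h | ⟨k, rfl, hk⟩
    · rw [h, map_zero]; exact zero_mem _
    · rw [SD.zgr_nat]; exact hκgr k _ hk
  · intro j w hw
    exact hκV j _ (S.π_V j w hw)

end Stage

end RHT

/-! ### Derivations of minimal algebras with bounded cohomology -/

namespace RHT

namespace Sullivan

variable (F : Sullivan)

/-- `F` has no cohomology above degree `N`. -/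
def Bounded (N : ℕ) : Prop :=
  ∀ i, N < i → ∀ x ∈ F.grading i, F.d x = 0 → ∃ w ∈ F.grading (i - 1), F.d w = x

variable {F}

lemma ge_exact {N : ℕ} (hN : F.Bounded N) {y : F.A} (hy : y ∈ F.ge (N + 1)) (hd : F.d y = 0) :
    ∃ w ∈ F.ge N, F.d w = y := by
  classical
  have hlow : ∀ j ≤ N, F.pr j y = 0 := by
    intro j hj
    clear hd
    induction hy using ge_induct with
    | h i hi x hx => exact F.pr_of_ne (by omega) hx
    | h0 => simp
    | hadd x z _ _ hx hz => rw [map_add, hx, hz, add_zero]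
  have hex : ∀ j, ∃ w ∈ F.ge N, F.d w = F.pr j y := by
    intro j
    by_cases hj : j ≤ N
    · exact ⟨0, zero_mem _, by rw [hlow j hj, map_zero]⟩
    · obtain ⟨w, hw, h⟩ := hN j (by omega) _ (F.pr_mem j y) (by rw [← F.pr_d, hd, map_zero])
      exact ⟨w, F.mem_ge (by omega) hw, h⟩
  choose w hw hdw using hex
  refine ⟨∑ j ∈ (DirectSum.decompose F.grading y).support, w j, sum_mem fun j _ => hw j, ?_⟩
  rw [map_sum]
  simp only [hdw]
  exact DirectSum.sum_support_decompose F.grading y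

end Sullivan

namespace Stage

variable {F : Sullivan} {N : ℕ} {G : Type} [Ring G] [Algebra ℚ G] {g : F.A →ₐ[ℚ] G}

/-- The initial stage, in which nothing has been killed. -/
def base (hmin : F.Minimal) (hN : F.Bounded N) (g : F.A →ₐ[ℚ] G) : Stage F N g where
  X := SD.ofCDGA F.toCDGA
  ι := AlgHom.id ℚ F.A
  π := AlgHom.id ℚ F.A
  p := AlgHom.id ℚ F.A
  ι_gr := fun n x hx => by
    show x ∈ SD.zgr F.toCDGA n
    rw [SD.zgr_nat]; exact hx
  ι_d := fun x => rfl
  π_gr := fun n x hx => hx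
  π_V := fun n x hx => hx
  pι := fun x => rfl
  πp := fun x => rfl
  p_gr := fun n x hx => hx
  p_d := fun x => rfl
  gπ := fun x => rfl
  d_mem := fun x => idl_mem' (AlgHom.id ℚ F.A) (F.dec_le_plus (F.d_mem_dec hmin x))
  acyclic := fun n y _ _ hy _ => ⟨0, zero_mem _, zero_mem _, map_zero _, by
    have : y = 0 := hy
    rw [this, map_zero]⟩
  high := fun y hy hd => by
    have hy' : y ∈ F.ge (N + 1) := by
      clear hd
      induction hy using idl_induct with
      | h x hx y => exact F.ge_mul hx y
      | hadd x y _ _ hx hy => exact add_mem hx hy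
    obtain ⟨w, hw, h⟩ := Sullivan.ge_exact hN hy' hd
    exact ⟨w, idl_mem' (AlgHom.id ℚ F.A) hw, h⟩

/-- All generators in the degrees where `g` vanishes can be killed, one degree at a time. -/
lemma exists_kill_below (hmin : F.Minimal) (hN : F.Bounded N) {K : ℕ}
    (hg : ∀ j < K, ∀ w ∈ F.V j, g w = 0) :
    ∀ i ≤ K, ∃ S : Stage F N g, ∀ j < i, ∀ w ∈ F.V j, S.π w = 0 := by
  intro i
  induction i with
  | zero => exact fun _ => ⟨base hmin hN g, fun j hj => by omega⟩
  | succ i ih =>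
    intro hi
    obtain ⟨S, hS⟩ := ih (by omega)
    have := F.V_fin i
    suffices H : ∀ r : ℕ, ∀ S : Stage F N g, (∀ j < i, ∀ w ∈ F.V j, S.π w = 0) →
        Module.finrank ℚ ((F.V i).map S.π.toLinearMap) = r →
        ∃ S : Stage F N g, ∀ j < i + 1, ∀ w ∈ F.V j, S.π w = 0 from H _ S hS rfl
    intro r
    induction r using Nat.strong_induction_on with
    | _ r ihr =>
      intro S hS hr
      by_cases hbot : (F.V i).map S.π.toLinearMap = ⊥
      · refine ⟨S, fun j hj w hw => ?_⟩
        rcases Nat.lt_succ_iff_lt_or_eq.1 hj with h | rfl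
        · exact hS j h w hw
        · have : S.π w ∈ (F.V j).map S.π.toLinearMap := ⟨w, hw, rfl⟩
          rw [hbot] at this
          exact this
      · obtain ⟨v, ⟨w, hw, rfl⟩, hv0⟩ := (Submodule.ne_bot_iff _).1 hbot
        set v := S.π.toLinearMap w with hvdef
        have hv : v ∈ F.V i := S.π_V i w hw
        have hπv : S.π v = v := S.ππ w
        obtain ⟨S', lam, hlam, hS'⟩ := S.step hmin (F.V_pos hv hv0) hv hv0 hπv hS
          (hg i (by omega) v hv)
        refine ihr _ ?_ S' ?_ rfl
        · rw [← hr]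
          refine Submodule.finrank_lt_finrank_of_lt (lt_of_le_of_ne ?_ ?_)
          · rintro _ ⟨x, hx, rfl⟩
            refine ⟨x - lam (S.π x) • w, sub_mem hx (Submodule.smul_mem _ _ hw), ?_⟩
            rw [map_sub, map_smul, ← hvdef]
            exact (hS' i x hx).symm
          · intro h
            have h1 : v ∈ (F.V i).map S.π.toLinearMap := ⟨w, hw, rfl⟩
            rw [← h] at h1
            obtain ⟨x, hx, hxv⟩ := h1
            have h2 : lam (S'.π x) = 0 := by
              rw [hS' i x hx, map_sub, map_smul, hlam, smul_eq_mul, mul_one, sub_self]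
            have h3 : lam v = 0 := by rw [← hxv]; exact h2
            rw [hlam] at h3
            exact one_ne_zero h3
        · intro j hj w' hw'
          rw [hS' j w' hw', hS j hj w' hw', map_zero, zero_smul, sub_zero]

end Stage

namespace Sullivan

variable {F : Sullivan} {K : ℕ} (θ : F.A →ₗ[ℚ] F.A)

/-- The Taylor series `∑ ε(θⁿx)/n! Xⁿ` of an element along a derivation `θ`. -/
noncomputable def taylorL : F.A →ₗ[ℚ] PowerSeries ℚ where
  toFun x := PowerSeries.mk fun n => F.aug ((θ ^ n) x) / (n.factorial : ℚ)
  map_add' x y := by ext n; simp [add_div]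
  map_smul' r x := by ext n; simp [mul_div_assoc]

lemma taylorL_coeff (n : ℕ) (x : F.A) :
    PowerSeries.coeff n (taylorL θ x) = F.aug ((θ ^ n) x) / (n.factorial : ℚ) := by
  simp [taylorL]

lemma taylorL_θ (x : F.A) :
    PowerSeries.derivative ℚ (taylorL θ x) = taylorL θ (θ x) := by
  ext n
  rw [PowerSeries.coeff_derivative, taylorL_coeff, taylorL_coeff, pow_succ, Nat.factorial_succ]
  have h1 : ((n.factorial : ℕ) : ℚ) ≠ 0 := by exact_mod_cast n.factorial_ne_zero
  have h2 : (n : ℚ) + 1 ≠ 0 := by positivity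
  push_cast
  rw [Module.End.mul_apply]
  field_simp

variable {θ} (hθ : ∀ x y, θ (x * y) = θ x * y + x * θ y)
include hθ

lemma θ_one : θ 1 = 0 := by
  have := hθ 1 1
  simpa using this

/-- Both sides of the multiplicativity identity satisfy the same differential equation. -/
lemma taylorL_mul (x y : F.A) : taylorL θ (x * y) = taylorL θ x * taylorL θ y := by
  suffices H : ∀ n, ∀ x y, PowerSeries.coeff n (taylorL θ (x * y)) =
      PowerSeries.coeff n (taylorL θ x * taylorL θ y) from PowerSeries.ext fun n => H n x y
  intro n
  induction n with
  | zero => intro x y; simp [PowerSeries.coeff_mul, taylorL_coeff]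
  | succ n ih =>
    intro x y
    have h : (n : ℚ) + 1 ≠ 0 := by positivity
    refine mul_right_cancel₀ h ?_
    rw [← PowerSeries.coeff_derivative, ← PowerSeries.coeff_derivative, taylorL_θ, hθ, map_add,
      map_add, ih, ih, Derivation.leibniz, taylorL_θ, taylorL_θ, map_add, smul_eq_mul, smul_eq_mul,
      mul_comm (taylorL θ (θ x)), add_comm]

/-- The Taylor series as a homomorphism of algebras. -/
noncomputable def taylor : F.A →ₐ[ℚ] PowerSeries ℚ :=
  AlgHom.ofLinearMap (taylorL θ) (by
    ext n
    rw [taylorL_coeff]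
    cases n with
    | zero => simp
    | succ n => simp [pow_succ, θ_one hθ, PowerSeries.coeff_one])
    (taylorL_mul hθ)

/-- On a minimal algebra with bounded cohomology, let `θ` be a derivation without signs
which commutes with the differential and vanishes in degrees below `K`. Then `θ`
sends no generator of degree `K` to an element with nonzero constant term.

Otherwise `taylor` annihilates all generators of degree below `K` and all coboundaries, but not `v`.
Killing the generators of degree below `K` turns `v` into a cocycle `c`; by boundedness `c ^ (N+1)`
is a coboundary, so `(taylor v) ^ (N+1) = 0`, which is absurd in the domain of power series. -/
theorem no_derivation (hmin : F.Minimal) {N : ℕ} (hN : F.Bounded N)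
    (hd : ∀ x, θ (F.d x) = F.d (θ x))
    (hlow : ∀ i < K, ∀ x ∈ F.grading i, θ x = 0) {v : F.A} (hv : v ∈ F.V K) :
    F.aug (θ v) = 0 := by
  by_contra hne
  have hg : ∀ x, taylor hθ x = taylorL θ x := fun x => rfl
  have hgv : taylor hθ v ≠ 0 := by
    intro h
    have := congrArg (PowerSeries.coeff 1) h
    rw [hg, taylorL_coeff] at this
    simp at this
    exact hne this
  have hglow : ∀ j < K, ∀ w ∈ F.V j, taylor hθ w = 0 := by
    intro j hj w hw
    ext n
    rw [hg, taylorL_coeff]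
    cases n with
    | zero => simp [F.aug_V hw]
    | succ n => simp [pow_succ, hlow j hj w (F.V_le j hw)]
  have hgd : ∀ x, taylor hθ (F.d x) = 0 := by
    intro x
    ext n
    have : ∀ n x, (θ ^ n) (F.d x) = F.d ((θ ^ n) x) := by
      intro n
      induction n with
      | zero => simp
      | succ n ih => intro x; rw [pow_succ, Module.End.mul_apply, Module.End.mul_apply, hd, ih]
    rw [hg, taylorL_coeff, this, F.aug_plus (F.dec_le_plus (F.d_mem_dec hmin _))]
    simp
  obtain ⟨S, hS⟩ := Stage.exists_kill_below hmin hN hglow K le_rfl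
  obtain ⟨c, hc1, hc2, hc3, hc4⟩ := S.exists_c hmin hS hv
  have hpow : ∀ n, c ^ (n + 1) ∈ idl S.ι (F.ge (n + 1)) ∧ S.X.d (c ^ (n + 1)) = 0 := by
    intro n
    induction n with
    | zero => simpa using ⟨hc3, hc2⟩
    | succ n ih =>
      rw [pow_succ]
      refine ⟨S.idl_mul_idl (M := 1) (F.ge_mul_ge (n + 1) 1) ih.1 hc3, ?_⟩
      rw [S.X.d_mul, ih.2, hc2, zero_mul, mul_zero, add_zero]
  obtain ⟨w, -, hw⟩ := S.high _ (hpow N).1 (hpow N).2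
  have h1 : taylor hθ (S.p (c ^ (N + 1))) = (taylor hθ v) ^ (N + 1) := by
    rw [map_pow, map_pow, hc4, S.gπ]
  have h2 : taylor hθ (S.p (c ^ (N + 1))) = 0 := by
    rw [← hw, S.p_d, S.gπ, hgd]
  rw [h1] at h2
  exact hgv (pow_eq_zero_iff (by omega) |>.1 h2)

end Sullivan

end RHT

/-! ### The underlying module of a fibration model is the tensor product of base and fibre -/

namespace RHT

namespace FibrationModel

open TensorProduct

section tensor

variable (B F : CDGA)

/-- The graded tensor product of two graded algebras. -/
abbrev GT : Type := GradedTensorProduct ℚ B.grading F.grading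

variable {B F}

/-- A pure tensor, as an element of the graded tensor product. -/
noncomputable def tm : B.A →ₗ[ℚ] F.A →ₗ[ℚ] GT B F :=
  (TensorProduct.mk ℚ B.A F.A).compr₂ (GradedTensorProduct.of ℚ B.grading F.grading).toLinearMap

lemma tm_mul (a : B.A) {j : ℕ} {f : F.A} (hf : f ∈ F.grading j) {i : ℕ} {b : B.A}
    (hb : b ∈ B.grading i) (g : F.A) :
    tm a f * tm b g = ((-1 : ℚ) ^ (j * i)) • tm (a * b) (f * g) := by
  have := GradedTensorProduct.tmul_coe_mul_coe_tmul (R := ℚ) B.grading F.grading a ⟨f, hf⟩ ⟨b, hb⟩ g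
  refine this.trans ?_
  rcases Nat.even_or_odd (j * i) with h | h
  · rw [h.neg_one_pow, one_smul, h.neg_one_pow, one_smul]; rfl
  · rw [h.neg_one_pow, Units.neg_smul, one_smul, h.neg_one_pow, neg_smul, one_smul]; rfl

section generic

variable {C : Type} [Ring C] [Algebra ℚ C] (t : B.A →ₗ[ℚ] F.A →ₗ[ℚ] C)
  (ht : ∀ (a : B.A) (j : ℕ) (f : F.A), f ∈ F.grading j → ∀ (i : ℕ) (b : B.A), b ∈ B.grading i →
    ∀ g, t a f * t b g = ((-1 : ℚ) ^ (j * i)) • t (a * b) (f * g))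

/-- The span of the tensors of total degree `k`. -/
def tgr (k : ℕ) : Submodule ℚ C :=
  Submodule.span ℚ {s | ∃ i j, i + j = k ∧ ∃ b ∈ B.grading i, ∃ f ∈ F.grading j, s = t b f}

lemma tm_mem {i j : ℕ} {b : B.A} (hb : b ∈ B.grading i) {f : F.A} (hf : f ∈ F.grading j) :
    t b f ∈ tgr t (i + j) := Submodule.subset_span ⟨i, j, rfl, b, hb, f, hf, rfl⟩

include ht

lemma tgr_mul (k l : ℕ) (x y : C) (hx : x ∈ tgr t k) (hy : y ∈ tgr t l) :
    x * y ∈ tgr t (k + l) := by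
  induction hx using Submodule.span_induction with
  | zero => simp
  | add a b _ _ ha hb => rw [add_mul]; exact add_mem ha hb
  | smul r a _ ha => rw [smul_mul_assoc]; exact Submodule.smul_mem _ _ ha
  | mem x hx =>
    obtain ⟨i, j, rfl, b, hb, f, hf, rfl⟩ := hx
    induction hy using Submodule.span_induction with
    | zero => simp
    | add a b _ _ ha hb => rw [mul_add]; exact add_mem ha hb
    | smul r a _ ha => rw [mul_smul_comm]; exact Submodule.smul_mem _ _ ha
    | mem y hy =>
      obtain ⟨i', j', rfl, b', hb', f', hf', rfl⟩ := hy
      rw [ht b _ f hf _ b' hb' f', show i + j + (i' + j') = (i + i') + (j + j') by ring]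
      exact Submodule.smul_mem _ _ (tm_mem t (B.mul_mem hb hb') (F.mul_mem hf hf'))

lemma tgr_comm (k l : ℕ) (x y : C) (hx : x ∈ tgr t k) (hy : y ∈ tgr t l) :
    x * y = ((-1 : ℚ) ^ (k * l)) • (y * x) := by
  induction hx using Submodule.span_induction with
  | zero => simp
  | add a b _ _ ha hb => rw [add_mul, mul_add, ha, hb, smul_add]
  | smul r a _ ha => rw [smul_mul_assoc, mul_smul_comm, ha, smul_comm]
  | mem x hx =>
    obtain ⟨i, j, rfl, b, hb, f, hf, rfl⟩ := hx
    induction hy using Submodule.span_induction with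
    | zero => simp
    | add a b _ _ ha hb => rw [mul_add, add_mul a b, ha, hb, smul_add]
    | smul r a _ ha => rw [smul_mul_assoc, mul_smul_comm, ha, smul_comm]
    | mem y hy =>
      obtain ⟨i', j', rfl, b', hb', f', hf', rfl⟩ := hy
      rw [ht b _ f hf _ b' hb' f', ht b' _ f' hf' _ b hb f, B.gcomm hb hb', F.gcomm hf hf', map_smul, map_smul,
        LinearMap.smul_apply, smul_smul, smul_smul, smul_smul]
      congr 1
      rw [← pow_add, ← pow_add, ← pow_add]
      have h : ∀ a b : ℕ, a % 2 = b % 2 → (-1 : ℚ) ^ a = (-1) ^ b := by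
        intro a b h
        rw [← Nat.mod_add_div a 2, ← Nat.mod_add_div b 2, h]
        simp [pow_add, pow_mul]
      have h2 : (i + j) * (i' + j') + j' * i = (j * i' + i * i' + j * j') + 2 * (j' * i) := by ring
      apply h
      rw [h2]
      omega

end generic

end tensor

variable {B : CDGA} {F : Sullivan} (P : FibrationModel B F)

lemma proj_mem_V {i : ℕ} {v : P.T.A} (hv : v ∈ P.V i) : P.proj.toAlgHom v ∈ F.V i := by
  rw [← P.proj_V i]; exact ⟨v, hv, rfl⟩

lemma mem_fiberSub {i : ℕ} {v : P.T.A} (hv : v ∈ P.V i) : v ∈ P.fiberSub :=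
  Algebra.subset_adjoin (Set.mem_iUnion.2 ⟨i, hv⟩)

/-- The projection identifies the lifted generators with the generators of the fibre. -/
noncomputable def Vequiv (i : ℕ) : P.V i ≃ₗ[ℚ] F.V i :=
  LinearEquiv.ofBijective
    ((P.proj.toAlgHom.toLinearMap.domRestrict (P.V i)).codRestrict (F.V i)
      fun v => P.proj_mem_V v.2)
    (by
      constructor
      · rw [← LinearMap.ker_eq_bot, LinearMap.ker_eq_bot']
        intro v hv
        exact Subtype.ext (P.fiber_inj v (P.mem_fiberSub v.2) (congrArg Subtype.val hv))
      · rintro ⟨v, hv⟩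
        rw [← P.proj_V i] at hv
        obtain ⟨w, hw, rfl⟩ := hv
        exact ⟨⟨w, hw⟩, rfl⟩)

lemma exists_j : ∃ j : F.A →ₐ[ℚ] P.T.A, ∀ i (v : F.V i), j v = ((P.Vequiv i).symm v : P.T.A) := by
  obtain ⟨φ, h, -⟩ := F.free P.T.A P.T.grading P.T.one_mem (fun _ _ _ _ hx hy => P.T.mul_mem hx hy)
    (fun _ _ _ _ hx hy => P.T.gcomm hx hy)
    (fun i => (P.V i).subtype ∘ₗ (P.Vequiv i).symm.toLinearMap)
    (fun i v => P.V_le i ((P.Vequiv i).symm v).2)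
  exact ⟨φ, h⟩

/-- The multiplicative section of the projection to the fibre, given by the lifted generators. -/
noncomputable def j : F.A →ₐ[ℚ] P.T.A := P.exists_j.choose

lemma j_apply {i : ℕ} (v : F.V i) : P.j v = ((P.Vequiv i).symm v : P.T.A) :=
  P.exists_j.choose_spec i v

lemma j_V {i : ℕ} {v : F.A} (hv : v ∈ F.V i) : P.j v ∈ P.V i := by
  rw [P.j_apply ⟨v, hv⟩]; exact ((P.Vequiv i).symm _).2

lemma proj_j (x : F.A) : P.proj.toAlgHom (P.j x) = x := by
  have := F.hom_ext (P.proj.toAlgHom.comp P.j) (AlgHom.id ℚ F.A) (fun i v hv => by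
    rw [AlgHom.comp_apply, P.j_apply ⟨v, hv⟩]
    exact congrArg Subtype.val ((P.Vequiv i).apply_symm_apply ⟨v, hv⟩))
  exact DFunLike.congr_fun this x

lemma j_gr {i : ℕ} {x : F.A} (hx : x ∈ F.grading i) : P.j x ∈ P.T.grading i :=
  F.grade_map P.T.grading P.T.one_mem (fun _ _ _ _ hx hy => P.T.mul_mem hx hy) P.j
    (fun i _ hv => P.V_le i (P.j_V hv)) hx

lemma j_mem (x : F.A) : P.j x ∈ P.fiberSub := by
  have : (⊤ : Subalgebra ℚ F.A).map P.j ≤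
      Algebra.adjoin ℚ (⋃ i, (P.V i : Set P.T.A)) := by
    rw [← F.generates, AlgHom.map_adjoin]
    refine Algebra.adjoin_mono ?_
    rintro _ ⟨v, hv, rfl⟩
    obtain ⟨i, hi⟩ := Set.mem_iUnion.1 hv
    exact Set.mem_iUnion.2 ⟨i, P.j_V hi⟩
  exact this ⟨x, trivial, rfl⟩

lemma j_proj {y : P.T.A} (hy : y ∈ P.fiberSub) : P.j (P.proj.toAlgHom y) = y := by
  have := P.fiber_inj (P.j (P.proj.toAlgHom y) - y) (sub_mem (P.j_mem _) hy) (by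
    rw [map_sub, P.proj_j, sub_self])
  exact sub_eq_zero.1 this

lemma V_eq (i : ℕ) : P.V i = (F.V i).map P.j.toLinearMap := by
  ext v
  constructor
  · intro hv
    exact ⟨_, P.proj_mem_V hv, P.j_proj (P.mem_fiberSub hv)⟩
  · rintro ⟨w, hw, rfl⟩
    exact P.j_V hw

lemma fiberSub_eq : P.fiberSub = (⊤ : Submodule ℚ F.A).map P.j.toLinearMap := by
  ext v
  constructor
  · intro hv
    exact ⟨_, trivial, P.j_proj hv⟩
  · rintro ⟨w, -, rfl⟩
    exact P.j_mem w

lemma fiberGenSpan_eq : P.fiberGenSpan = F.genSpan.map P.j.toLinearMap := by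
  rw [fiberGenSpan, Sullivan.genSpan, Submodule.map_iSup]
  simp only [P.V_eq]

/-- The total algebra is generated by the base and the lifted generators. -/
lemma adjoin_eq_top :
    Algebra.adjoin ℚ (Set.range P.incl.toAlgHom ∪ ⋃ i, (P.V i : Set P.T.A)) = ⊤ := by
  set S := Algebra.adjoin ℚ (Set.range P.incl.toAlgHom ∪ ⋃ i, (P.V i : Set P.T.A)) with hS
  have hB : ∀ x, P.incl.toAlgHom x ∈ S := fun x => Algebra.subset_adjoin (Or.inl ⟨x, rfl⟩)
  have hV : ∀ i, ∀ v ∈ P.V i, v ∈ S := fun i v hv =>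
    Algebra.subset_adjoin (Or.inr (Set.mem_iUnion.2 ⟨i, hv⟩))
  obtain ⟨φ, ⟨h1, h2⟩, -⟩ := P.relFree S (fun i => (P.T.grading i).comap S.val.toLinearMap)
    P.T.one_mem (fun _ _ _ _ hx hy => P.T.mul_mem hx hy)
    (fun _ _ _ _ hx hy => Subtype.ext (P.T.gcomm hx hy))
    (P.incl.toAlgHom.codRestrict S hB) (fun i x hx => P.incl.map_grading hx)
    (fun i => (P.V i).subtype.codRestrict (Subalgebra.toSubmodule S) fun v => hV i v v.2)
    (fun i v => P.V_le i v.2)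
  obtain ⟨ψ, -, h3⟩ := P.relFree P.T.A P.T.grading P.T.one_mem
    (fun _ _ _ _ hx hy => P.T.mul_mem hx hy) (fun _ _ _ _ hx hy => P.T.gcomm hx hy)
    P.incl.toAlgHom (fun i x hx => P.incl.map_grading hx) (fun i => (P.V i).subtype)
    (fun i v => P.V_le i v.2)
  have e1 := h3 (S.val.comp φ) ⟨fun x => congrArg Subtype.val (h1 x),
    fun i v => congrArg Subtype.val (h2 i v)⟩
  have e2 := h3 (AlgHom.id ℚ P.T.A) ⟨fun x => rfl, fun i v => rfl⟩
  rw [eq_top_iff]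
  intro x _
  have : S.val (φ x) = x := DFunLike.congr_fun (e1.trans e2.symm) x
  rw [← this]
  exact (φ x).2

/-- The product `b ⊗ x ↦ b · j(x)`. -/
noncomputable def mu : B.A →ₗ[ℚ] F.A →ₗ[ℚ] P.T.A :=
  (LinearMap.mul ℚ P.T.A).compl₁₂ P.incl.toAlgHom.toLinearMap P.j.toLinearMap

lemma mu_apply (b : B.A) (x : F.A) : P.mu b x = P.incl.toAlgHom b * P.j x := rfl

lemma mu_gr {i k : ℕ} {b : B.A} (hb : b ∈ B.grading i) {x : F.A} (hx : x ∈ F.grading k) :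
    P.mu b x ∈ P.T.grading (i + k) := P.T.mul_mem (P.incl.map_grading hb) (P.j_gr hx)

/-- Graded multiplication rule for the elements `b · j(x)`. -/
lemma mu_mul (a : B.A) {k : ℕ} {x : F.A} (hx : x ∈ F.grading k) {i : ℕ} {b : B.A}
    (hb : b ∈ B.grading i) (y : F.A) :
    P.mu a x * P.mu b y = ((-1 : ℚ) ^ (k * i)) • P.mu (a * b) (x * y) := by
  rw [mu_apply, mu_apply, mu_apply, mul_assoc, ← mul_assoc (P.j x),
    P.T.gcomm (P.j_gr hx) (P.incl.map_grading hb), smul_mul_assoc, mul_smul_comm, map_mul, map_mul]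
  simp only [mul_assoc]

/-- Additive statements may be checked on the elements `b · j(x)` with homogeneous factors. -/
lemma T_ind {p : P.T.A → Prop}
    (h : ∀ i, ∀ b ∈ B.grading i, ∀ k, ∀ x ∈ F.grading k, p (P.mu b x)) (h0 : p 0)
    (hadd : ∀ x y, p x → p y → p (x + y)) (t : P.T.A) : p t := by
  have hmu : ∀ b x, p (P.mu b x) := by
    intro b x
    induction b using B.hom_ind with
    | h i b hb =>
      induction x using F.hom_ind with
      | h k x hx => exact h i b hb k x hx
      | h0 => simpa using h0
      | hadd x y hx hy => rw [map_add]; exact hadd _ _ hx hy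
    | h0 => simpa using h0
    | hadd x y hx hy => rw [map_add]; exact hadd _ _ hx hy
  set M := Submodule.span ℚ {t | ∃ i, ∃ b ∈ B.grading i, ∃ k, ∃ x ∈ F.grading k, t = P.mu b x}
    with hM
  have hmuM : ∀ b x, P.mu b x ∈ M := by
    intro b x
    induction b using B.hom_ind with
    | h i b hb =>
      induction x using F.hom_ind with
      | h k x hx => exact Submodule.subset_span ⟨i, b, hb, k, x, hx, rfl⟩
      | h0 => simp
      | hadd x y hx hy => rw [map_add]; exact add_mem hx hy
    | h0 => simp
    | hadd x y hx hy => rw [map_add]; exact add_mem hx hy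
  have hmul : ∀ s ∈ M, ∀ t ∈ M, s * t ∈ M := by
    intro s hs t ht
    induction hs using Submodule.span_induction with
    | zero => simp
    | add a b _ _ ha hb => rw [add_mul]; exact add_mem ha hb
    | smul r a _ ha => rw [smul_mul_assoc]; exact Submodule.smul_mem _ _ ha
    | mem s hs =>
      obtain ⟨i, b, hb, k, x, hx, rfl⟩ := hs
      induction ht using Submodule.span_induction with
      | zero => simp
      | add a b _ _ ha hb => rw [mul_add]; exact add_mem ha hb
      | smul r a _ ha => rw [mul_smul_comm]; exact Submodule.smul_mem _ _ ha
      | mem t ht =>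
        obtain ⟨i', b', hb', k', x', hx', rfl⟩ := ht
        rw [P.mu_mul b hx hb' x']
        exact Submodule.smul_mem _ _ (hmuM _ _)
  have h1 : ∀ b, P.incl.toAlgHom b ∈ M := fun b => by
    have := hmuM b 1; rwa [mu_apply, map_one, mul_one] at this
  have htop : ∀ t, t ∈ M := by
    intro t
    have ht : t ∈ Algebra.adjoin ℚ (Set.range P.incl.toAlgHom ∪ ⋃ i, (P.V i : Set P.T.A)) := by
      rw [P.adjoin_eq_top]; trivial
    induction ht using Algebra.adjoin_induction with
    | mem x hx =>
      rcases hx with ⟨b, rfl⟩ | hx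
      · exact h1 b
      · obtain ⟨i, hi⟩ := Set.mem_iUnion.1 hx
        have := hmuM 1 (P.proj.toAlgHom x)
        rwa [mu_apply, map_one, one_mul, P.j_proj (P.mem_fiberSub hi)] at this
    | algebraMap r =>
      have := h1 (algebraMap ℚ B.A r)
      rwa [AlgHom.commutes] at this
    | add x y _ _ hx hy => exact add_mem hx hy
    | mul x y _ _ hx hy => exact hmul x hx y hy
  have hp : ∀ r : ℚ, ∀ t, t ∈ M → p (r • t) := by
    intro r t ht
    induction ht using Submodule.span_induction with
    | zero => simpa using h0
    | add a b _ _ ha hb => rw [smul_add]; exact hadd _ _ ha hb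
    | smul s a hs ha =>
      clear ha
      rw [smul_smul]
      generalize r * s = q
      induction hs using Submodule.span_induction generalizing q with
      | zero => simpa using h0
      | add a b _ _ ha hb => rw [smul_add]; exact hadd _ _ (ha q) (hb q)
      | smul s a _ ha => rw [smul_smul]; exact ha _
      | mem t ht =>
        obtain ⟨i, b, hb, k, x, hx, rfl⟩ := ht
        rw [← map_smul]; exact hmu _ _
    | mem t ht =>
      obtain ⟨i, b, hb, k, x, hx, rfl⟩ := ht
      rw [← map_smul]; exact hmu _ _
  simpa using hp 1 t (htop t)

/-- Universal property of the total algebra with respect to pairings `t : B × F → C` obeying the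
multiplication rule of a graded tensor product. -/
lemma exists_lift {C : Type} [Ring C] [Algebra ℚ C] (t : B.A →ₗ[ℚ] F.A →ₗ[ℚ] C)
    (ht : ∀ (a : B.A) (j : ℕ) (f : F.A), f ∈ F.grading j → ∀ (i : ℕ) (b : B.A), b ∈ B.grading i →
      ∀ g, t a f * t b g = ((-1 : ℚ) ^ (j * i)) • t (a * b) (f * g))
    (h1 : t 1 1 = 1) : ∃ φ : P.T.A →ₐ[ℚ] C, ∀ b x, φ (P.mu b x) = t b x := by
  have ht' : ∀ a b x, t a 1 * t b x = t (a * b) x := by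
    intro a b x
    induction b using B.hom_ind with
    | h i b hb => rw [ht a 0 1 F.one_mem i b hb]; simp
    | h0 => simp
    | hadd b c hb hc => rw [map_add, LinearMap.add_apply, mul_add, mul_add, hb, hc, map_add,
        LinearMap.add_apply]
  have ht'' : ∀ x y, t 1 x * t 1 y = t 1 (x * y) := by
    intro x y
    induction x using F.hom_ind with
    | h i x hx => rw [ht 1 i x hx 0 1 B.one_mem]; simp
    | h0 => simp
    | hadd b c hb hc => rw [map_add, add_mul, add_mul, hb, hc, map_add]
  obtain ⟨il, hil⟩ : ∃ il : B.A →ₐ[ℚ] C, ∀ b, il b = t b 1 :=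
    ⟨AlgHom.ofLinearMap (t.flip 1) h1 (fun a b => (ht' a b 1).symm), fun _ => rfl⟩
  obtain ⟨ir, hir⟩ : ∃ ir : F.A →ₐ[ℚ] C, ∀ x, ir x = t 1 x :=
    ⟨AlgHom.ofLinearMap (t 1) h1 (fun a b => (ht'' a b).symm), fun _ => rfl⟩
  have h0 : (1 : C) ∈ tgr (F := F.toCDGA) t 0 := by
    have := tm_mem (F := F.toCDGA) t (i := 0) (j := 0) B.one_mem F.one_mem
    rwa [h1] at this
  have hl0 : ∀ i (x : B.A), x ∈ B.grading i → il x ∈ tgr (F := F.toCDGA) t i := by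
    intro i x hx
    have := tm_mem (F := F.toCDGA) t (j := 0) hx F.one_mem
    rwa [← hil] at this
  have hr0 : ∀ i (v : P.V i), (ir.toLinearMap ∘ₗ (F.V i).subtype ∘ₗ (P.Vequiv i).toLinearMap) v ∈
      tgr (F := F.toCDGA) t i := by
    intro i v
    have := tm_mem (F := F.toCDGA) t (i := 0) B.one_mem (F.V_le i (P.Vequiv i v).2)
    rw [zero_add, ← hir] at this
    exact this
  have hm := tgr_mul (F := F.toCDGA) t ht
  have hc := tgr_comm (F := F.toCDGA) t ht
  generalize tgr (F := F.toCDGA) t = 𝒞 at *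
  obtain ⟨φ, ⟨hl, hr⟩, -⟩ := P.relFree C 𝒞 h0 hm hc il hl0
    (fun i => ir.toLinearMap ∘ₗ (F.V i).subtype ∘ₗ (P.Vequiv i).toLinearMap) hr0
  have h3 : φ.comp P.j = ir := by
    refine F.hom_ext _ _ fun i v hv => ?_
    rw [AlgHom.comp_apply, P.j_apply ⟨v, hv⟩, hr]
    simp
  refine ⟨φ, fun b x => ?_⟩
  have h4 : φ (P.j x) = ir x := DFunLike.congr_fun h3 x
  rw [mu_apply, map_mul, hl, h4, hil, hir, ht', mul_one]

lemma exists_theta : ∃ Θ : P.T.A →ₗ[ℚ] B.A ⊗[ℚ] F.A, ∀ b x, Θ (P.mu b x) = b ⊗ₜ x := by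
  obtain ⟨φ, h⟩ := P.exists_lift (tm (B := B) (F := F.toCDGA))
    (fun a j f hf i b hb g => tm_mul a hf hb g) rfl
  exact ⟨(GradedTensorProduct.of ℚ B.grading F.grading).symm.toLinearMap ∘ₗ φ.toLinearMap,
    fun b x => (LinearEquiv.symm_apply_eq _).2 (h b x)⟩

/-- The linear isomorphism from the total algebra to the tensor product of base and fibre. -/
noncomputable def Theta : P.T.A →ₗ[ℚ] B.A ⊗[ℚ] F.A := P.exists_theta.choose

lemma Theta_mu (b : B.A) (x : F.A) : P.Theta (P.mu b x) = b ⊗ₜ x := P.exists_theta.choose_spec b x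

/-- The operator `f ⊗ 1` on the total algebra. -/
noncomputable def op (f : B.A →ₗ[ℚ] B.A) : P.T.A →ₗ[ℚ] P.T.A :=
  TensorProduct.lift (P.mu ∘ₗ f) ∘ₗ P.Theta

@[simp] lemma op_mu (f : B.A →ₗ[ℚ] B.A) (b : B.A) (x : F.A) : P.op f (P.mu b x) = P.mu (f b) x := by
  simp [op, Theta_mu]

/-- Integration along a linear form on the base: `λ ⊗ 1`. -/
noncomputable def intg (lam : B.A →ₗ[ℚ] ℚ) : P.T.A →ₗ[ℚ] F.A :=
  TensorProduct.lift (LinearMap.lsmul ℚ F.A ∘ₗ lam) ∘ₗ P.Theta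

@[simp] lemma intg_mu (lam : B.A →ₗ[ℚ] ℚ) (b : B.A) (x : F.A) :
    P.intg lam (P.mu b x) = lam b • x := by
  simp [intg, Theta_mu]

end FibrationModel

end RHT

/-! ### Word length -/

namespace RHT

section pow

variable {A : Type*} [Ring A] [Algebra ℚ A] {G : Submodule ℚ A}

lemma top_mul_pow (hG : (⊤ : Submodule ℚ A) * G ≤ G * ⊤) (b : ℕ) :
    (⊤ : Submodule ℚ A) * G ^ b ≤ G ^ b * ⊤ := by
  induction b with
  | zero => rw [pow_zero, one_mul, mul_one]
  | succ b ih =>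
    calc (⊤ : Submodule ℚ A) * G ^ (b + 1) = (⊤ * G ^ b) * G := by rw [pow_succ, mul_assoc]
      _ ≤ (G ^ b * ⊤) * G := mul_le_mul' ih le_rfl
      _ = G ^ b * (⊤ * G) := mul_assoc _ _ _
      _ ≤ G ^ b * (G * ⊤) := mul_le_mul' le_rfl hG
      _ = G ^ (b + 1) * ⊤ := by rw [pow_succ, mul_assoc]

/-- If right multiples of `G` are left multiples, the ideals generated by the powers of `G` form a
multiplicative filtration. -/
lemma pow_top_mul (hG : (⊤ : Submodule ℚ A) * G ≤ G * ⊤) (a b : ℕ) :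
    (G ^ a * (⊤ : Submodule ℚ A)) * (G ^ b * ⊤) ≤ G ^ (a + b) * ⊤ :=
  calc (G ^ a * (⊤ : Submodule ℚ A)) * (G ^ b * ⊤) = G ^ a * (⊤ * G ^ b) * ⊤ := by
        simp only [mul_assoc]
    _ ≤ G ^ a * (G ^ b * ⊤) * ⊤ := mul_le_mul' (mul_le_mul' le_rfl (top_mul_pow hG b)) le_rfl
    _ = G ^ (a + b) * (⊤ * ⊤) := by rw [pow_add]; simp only [mul_assoc]
    _ ≤ G ^ (a + b) * ⊤ := mul_le_mul' le_rfl le_top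

lemma pow_top_succ (a : ℕ) : G ^ (a + 1) * (⊤ : Submodule ℚ A) ≤ G ^ a * ⊤ := by
  rw [pow_succ, mul_assoc]
  exact mul_le_mul' le_rfl le_top

lemma pow_top_anti {a b : ℕ} (h : a ≤ b) : G ^ b * (⊤ : Submodule ℚ A) ≤ G ^ a * ⊤ := by
  induction h with
  | refl => exact le_rfl
  | step _ ih => exact (pow_top_succ _).trans ih

end pow

namespace CDGA

/-- A span of homogeneous elements satisfies the one-sided ideal condition. -/
lemma top_mul_le (C : CDGA) {G : Submodule ℚ C.A}
    (hG : G ≤ ⨆ i, G ⊓ C.grading i) : (⊤ : Submodule ℚ C.A) * G ≤ G * ⊤ := by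
  rw [Submodule.mul_le]
  intro y _ g hg
  replace hg := hG hg
  induction hg using Submodule.iSup_induction' with
  | mem i x hx =>
    obtain ⟨y', h⟩ := C.exists_comm' hx.2 y
    rw [h]; exact Submodule.mul_mem_mul hx.1 trivial
  | zero => simp
  | add a b _ _ ha hb => rw [mul_add]; exact add_mem ha hb

end CDGA

namespace Sullivan

variable (S : Sullivan)

lemma genSpan_hom : S.genSpan ≤ ⨆ i, S.genSpan ⊓ S.grading i :=
  iSup_mono fun i => le_inf (le_iSup S.V i) (S.V_le i)

lemma lengthGE_mul (a b : ℕ) : S.lengthGE a * S.lengthGE b ≤ S.lengthGE (a + b) :=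
  pow_top_mul (S.top_mul_le S.genSpan_hom) a b

lemma mul_mem_lengthGE {a b : ℕ} {x y : S.A} (hx : x ∈ S.lengthGE a) (hy : y ∈ S.lengthGE b) :
    x * y ∈ S.lengthGE (a + b) := S.lengthGE_mul a b (Submodule.mul_mem_mul hx hy)

lemma lengthGE_zero (x : S.A) : x ∈ S.lengthGE 0 := by
  unfold lengthGE
  rw [pow_zero, one_mul]; trivial

lemma genSpan_le_lengthGE : S.genSpan ≤ S.lengthGE 1 := by
  intro x hx
  unfold lengthGE
  rw [pow_one, ← mul_one x]; exact Submodule.mul_mem_mul hx trivial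

lemma lengthGE_anti {a b : ℕ} (h : a ≤ b) : S.lengthGE b ≤ S.lengthGE a := pow_top_anti h

lemma plus_le_lengthGE : S.plus ≤ S.lengthGE 1 := by
  have key : ∀ x : S.A, x - S.aug x • (1 : S.A) ∈ S.lengthGE 1 := by
    intro x
    induction x using S.gen_ind with
    | hV i v hv =>
      rw [S.aug_V hv, zero_smul, sub_zero]
      exact S.genSpan_le_lengthGE (Submodule.mem_iSup_of_mem i hv)
    | h1 => simp
    | hsmul r x hx =>
      rw [map_smul, smul_eq_mul, mul_smul, ← smul_sub]; exact Submodule.smul_mem _ _ hx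
    | hadd x y hx hy => rw [map_add, add_smul, add_sub_add_comm]; exact add_mem hx hy
    | hmul x y hx hy =>
      have h : x * y - S.aug (x * y) • (1 : S.A)
          = (x - S.aug x • (1 : S.A)) * y + S.aug x • (y - S.aug y • (1 : S.A)) := by
        rw [map_mul, sub_mul, smul_mul_assoc, one_mul, smul_sub, smul_smul]; abel
      rw [h]
      exact add_mem (S.mul_mem_lengthGE (b := 0) hx (S.lengthGE_zero y)) (Submodule.smul_mem _ _ hy)
  intro x hx
  have := key x
  rwa [S.aug_plus hx, zero_smul, sub_zero] at this

lemma dec_le_lengthGE : S.dec ≤ S.lengthGE 2 :=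
  (mul_le_mul' S.plus_le_lengthGE S.plus_le_lengthGE).trans (S.lengthGE_mul 1 1)

open Polynomial in
lemma exists_word : ∃ φ : S.A →ₐ[ℚ] S.A[X], ∀ i, ∀ v ∈ S.V i, φ v = monomial 1 v := by
  obtain ⟨φ, h, -⟩ := S.free S.A[X]
    (fun i => { carrier := {p | ∀ n, p.coeff n ∈ S.grading i}
                add_mem' := fun hp hq n => by rw [coeff_add]; exact add_mem (hp n) (hq n)
                zero_mem' := fun n => by rw [coeff_zero]; exact zero_mem _
                smul_mem' := fun r p hp n => by
                  rw [coeff_smul]; exact Submodule.smul_mem _ _ (hp n) })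
    (fun n => by
      rw [coeff_one]; split_ifs
      · exact S.one_mem
      · exact zero_mem _)
    (fun i j x y hx hy n => by
      rw [coeff_mul]; exact sum_mem fun p _ => S.mul_mem (hx _) (hy _))
    (fun i j x y hx hy => by
      ext n
      rw [coeff_smul, coeff_mul, coeff_mul, Finset.smul_sum,
        ← Finset.Nat.sum_antidiagonal_swap (n := n) (f := fun p => ((-1 : ℚ) ^ (i * j)) •
          (y.coeff p.1 * x.coeff p.2))]
      exact Finset.sum_congr rfl fun p _ => S.gcomm (hx _) (hy _))
    (fun i => { toFun := fun v => monomial 1 (v : S.A)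
                map_add' := fun v w => by simp
                map_smul' := fun r v => by
                  rw [SetLike.val_smul, ← smul_monomial]; rfl })
    (fun i v n => by
      rw [LinearMap.coe_mk, AddHom.coe_mk, coeff_monomial]; split_ifs
      · exact S.V_le i v.2
      · exact zero_mem _)
  exact ⟨φ, fun i v hv => h i ⟨v, hv⟩⟩

/-- The word-length components of an element. -/
lemma exists_lenPr : ∃ L : ℕ → S.A →ₗ[ℚ] S.A, (∀ a, ∀ x ∈ S.genSpan ^ a, L a x = x) ∧
    ∀ a b, a ≠ b → ∀ x ∈ S.genSpan ^ b, L a x = 0 := by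
  obtain ⟨φ, h⟩ := S.exists_word
  have h1 : ∀ x ∈ S.genSpan, φ x = Polynomial.monomial 1 x := by
    intro x hx
    induction hx using Submodule.iSup_induction' with
    | mem i x hx => exact h i x hx
    | zero => simp
    | add a b _ _ ha hb => rw [map_add, map_add, ha, hb]
  have h2 : ∀ a, ∀ x ∈ S.genSpan ^ a, φ x = Polynomial.monomial a x := by
    intro a
    induction a with
    | zero =>
      intro x hx
      rw [pow_zero, Submodule.mem_one] at hx
      obtain ⟨r, rfl⟩ := hx
      rw [Algebra.algebraMap_eq_smul_one, map_smul, map_one, ← Polynomial.smul_monomial]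
      rfl
    | succ a ih =>
      intro x hx
      rw [pow_succ] at hx
      induction hx using Submodule.mul_induction_on' with
      | mem_mul_mem x hx y hy =>
        rw [map_mul, ih x hx, h1 y hy, Polynomial.monomial_mul_monomial]
      | add a _ b _ ha hb => rw [map_add, map_add, ha, hb]
  refine ⟨fun a => { toFun := fun x => (φ x).coeff a
                     map_add' := fun x y => by rw [map_add, Polynomial.coeff_add]
                     map_smul' := fun r x => by rw [map_smul, Polynomial.coeff_smul]; rfl },
    fun a x hx => ?_, fun a b hab x hx => ?_⟩
  · rw [LinearMap.coe_mk, AddHom.coe_mk, h2 a x hx, Polynomial.coeff_monomial, if_pos rfl]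
  · rw [LinearMap.coe_mk, AddHom.coe_mk, h2 b x hx, Polynomial.coeff_monomial, if_neg hab.symm]

end Sullivan

end RHT

/-! ### A contracting homotopy of the base compatible with all the gradings -/

namespace RHT

/-- The component projections of an internal direct sum. -/
lemma exists_proj_of_internal {A ι : Type*} [DecidableEq ι] [AddCommGroup A] [Module ℚ A]
    (𝒢 : ι → Submodule ℚ A) (h : DirectSum.IsInternal 𝒢) :
    ∃ L : ι → A →ₗ[ℚ] A, (∀ k, ∀ x ∈ 𝒢 k, L k x = x) ∧ ∀ k l, k ≠ l → ∀ x ∈ 𝒢 l, L k x = 0 := by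
  let e := LinearEquiv.ofBijective (DirectSum.coeLinearMap 𝒢) h
  have he : ∀ k (x : 𝒢 k), e.symm (x : A) = DirectSum.lof ℚ ι (fun k => 𝒢 k) k x := by
    intro k x
    rw [LinearEquiv.symm_apply_eq]
    exact (DirectSum.coeLinearMap_lof 𝒢 k x).symm
  refine ⟨fun k => (𝒢 k).subtype ∘ₗ DirectSum.component ℚ ι (fun k => 𝒢 k) k ∘ₗ e.symm.toLinearMap,
    fun k x hx => ?_, fun k l hkl x hx => ?_⟩
  · have := he k ⟨x, hx⟩
    simp only [LinearMap.comp_apply, LinearEquiv.coe_coe]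
    rw [this, DirectSum.component.lof_self]; rfl
  · have := he l ⟨x, hx⟩
    simp only [LinearMap.comp_apply, LinearEquiv.coe_coe]
    rw [this, DirectSum.component.of, dif_neg hkl.symm, map_zero]

/-- A differential which shifts a grading injectively has a section over its image which shifts the
grading back. -/
lemma exists_section {A ι : Type*} [DecidableEq ι] [AddCommGroup A] [Module ℚ A]
    (𝒢 : ι → Submodule ℚ A) (π : ι → A →ₗ[ℚ] A) (hπ : ∀ g, ∀ x ∈ 𝒢 g, π g x = x)
    (hπ' : ∀ g g', g ≠ g' → ∀ x ∈ 𝒢 g', π g x = 0) (htop : ⨆ g, 𝒢 g = ⊤) (d : A →ₗ[ℚ] A)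
    (s : ι → ι) (hs : Function.Injective s) (hd : ∀ g, ∀ x ∈ 𝒢 g, d x ∈ 𝒢 (s g)) :
    ∃ h : A →ₗ[ℚ] A, (∀ g, ∀ x ∈ 𝒢 (s g), h x ∈ 𝒢 g) ∧
      (∀ g, g ∉ Set.range s → ∀ x ∈ 𝒢 g, h x = 0) ∧ ∀ y, d (h (d y)) = d y := by
  classical
  have hind : ∀ (p : A → Prop), (∀ g, ∀ x ∈ 𝒢 g, p x) → p 0 → (∀ x y, p x → p y → p (x + y)) →
      ∀ x, p x := by
    intro p h1 h2 h3 x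
    have hx : x ∈ ⨆ g, 𝒢 g := by rw [htop]; trivial
    induction hx using Submodule.iSup_induction' with
    | mem g x hx => exact h1 g x hx
    | zero => exact h2
    | add a b _ _ ha hb => exact h3 _ _ ha hb
  have hmem : ∀ g x, π g x ∈ 𝒢 g := by
    intro g x
    refine hind (fun x => π g x ∈ 𝒢 g) (fun g' x hx => ?_) (by simp) (fun x y hx hy => by
      rw [map_add]; exact add_mem hx hy) x
    by_cases h : g = g'
    · subst h; rw [hπ g x hx]; exact hx
    · rw [hπ' g g' h x hx]; exact zero_mem _
  have hinternal : DirectSum.IsInternal 𝒢 := by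
    constructor
    · intro x y hxy
      have key : ∀ g (z : DirectSum ι fun g => 𝒢 g), π g (DirectSum.coeLinearMap 𝒢 z) = z g := by
        intro g z
        induction z using DirectSum.induction_on with
        | zero => simp
        | of g' z =>
          have : DirectSum.coeLinearMap 𝒢 (DirectSum.of (fun g => 𝒢 g) g' z) = z :=
            DirectSum.coeLinearMap_lof 𝒢 g' z
          rw [this]
          by_cases h : g = g'
          · subst h; rw [hπ g z z.2, DirectSum.of_eq_same]
          · rw [hπ' g g' h z z.2, DirectSum.of_eq_of_ne _ _ _ h]; rfl
        | add a b ha hb => rw [map_add, map_add, ha, hb]; rfl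
      refine DFinsupp.ext fun g => Subtype.ext ?_
      rw [← key g x, ← key g y]
      exact congrArg (π g) hxy
    · intro x
      have hx : x ∈ LinearMap.range (DirectSum.coeLinearMap 𝒢) := by
        rw [DirectSum.range_coeLinearMap, htop]; trivial
      exact hx
  have hdπ : ∀ g x, d (π g x) = π (s g) (d x) := by
    intro g x
    refine hind (fun x => d (π g x) = π (s g) (d x)) (fun g' x hx => ?_) (by simp)
      (fun x y hx hy => by simp only [map_add, hx, hy]) x
    by_cases h : g = g'
    · subst h; rw [hπ g x hx, hπ _ _ (hd g x hx)]
    · rw [hπ' g g' h x hx, hπ' _ _ (fun h' => h (hs h')) _ (hd g' x hx), map_zero]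
  obtain ⟨r, hr⟩ := LinearMap.exists_rightInverse_of_surjective (LinearMap.rangeRestrict d)
    (LinearMap.range_eq_top.2 (LinearMap.surjective_rangeRestrict d))
  obtain ⟨q, hq⟩ := LinearMap.exists_leftInverse_of_injective (LinearMap.range d).subtype
    (Submodule.ker_subtype _)
  let h0 : A →ₗ[ℚ] A := r ∘ₗ q
  have hh0 : ∀ y, d (h0 (d y)) = d y := by
    intro y
    have h1 : q (d y) = ⟨d y, y, rfl⟩ := LinearMap.congr_fun hq ⟨d y, y, rfl⟩
    have h2 := congrArg Subtype.val (LinearMap.congr_fun hr ⟨d y, y, rfl⟩)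
    rw [LinearMap.comp_apply, h1]; exact h2
  let e := LinearEquiv.ofBijective (DirectSum.coeLinearMap 𝒢) hinternal
  have he : ∀ k (x : 𝒢 k), e.symm (x : A) = DirectSum.lof ℚ ι (fun k => 𝒢 k) k x := by
    intro k x
    rw [LinearEquiv.symm_apply_eq]
    exact (DirectSum.coeLinearMap_lof 𝒢 k x).symm
  let c : (g : ι) → A →ₗ[ℚ] A := fun g =>
    if H : ∃ g', s g' = g then π H.choose ∘ₗ h0 else 0
  let h : A →ₗ[ℚ] A := DirectSum.toModule ℚ ι A (fun g => c g ∘ₗ (𝒢 g).subtype) ∘ₗ e.symm.toLinearMap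
  have hh : ∀ g, ∀ x ∈ 𝒢 g, h x = c g x := by
    intro g x hx
    have := he g ⟨x, hx⟩
    simp only [h, LinearMap.comp_apply, LinearEquiv.coe_coe]
    rw [this, DirectSum.toModule_lof]; rfl
  have hcs : ∀ g, c (s g) = π g ∘ₗ h0 := by
    intro g
    have H : ∃ g', s g' = s g := ⟨g, rfl⟩
    simp only [c]
    rw [dif_pos H, hs H.choose_spec]
  refine ⟨h, fun g x hx => ?_, fun g hg x hx => ?_, fun y => ?_⟩
  · rw [hh _ x hx, hcs]; exact hmem g _
  · rw [hh _ x hx]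
    simp only [c]
    rw [dif_neg (show ¬ ∃ g', s g' = g from hg), LinearMap.zero_apply]
  · refine hind (fun y => d (h (d y)) = d y) (fun g y hy => ?_) (by simp)
      (fun x y hx hy => by simp only [map_add, hx, hy]) y
    have hdy := hd g y hy
    rw [hh _ _ hdy, hcs, LinearMap.comp_apply, hdπ, hh0, hπ _ _ hdy]

namespace BigradedSullivan

variable (S : BigradedSullivan)

lemma exists_lowPr : ∃ L : ℕ → S.A →ₗ[ℚ] S.A, (∀ k, ∀ x ∈ S.low k, L k x = x) ∧
    ∀ k l, k ≠ l → ∀ x ∈ S.low l, L k x = 0 :=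
  exists_proj_of_internal _ S.low_internal

/-- The component of given lower degree. -/
noncomputable def lowPr : ℕ → S.A →ₗ[ℚ] S.A := S.exists_lowPr.choose

lemma lowPr_of_mem {k : ℕ} {x : S.A} (hx : x ∈ S.low k) : S.lowPr k x = x :=
  S.exists_lowPr.choose_spec.1 k x hx

lemma lowPr_of_ne {k l : ℕ} (h : k ≠ l) {x : S.A} (hx : x ∈ S.low l) : S.lowPr k x = 0 :=
  S.exists_lowPr.choose_spec.2 k l h x hx

/-- The component of given degree, lower degree and word length. -/
def tri (q k a : ℕ) : Submodule ℚ S.A := S.grading q ⊓ S.low k ⊓ S.genSpan ^ a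

lemma iSup_tri : ⨆ g : ℕ × ℕ × ℕ, S.tri g.1 g.2.1 g.2.2 = ⊤ := by
  refine iSup_eq_top_of_gen (ι := ℕ × ℕ × ℕ) _ ?_ ?_ _ S.generates ?_
  · exact ⟨⟨S.one_mem, S.low_one⟩, by simp only [Prod.snd_zero, pow_zero]; exact Submodule.one_le.1 le_rfl⟩
  · rintro ⟨q, k, a⟩ ⟨q', k', a'⟩ x y ⟨⟨h1, h2⟩, h3⟩ ⟨⟨h1', h2'⟩, h3'⟩
    refine ⟨⟨S.mul_mem h1 h1', S.low_mul _ _ _ _ h2 h2'⟩, ?_⟩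
    simp only [Prod.mk_add_mk, pow_add]
    exact Submodule.mul_mem_mul h3 h3'
  · rintro x hx
    obtain ⟨i, hi⟩ := Set.mem_iUnion.1 hx
    replace hi : x ∈ ⨆ k, (S.V i ⊓ S.low k) := by rw [← S.V_low i]; exact hi
    clear hx
    induction hi using Submodule.iSup_induction' with
    | mem k x hx =>
      refine Submodule.mem_iSup_of_mem (i, k, 1) ⟨⟨S.V_le i hx.1, hx.2⟩, ?_⟩
      rw [pow_one]
      exact Submodule.mem_iSup_of_mem i hx.1
    | zero => exact zero_mem _
    | add a b _ _ ha hb => exact add_mem ha hb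

lemma tri_ind {p : S.A → Prop} (h : ∀ q k a, ∀ x ∈ S.tri q k a, p x) (h0 : p 0)
    (hadd : ∀ x y, p x → p y → p (x + y)) (x : S.A) : p x := by
  have hx : x ∈ ⨆ g : ℕ × ℕ × ℕ, S.tri g.1 g.2.1 g.2.2 := by rw [S.iSup_tri]; trivial
  induction hx using Submodule.iSup_induction' with
  | mem g x hx => exact h _ _ _ x hx
  | zero => exact h0
  | add a b _ _ ha hb => exact hadd _ _ ha hb

/-- To control a linear map on one lower degree it suffices to look at trihomogeneous elements. -/
lemma low_ind (f : S.A →ₗ[ℚ] S.A) (Q : Submodule ℚ S.A) (k : ℕ)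
    (h : ∀ q a, ∀ x ∈ S.tri q k a, f x ∈ Q) {x : S.A} (hx : x ∈ S.low k) : f x ∈ Q := by
  have key : ∀ x, f (S.lowPr k x) ∈ Q := by
    intro x
    induction x using S.tri_ind with
    | h q l a x hx =>
      by_cases hkl : k = l
      · subst hkl; rw [S.lowPr_of_mem hx.1.2]; exact h q a x hx
      · rw [S.lowPr_of_ne hkl hx.1.2, map_zero]; exact zero_mem _
    | h0 => simp
    | hadd x y hx hy => rw [map_add, map_add]; exact add_mem hx hy
  have := key x
  rwa [S.lowPr_of_mem hx] at this

lemma grading_ind (f : S.A →ₗ[ℚ] S.A) (Q : Submodule ℚ S.A) (q : ℕ)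
    (h : ∀ k a, ∀ x ∈ S.tri q k a, f x ∈ Q) {x : S.A} (hx : x ∈ S.grading q) : f x ∈ Q := by
  have key : ∀ x, f (S.pr q x) ∈ Q := by
    intro x
    induction x using S.tri_ind with
    | h q' l a x hx =>
      by_cases hkl : q = q'
      · subst hkl; rw [S.pr_of_mem hx.1.1]; exact h l a x hx
      · rw [S.pr_of_ne hkl hx.1.1, map_zero]; exact zero_mem _
    | h0 => simp
    | hadd x y hx hy => rw [map_add, map_add]; exact add_mem hx hy
  have := key x
  rwa [S.pr_of_mem hx] at this

lemma lengthGE_ind (f : S.A →ₗ[ℚ] S.A) (Q : Submodule ℚ S.A) (a : ℕ)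
    (h : ∀ q k b, a ≤ b → ∀ x ∈ S.tri q k b, f x ∈ Q) {x : S.A} (hx : x ∈ S.lengthGE a) :
    f x ∈ Q := by
  obtain ⟨L, hL, hL'⟩ := S.exists_lenPr
  have key : ∀ b, a ≤ b → ∀ x, f (L b x) ∈ Q := by
    intro b hab x
    induction x using S.tri_ind with
    | h q k c x hx =>
      by_cases hbc : b = c
      · subst hbc; rw [hL b x hx.2]; exact h q k b hab x hx
      · rw [hL' b c hbc x hx.2, map_zero]; exact zero_mem _
    | h0 => simp
    | hadd x y hx hy => rw [map_add, map_add]; exact add_mem hx hy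
  unfold Sullivan.lengthGE at hx
  induction hx using Submodule.mul_induction_on' with
  | mem_mul_mem y hy z _ =>
    induction z using S.tri_ind with
    | h q k c z hz =>
      have : y * z ∈ S.genSpan ^ (a + c) := by
        rw [pow_add]; exact Submodule.mul_mem_mul hy hz.2
      rw [← hL _ _ this]
      exact key _ (Nat.le_add_right _ _) _
    | h0 => simp
    | hadd z z' hz hz' => rw [mul_add, map_add]; exact add_mem (hz trivial) (hz' trivial)
  | add x _ y _ hx hy => rw [map_add]; exact add_mem hx hy

lemma tau_low {k : ℕ} {x : S.A} (hx : x ∈ S.low k) : S.tau x ∈ S.low k := by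
  refine S.low_ind S.tau.toLinearMap (S.low k) k (fun q a x hx => ?_) hx
  rw [AlgHom.toLinearMap_apply, S.tau_of_mem hx.1.1]
  exact Submodule.smul_mem _ _ hx.1.2

lemma tau_genSpan {x : S.A} (hx : x ∈ S.genSpan) : S.tau x ∈ S.genSpan := by
  induction hx using Submodule.iSup_induction' with
  | mem i x hx =>
    rw [S.tau_of_mem (S.V_le i hx)]
    exact Submodule.mem_iSup_of_mem i (Submodule.smul_mem _ _ hx)
  | zero => simp
  | add a b _ _ ha hb => rw [map_add]; exact add_mem ha hb

variable (hquad : ∀ x ∈ S.genSpan, S.d x ∈ S.genSpan * S.genSpan)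

include hquad

lemma d_pow (a : ℕ) {x : S.A} (hx : x ∈ S.genSpan ^ a) : S.d x ∈ S.genSpan ^ (a + 1) := by
  induction a generalizing x with
  | zero =>
    rw [pow_zero, Submodule.mem_one] at hx
    obtain ⟨r, rfl⟩ := hx
    rw [Algebra.algebraMap_eq_smul_one, map_smul, S.d_one, smul_zero]; exact zero_mem _
  | succ a ih =>
    rw [pow_succ'] at hx
    induction hx using Submodule.mul_induction_on' with
    | mem_mul_mem x hx y hy =>
      rw [S.d_mul]
      refine add_mem ?_ ?_
      · rw [show a + 1 + 1 = 2 + a by ring, pow_add, pow_two]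
        exact Submodule.mul_mem_mul (hquad x hx) hy
      · rw [pow_succ']
        exact Submodule.mul_mem_mul (S.tau_genSpan hx) (ih hy)
    | add x _ y _ hx hy => rw [map_add]; exact add_mem hx hy

/-- A homotopy `h` with `d h = id` on coboundaries, which lowers the degree and the word length by
one and raises the lower degree by one. -/
lemma exists_h : ∃ h : S.A →ₗ[ℚ] S.A, (∀ k, ∀ x ∈ S.low k, h x ∈ S.low (k + 1)) ∧
    (∀ q, ∀ x ∈ S.grading (q + 1), h x ∈ S.grading q) ∧
    (∀ a, ∀ x ∈ S.lengthGE (a + 1), h x ∈ S.lengthGE a) ∧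
    (∀ x ∈ S.grading 0, h x = 0) ∧ ∀ y, S.d (h (S.d y)) = S.d y := by
  obtain ⟨L, hL, hL'⟩ := S.exists_lenPr
  -- Negative lower degrees are allowed so that the shift of degrees is everywhere defined.
  let lowZ : ℤ → Submodule ℚ S.A := fun k => if 0 ≤ k then S.low k.toNat else ⊥
  have hlowZ : ∀ k : ℕ, lowZ k = S.low k := fun k => by simp [lowZ]
  let P : ℤ → S.A →ₗ[ℚ] S.A := fun k => if 0 ≤ k then S.lowPr k.toNat else 0
  have hP : ∀ k, ∀ x ∈ lowZ k, P k x = x := by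
    intro k x hx
    by_cases hk : 0 ≤ k
    · simp only [lowZ, P, if_pos hk] at hx ⊢; exact S.lowPr_of_mem hx
    · simp only [lowZ, P, if_neg hk, Submodule.mem_bot] at hx ⊢; rw [hx, map_zero]
  have hP' : ∀ k l, k ≠ l → ∀ x ∈ lowZ l, P k x = 0 := by
    intro k l hkl x hx
    by_cases hl : 0 ≤ l
    · by_cases hk : 0 ≤ k
      · simp only [lowZ, P, if_pos hk, if_pos hl] at hx ⊢
        exact S.lowPr_of_ne (by omega) hx
      · simp only [P, if_neg hk, LinearMap.zero_apply]
    · simp only [lowZ, if_neg hl, Submodule.mem_bot] at hx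
      rw [hx, map_zero]
  let 𝒢 : ℕ × ℤ × ℕ → Submodule ℚ S.A := fun g =>
    S.grading g.1 ⊓ lowZ g.2.1 ⊓ S.genSpan ^ g.2.2
  have htri : ∀ q k a : ℕ, S.tri q k a = 𝒢 (q, (k : ℤ), a) := fun q k a => by
    simp only [𝒢, tri, hlowZ]
  have htop : ⨆ g, 𝒢 g = ⊤ := by
    rw [eq_top_iff, ← S.iSup_tri]
    refine iSup_le fun g => ?_
    rw [htri]
    exact le_iSup 𝒢 _
  obtain ⟨h, h1, h2, h3⟩ := exists_section 𝒢 (fun g => S.pr g.1 ∘ₗ P g.2.1 ∘ₗ L g.2.2)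
    (by
      rintro ⟨q, k, a⟩ x ⟨⟨hx1, hx2⟩, hx3⟩
      simp only [LinearMap.comp_apply] at *
      rw [hL a x hx3, hP k x hx2, S.pr_of_mem hx1])
    (by
      rintro ⟨q, k, a⟩ ⟨q', k', a'⟩ hne x ⟨⟨hx1, hx2⟩, hx3⟩
      simp only [LinearMap.comp_apply] at *
      by_cases ha : a = a'
      · subst ha
        rw [hL a x hx3]
        by_cases hk : k = k'
        · subst hk
          rw [hP k x hx2]
          exact S.pr_of_ne (fun h => hne (by rw [h])) hx1
        · rw [hP' k k' hk x hx2, map_zero]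
      · rw [hL' a a' ha x hx3, map_zero, map_zero])
    htop S.d (fun g => (g.1 + 1, g.2.1 - 1, g.2.2 + 1))
    (by
      rintro ⟨q, k, a⟩ ⟨q', k', a'⟩ he
      simp only [Prod.mk.injEq] at he ⊢
      omega)
    (by
      rintro ⟨q, k, a⟩ x ⟨⟨hx1, hx2⟩, hx3⟩
      refine ⟨⟨S.d_mem hx1, ?_⟩, S.d_pow hquad a hx3⟩
      change S.d x ∈ lowZ (k - 1)
      change x ∈ lowZ k at hx2
      rcases lt_trichotomy k 0 with hk | hk | hk
      · simp only [lowZ, if_neg (not_le.2 hk), Submodule.mem_bot] at hx2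
        rw [hx2, map_zero]; exact zero_mem _
      · subst hk
        simp only [lowZ, le_refl, if_true] at hx2
        rw [S.d_low_zero x hx2]; exact zero_mem _
      · obtain ⟨n, rfl⟩ := Int.eq_succ_of_zero_lt hk
        rw [show ((n : ℕ) : ℤ) + 1 - 1 = (n : ℕ) by ring, hlowZ]
        rw [show ((n : ℕ) : ℤ) + 1 = (n + 1 : ℕ) by push_cast; ring, hlowZ] at hx2
        exact S.d_low n x hx2)
  have key : ∀ q k a, ∀ x ∈ S.tri (q + 1) k (a + 1), h x ∈ S.tri q (k + 1) a := by
    intro q k a x hx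
    rw [htri]
    refine h1 (q, ((k + 1 : ℕ) : ℤ), a) x ?_
    rw [htri] at hx
    have e : (((k + 1 : ℕ) : ℤ)) - 1 = (k : ℕ) := by push_cast; ring
    simp only [e]
    exact hx
  have key0 : ∀ q k a, (q = 0 ∨ a = 0) → ∀ x ∈ S.tri q k a, h x = 0 := by
    intro q k a hqa x hx
    rw [htri] at hx
    refine h2 _ ?_ x hx
    rintro ⟨⟨q', k', a'⟩, he⟩
    simp only [Prod.mk.injEq] at he
    omega
  refine ⟨h, fun k x hx => ?_, fun q x hx => ?_, fun a x hx => ?_, fun x hx => ?_, h3⟩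
  · refine S.low_ind h _ k (fun q a x hx => ?_) hx
    rcases Nat.eq_zero_or_pos q with hq | hq
    · rw [key0 q k a (.inl hq) x hx]; exact zero_mem _
    rcases Nat.eq_zero_or_pos a with ha | ha
    · rw [key0 q k a (.inr ha) x hx]; exact zero_mem _
    obtain ⟨q, rfl⟩ := Nat.exists_eq_succ_of_ne_zero hq.ne'
    obtain ⟨a, rfl⟩ := Nat.exists_eq_succ_of_ne_zero ha.ne'
    exact (key q k a x hx).1.2
  · refine S.grading_ind h _ (q + 1) (fun k a x hx => ?_) hx
    rcases Nat.eq_zero_or_pos a with ha | ha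
    · rw [key0 (q + 1) k a (.inr ha) x hx]; exact zero_mem _
    obtain ⟨a, rfl⟩ := Nat.exists_eq_succ_of_ne_zero ha.ne'
    exact (key q k a x hx).1.1
  · refine S.lengthGE_ind h _ (a + 1) (fun q k b hab x hx => ?_) hx
    rcases Nat.eq_zero_or_pos q with hq | hq
    · rw [key0 q k b (.inl hq) x hx]; exact zero_mem _
    obtain ⟨q, rfl⟩ := Nat.exists_eq_succ_of_ne_zero hq.ne'
    obtain ⟨b, rfl⟩ := Nat.exists_eq_succ_of_ne_zero (n := b) (by omega)
    have := (key q k b x hx).2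
    refine S.lengthGE_anti (show a ≤ b by omega) ?_
    rw [← mul_one (h x)]
    exact Submodule.mul_mem_mul this trivial
  · have := S.grading_ind h ⊥ 0 (fun k a x hx => by
      rw [key0 0 k a (.inl rfl) x hx]; exact zero_mem _) hx
    exact this

end BigradedSullivan

end RHT

/-! ### The minimal model of a wedge of odd spheres -/

namespace RHT

lemma exists_factor {V W U : Type*} [AddCommGroup V] [AddCommGroup W] [AddCommGroup U] [Module ℚ V]
    [Module ℚ W] [Module ℚ U] (f : V →ₗ[ℚ] W) (g : V →ₗ[ℚ] U) (h : ∀ v, f v = 0 → g v = 0) :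
    ∃ ψ : W →ₗ[ℚ] U, ∀ v, ψ (f v) = g v := by
  obtain ⟨r, hr⟩ := LinearMap.exists_rightInverse_of_surjective (LinearMap.rangeRestrict f)
    (LinearMap.range_eq_top.2 (LinearMap.surjective_rangeRestrict f))
  obtain ⟨q, hq⟩ := LinearMap.exists_leftInverse_of_injective (LinearMap.range f).subtype
    (Submodule.ker_subtype _)
  refine ⟨g ∘ₗ r ∘ₗ q, fun v => ?_⟩
  have h1 : q (f v) = ⟨f v, v, rfl⟩ := LinearMap.congr_fun hq ⟨f v, v, rfl⟩
  have h2 : f (r ⟨f v, v, rfl⟩) = f v :=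
    congrArg Subtype.val (LinearMap.congr_fun hr ⟨f v, v, rfl⟩)
  rw [LinearMap.comp_apply, LinearMap.comp_apply, h1, ← sub_eq_zero, ← map_sub]
  exact h _ (by rw [map_sub, h2, sub_self])

namespace Sullivan

variable (S : Sullivan)

lemma plus_le : S.plus ≤ S.genSpan ⊔ S.dec := by
  have key : ∀ x : S.A, x - S.aug x • (1 : S.A) ∈ S.genSpan ⊔ S.dec := by
    intro x
    induction x using S.gen_ind with
    | hV i v hv =>
      rw [S.aug_V hv, zero_smul, sub_zero]
      exact Submodule.mem_sup_left (Submodule.mem_iSup_of_mem i hv)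
    | h1 => simp
    | hsmul r x hx =>
      rw [map_smul, smul_eq_mul, mul_smul, ← smul_sub]; exact Submodule.smul_mem _ _ hx
    | hadd x y hx hy => rw [map_add, add_smul, add_sub_add_comm]; exact add_mem hx hy
    | hmul x y hx hy =>
      have h : x * y - S.aug (x * y) • (1 : S.A)
          = (x - S.aug x • (1 : S.A)) * (y - S.aug y • (1 : S.A))
            + S.aug y • (x - S.aug x • (1 : S.A)) + S.aug x • (y - S.aug y • (1 : S.A)) := by
        rw [map_mul, sub_mul, mul_sub, mul_sub, smul_mul_assoc, smul_mul_assoc, one_mul, one_mul,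
          mul_smul_comm, mul_one, smul_sub, smul_sub, smul_smul, smul_smul, mul_comm (S.aug y)]
        abel
      rw [h]
      refine add_mem (add_mem (Submodule.mem_sup_right ?_) (Submodule.smul_mem _ _ hx))
        (Submodule.smul_mem _ _ hy)
      exact Submodule.mul_mem_mul (S.sub_aug_mem x) (S.sub_aug_mem y)
  intro x hx
  have := key x
  rwa [S.aug_plus hx, zero_smul, sub_zero] at this

lemma pr_genSpan (i : ℕ) {x : S.A} (hx : x ∈ S.genSpan) : S.pr i x ∈ S.V i := by
  induction hx using Submodule.iSup_induction' with
  | mem j x hx =>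
    by_cases h : i = j
    · subst h; rw [S.pr_of_mem (S.V_le i hx)]; exact hx
    · rw [S.pr_of_ne h (S.V_le j hx)]; exact zero_mem _
  | zero => simp
  | add a b _ _ ha hb => rw [map_add]; exact add_mem ha hb

/-- Modulo decomposables, an element of positive degree is a generator. -/
lemma exists_gen {i : ℕ} (hi : 0 < i) {x : S.A} (hx : x ∈ S.grading i) :
    ∃ v ∈ S.V i, x - v ∈ S.dec := by
  obtain ⟨g, hg, e, he, h⟩ := Submodule.mem_sup.1 (S.plus_le (S.mem_plus hi hx))
  refine ⟨S.pr i g, S.pr_genSpan i hg, ?_⟩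
  rw [← S.pr_of_mem hx, ← h, map_add, add_sub_cancel_left]
  exact S.pr_dec he i

variable {S} in
lemma exists_lam' {i : ℕ} {v : S.A} (hv : v ∈ S.V i) (hv0 : v ≠ 0) :
    ∃ lam : S.A →ₗ[ℚ] ℚ, lam v = 1 ∧ (∀ j ≠ i, ∀ x ∈ S.grading j, lam x = 0) ∧
      (∀ x ∈ S.dec, lam x = 0) ∧ lam 1 = 0 := by
  obtain ⟨ℓ, hℓ⟩ : ∃ ℓ : S.V i →ₗ[ℚ] ℚ, ℓ ⟨v, hv⟩ ≠ 0 := by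
    by_contra! h
    exact hv0 (congrArg Subtype.val ((Module.forall_dual_apply_eq_zero_iff ℚ (⟨v, hv⟩ : S.V i)).1 h))
  obtain ⟨lam, h1, h2, h3, h4⟩ := S.exists_indec i ℓ
  refine ⟨(ℓ ⟨v, hv⟩)⁻¹ • lam, ?_, fun j hj x hx => by simp [h2 j hj x hx],
    fun x hx => by simp [h3 x hx], by simp [h4]⟩
  have := h1 ⟨v, hv⟩
  simp only [LinearMap.smul_apply, smul_eq_mul]
  rw [this]; exact inv_mul_cancel₀ hℓ

lemma lam_pr {m : ℕ} {lam : S.A →ₗ[ℚ] ℚ} (h : ∀ j ≠ m, ∀ x ∈ S.grading j, lam x = 0) (x : S.A) :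
    lam (S.pr m x) = lam x := by
  induction x using S.hom_ind with
  | h i x hx =>
    by_cases hi : m = i
    · subst hi; rw [S.pr_of_mem hx]
    · rw [S.pr_of_ne hi hx, map_zero, h i (Ne.symm hi) x hx]
  | h0 => simp
  | hadd x y hx hy => simp only [map_add, hx, hy]

lemma eq_zero_of_ge {M j : ℕ} (h : j < M) {x : S.A} (hx : x ∈ S.ge M) (hj : x ∈ S.grading j) :
    x = 0 := by
  have : S.pr j x = 0 := by
    clear hj
    induction hx using ge_induct with
    | h i hi x hx => exact S.pr_of_ne (by omega) hx
    | h0 => simp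
    | hadd x y _ _ hx hy => rw [map_add, hx, hy, add_zero]
  rwa [S.pr_of_mem hj] at this

section lowest

variable {m : ℕ} (hlowest : ∀ j, j < m → S.V j = ⊥)

include hlowest

lemma plus_le_ge : S.plus ≤ S.ge m := by
  have key : ∀ x : S.A, x - S.aug x • (1 : S.A) ∈ S.ge m := by
    intro x
    induction x using S.gen_ind with
    | hV i v hv =>
      rw [S.aug_V hv, zero_smul, sub_zero]
      rcases lt_or_ge i m with h | h
      · rw [hlowest i h] at hv
        rw [(Submodule.mem_bot ℚ).1 hv]; exact zero_mem _
      · exact S.mem_ge h (S.V_le i hv)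
    | h1 => simp
    | hsmul r x hx =>
      rw [map_smul, smul_eq_mul, mul_smul, ← smul_sub]; exact Submodule.smul_mem _ _ hx
    | hadd x y hx hy => rw [map_add, add_smul, add_sub_add_comm]; exact add_mem hx hy
    | hmul x y hx hy =>
      have h : x * y - S.aug (x * y) • (1 : S.A)
          = (x - S.aug x • (1 : S.A)) * y + S.aug x • (y - S.aug y • (1 : S.A)) := by
        rw [map_mul, sub_mul, smul_mul_assoc, one_mul, smul_sub, smul_smul]; abel
      rw [h]
      exact add_mem (S.ge_mul hx y) (Submodule.smul_mem _ _ hy)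
  intro x hx
  have := key x
  rwa [S.aug_plus hx, zero_smul, sub_zero] at this

lemma dec_eq_zero {j : ℕ} (h : j < m + m) {x : S.A} (hx : x ∈ S.dec) (hj : x ∈ S.grading j) :
    x = 0 :=
  S.eq_zero_of_ge h (S.ge_mul_ge m m
    ((mul_le_mul' (S.plus_le_ge hlowest) (S.plus_le_ge hlowest)) hx)) hj

end lowest

end Sullivan

namespace BigradedSullivan

variable (S : BigradedSullivan)

lemma lowPr_mem (k : ℕ) (x : S.A) : S.lowPr k x ∈ S.low k := by
  induction x using S.tri_ind with
  | h q l a x hx =>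
    by_cases h : k = l
    · subst h; rw [S.lowPr_of_mem hx.1.2]; exact hx.1.2
    · rw [S.lowPr_of_ne h hx.1.2]; exact zero_mem _
  | h0 => simp
  | hadd x y hx hy => rw [map_add]; exact add_mem hx hy

lemma lowPr_grading (k : ℕ) {q : ℕ} {x : S.A} (hx : x ∈ S.grading q) :
    S.lowPr k x ∈ S.grading q := by
  refine S.grading_ind (S.lowPr k) _ q (fun l a x hx => ?_) hx
  by_cases h : k = l
  · subst h; rw [S.lowPr_of_mem hx.1.2]; exact hx.1.1
  · rw [S.lowPr_of_ne h hx.1.2]; exact zero_mem _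

lemma pr_low (q : ℕ) {k : ℕ} {x : S.A} (hx : x ∈ S.low k) : S.pr q x ∈ S.low k := by
  refine S.low_ind (S.pr q) _ k (fun l a x hx => ?_) hx
  by_cases h : q = l
  · subst h; rw [S.pr_of_mem hx.1.1]; exact hx.1.2
  · rw [S.pr_of_ne h hx.1.1]; exact zero_mem _

lemma lowPr_lengthGE (k : ℕ) {a : ℕ} {x : S.A} (hx : x ∈ S.lengthGE a) :
    S.lowPr k x ∈ S.lengthGE a := by
  refine S.lengthGE_ind (S.lowPr k) _ a (fun q l b hab x hx => ?_) hx
  by_cases h : k = l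
  · subst h; rw [S.lowPr_of_mem hx.1.2]
    refine S.lengthGE_anti hab ?_
    rw [← mul_one x]
    exact Submodule.mul_mem_mul hx.2 trivial
  · rw [S.lowPr_of_ne h hx.1.2]; exact zero_mem _

lemma lowPr_d (k : ℕ) (x : S.A) : S.lowPr k (S.d x) = S.d (S.lowPr (k + 1) x) := by
  induction x using S.tri_ind with
  | h q l a x hx =>
    rcases l with _ | l
    · rw [S.d_low_zero x hx.1.2, S.lowPr_of_ne (by omega) hx.1.2, map_zero, map_zero]
    · have hd := S.d_low l x hx.1.2
      by_cases h : k = l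
      · subst h; rw [S.lowPr_of_mem hx.1.2, S.lowPr_of_mem hd]
      · rw [S.lowPr_of_ne h hd, S.lowPr_of_ne (by omega) hx.1.2, map_zero]
  | h0 => simp
  | hadd x y hx hy => simp only [map_add, hx, hy]

/-- The elements of lower degree at least `k`. -/
def lowGE (k : ℕ) : Submodule ℚ S.A := ⨆ l, S.low (l + k)

lemma mem_lowGE {k l : ℕ} (h : k ≤ l) {x : S.A} (hx : x ∈ S.low l) : x ∈ S.lowGE k := by
  obtain ⟨j, rfl⟩ : ∃ j, l = j + k := ⟨l - k, by omega⟩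
  exact Submodule.mem_iSup_of_mem j hx

lemma lowPr_lowGE {k j : ℕ} (h : j < k) {x : S.A} (hx : x ∈ S.lowGE k) : S.lowPr j x = 0 := by
  induction hx using Submodule.iSup_induction' with
  | mem l x hx => exact S.lowPr_of_ne (by omega) hx
  | zero => simp
  | add a b _ _ ha hb => rw [map_add, ha, hb, add_zero]

lemma lowGE_zero (x : S.A) : x ∈ S.lowGE 0 := by
  induction x using S.tri_ind with
  | h q l a x hx => exact S.mem_lowGE (Nat.zero_le _) hx.1.2
  | h0 => exact zero_mem _
  | hadd x y hx hy => exact add_mem hx hy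

lemma lowGE_mul {k : ℕ} {x : S.A} (hx : x ∈ S.lowGE k) (y : S.A) : x * y ∈ S.lowGE k := by
  induction hx using Submodule.iSup_induction' with
  | mem l x hx =>
    induction y using S.tri_ind with
    | h q l' a y hy => exact S.mem_lowGE (by omega) (S.low_mul _ _ _ _ hx hy.1.2)
    | h0 => simp
    | hadd y z hy hz => rw [mul_add]; exact add_mem hy hz
  | zero => simp
  | add a b _ _ ha hb => rw [add_mul]; exact add_mem ha hb

lemma tau_lowGE {k : ℕ} {x : S.A} (hx : x ∈ S.lowGE k) : S.tau x ∈ S.lowGE k := by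
  induction hx using Submodule.iSup_induction' with
  | mem l x hx => exact S.mem_lowGE (by omega) (S.tau_low hx)
  | zero => simp
  | add a b _ _ ha hb => rw [map_add]; exact add_mem ha hb

lemma sub_lowPr {k : ℕ} {x : S.A} (hx : x ∈ S.lowGE k) : x - S.lowPr k x ∈ S.lowGE (k + 1) := by
  induction hx using Submodule.iSup_induction' with
  | mem l x hx =>
    rcases l with _ | l
    · rw [S.lowPr_of_mem (k := k) (by simpa using hx), sub_self]; exact zero_mem _
    · rw [S.lowPr_of_ne (by omega) hx, sub_zero]
      exact S.mem_lowGE (by omega) hx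
  | zero => simp
  | add a b _ _ ha hb => rw [map_add, add_sub_add_comm]; exact add_mem ha hb

/-- In a fixed degree the lower degree is bounded. -/
lemma exists_bound (q : ℕ) : ∃ K, ∀ i ≤ q, ∀ x ∈ S.grading i, x ∈ S.lowGE K → x = 0 := by
  let LB : ℕ → Submodule ℚ S.A := fun K => ⨆ k : Finset.range (K + 1), S.low k
  have hmem : ∀ {k K : ℕ}, k ≤ K → ∀ {x : S.A}, x ∈ S.low k → x ∈ LB K := by
    intro k K h x hx
    exact Submodule.mem_iSup_of_mem (⟨k, Finset.mem_range.2 (by omega)⟩ : Finset.range (K + 1)) hx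
  have hmono : Monotone LB := by
    intro a b hab
    refine iSup_le fun k x hx => ?_
    exact hmem (by have := Finset.mem_range.1 k.2; omega) hx
  have hmul : ∀ a b x y, x ∈ LB a → y ∈ LB b → x * y ∈ LB (a + b) := by
    intro a b x y hx hy
    induction hx using Submodule.iSup_induction' with
    | mem k x hx =>
      induction hy using Submodule.iSup_induction' with
      | mem l y hy =>
        have h1 := Finset.mem_range.1 k.2
        have h2 := Finset.mem_range.1 l.2
        exact hmem (by omega) (S.low_mul _ _ _ _ hx hy)
      | zero => simp
      | add a b _ _ ha hb => rw [mul_add]; exact add_mem ha hb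
    | zero => simp
    | add a b _ _ ha hb => rw [add_mul]; exact add_mem ha hb
  have hall : ∀ x : S.A, ∃ K, x ∈ LB K := by
    intro x
    induction x using S.tri_ind with
    | h q l a x hx => exact ⟨l, hmem le_rfl hx.1.2⟩
    | h0 => exact ⟨0, zero_mem _⟩
    | hadd x y hx hy =>
      obtain ⟨K, hK⟩ := hx
      obtain ⟨L, hL⟩ := hy
      exact ⟨max K L, add_mem (hmono (le_max_left K L) hK) (hmono (le_max_right K L) hL)⟩
  have hV : ∀ i, ∃ K, S.V i ≤ LB K := by
    intro i
    have := S.V_fin i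
    obtain ⟨s, hs⟩ := (Submodule.fg_iff_finiteDimensional _).2 this
    choose K hK using hall
    refine ⟨s.sup K, ?_⟩
    rw [← hs, Submodule.span_le]
    intro x hx
    exact hmono (Finset.le_sup hx) (hK x)
  choose K0 hK0 using hV
  let K : ℕ → ℕ := fun i => ∑ j ∈ Finset.range (i + 1), K0 j
  have hK0K : ∀ i, K0 i ≤ K i := fun i =>
    Finset.single_le_sum (f := K0) (fun _ _ => Nat.zero_le _) (Finset.mem_range.2 (by omega))
  have hKm : Monotone K := by
    intro a b hab
    exact Finset.sum_le_sum_of_subset (Finset.range_mono (by omega))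
  have hle := eq_of_le_of_iSup_eq_top S.grading (fun i => S.grading i ⊓ LB (i * K i)) S.pr
    (fun i x hx => S.pr_of_mem hx) (fun i j x h hx => S.pr_of_ne h hx) (fun i => inf_le_left)
    (iSup_eq_top_of_gen _ ⟨S.one_mem, hmem (Nat.zero_le _) S.low_one⟩
      (by
        rintro i j x y ⟨hx1, hx2⟩ ⟨hy1, hy2⟩
        refine ⟨S.mul_mem hx1 hy1, hmono ?_ (hmul _ _ _ _ hx2 hy2)⟩
        rw [add_mul]
        exact add_le_add (Nat.mul_le_mul_left i (hKm (by omega)))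
          (Nat.mul_le_mul_left j (hKm (by omega))))
      _ S.generates
      (by
        intro x hx
        obtain ⟨i, hi⟩ := Set.mem_iUnion.1 hx
        by_cases h0 : x = 0
        · rw [h0]; exact zero_mem _
        have h2 := S.V_pos hi h0
        refine Submodule.mem_iSup_of_mem i ⟨S.V_le i hi, hmono ?_ (hK0 i hi)⟩
        exact (hK0K i).trans (Nat.le_mul_of_pos_left _ (by omega))))
  refine ⟨q * K q + 1, fun i hi x hx hx' => ?_⟩
  have h1 : x ∈ LB (q * K q) := hmono (Nat.mul_le_mul hi (hKm hi)) (hle i hx).2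
  -- Lower degrees at most `q * K q` and at least `q * K q + 1` intersect trivially.
  have h2 : ∀ M, ∀ y ∈ LB M, y = ∑ k ∈ Finset.range (M + 1), S.lowPr k y := by
    intro M y hy
    induction hy using Submodule.iSup_induction' with
    | mem k y hy =>
      rw [Finset.sum_eq_single_of_mem k.1 k.2 (fun l _ hl => S.lowPr_of_ne hl hy),
        S.lowPr_of_mem hy]
    | zero => simp
    | add a b _ _ ha hb =>
      simp only [map_add, Finset.sum_add_distrib]
      rw [← ha, ← hb]
  rw [h2 _ x h1]
  exact Finset.sum_eq_zero fun k hk => S.lowPr_lowGE (Finset.mem_range.1 hk) hx'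

lemma exact_of_low {h : S.A →ₗ[ℚ] S.A} (hh : ∀ y, S.d (h (S.d y)) = S.d y) {k : ℕ} {x : S.A}
    (hx : x ∈ S.low (k + 1)) (hd : S.d x = 0) : S.d (h x) = x := by
  obtain ⟨y, rfl⟩ := S.acyclic_plus k x hx hd
  exact hh y

variable (hmin : S.toSullivan.Minimal) (hW : S.toSullivan.WedgeOddSpheres)
  (hquad : ∀ x ∈ S.genSpan, S.d x ∈ S.genSpan * S.genSpan)

include hmin in
lemma V_exact {i : ℕ} {v : S.A} (hv : v ∈ S.V i) (he : S.toCDGA.IsExact v) : v = 0 := by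
  obtain ⟨y, rfl⟩ := he
  exact S.V_dec hv (S.d_mem_dec hmin y)

include hmin hW hquad in
/-- Induction on the lower degree: the differential of an even generator is quadratic in generators
of smaller lower degree, which are odd, so it has even degree and vanishes. The generator is then a
cocycle of even degree, hence a coboundary, which minimality forbids. -/
lemma V_even_low (k : ℕ) : ∀ i, Even i → ∀ v ∈ S.V i ⊓ S.low k, v = 0 := by
  induction k using Nat.strong_induction_on with
  | _ k ih =>
    rintro i hi v ⟨hv, hk⟩
    by_contra hv0
    have h2 := S.V_pos hv hv0
    refine hv0 (S.V_exact hmin hv ?_)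
    obtain ⟨c, rfl⟩ := hi.exists_two_nsmul
    rw [smul_eq_mul] at *
    rcases k with _ | k
    · exact hW.2.1 c (by omega) v (S.V_le _ hv) (S.d_low_zero v hk)
    · -- The differential is a sum of products of two odd generators, hence has even degree.
      have hpar : ∀ x ∈ S.genSpan * S.genSpan, S.pr (2 * c + 1) (S.lowPr k x) = 0 := by
        intro x hx
        have hgen : S.genSpan ≤ ⨆ g : ℕ × ℕ, S.V g.1 ⊓ S.low g.2 := by
          refine iSup_le fun i => ?_
          rw [S.V_low i]
          exact iSup_le fun l => le_iSup (fun g : ℕ × ℕ => S.V g.1 ⊓ S.low g.2) (i, l)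
        induction hx using Submodule.mul_induction_on' with
        | mem_mul_mem x hx y hy =>
          replace hx := hgen hx
          replace hy := hgen hy
          induction hx using Submodule.iSup_induction' with
          | mem g x hx =>
            induction hy using Submodule.iSup_induction' with
            | mem g' y hy =>
              have hl := S.low_mul _ _ _ _ hx.2 hy.2
              have hg := S.mul_mem (S.V_le _ hx.1) (S.V_le _ hy.1)
              by_cases he : k = g.2 + g'.2
              · rw [S.lowPr_of_mem (k := k) (by rw [he]; exact hl)]
                rcases Nat.even_or_odd g.1 with h1 | h1
                · rw [ih g.2 (by omega) g.1 h1 x hx, zero_mul, map_zero]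
                rcases Nat.even_or_odd g'.1 with h2 | h2
                · rw [ih g'.2 (by omega) g'.1 h2 y hy, mul_zero, map_zero]
                refine S.pr_of_ne (fun h => ?_) hg
                have := h1.add_odd h2
                rw [← h] at this
                exact Nat.not_even_iff_odd.2 ⟨c, rfl⟩ this
              · rw [S.lowPr_of_ne he hl, map_zero]
            | zero => simp
            | add a b _ _ ha hb => rw [mul_add, map_add, map_add, ha, hb, add_zero]
          | zero => simp
          | add a b _ _ ha hb => rw [add_mul, map_add, map_add, ha, hb, add_zero]
        | add x _ y _ hx hy => rw [map_add, map_add, hx, hy, add_zero]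
      have hd := hpar _ (hquad v (Submodule.mem_iSup_of_mem _ hv))
      rw [S.lowPr_of_mem (S.d_low k v hk), S.pr_of_mem (S.d_mem (S.V_le _ hv))] at hd
      exact S.acyclic_plus k v hk hd

include hmin hW hquad in
/-- The generators of the model of a wedge of odd spheres have odd degree. -/
lemma V_even {i : ℕ} (hi : Even i) {v : S.A} (hv : v ∈ S.V i) : v = 0 := by
  rw [S.V_low i] at hv
  induction hv using Submodule.iSup_induction' with
  | mem k v hv => exact S.V_even_low hmin hW hquad k i hi v hv
  | zero => rfl
  | add a b _ _ ha hb => rw [ha, hb, add_zero]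

include hmin hW hquad in
lemma even_dec {i : ℕ} (hi : Even i) (h0 : 0 < i) {x : S.A} (hx : x ∈ S.grading i) :
    x ∈ S.dec := by
  obtain ⟨v, hv, h⟩ := S.exists_gen h0 hx
  rwa [S.V_even hmin hW hquad hi hv, sub_zero] at h

include hmin in
/-- In the lowest degree in which there are generators, everything has lower degree zero. -/
lemma lowest_low {m : ℕ} (hlowest : ∀ j, j < m → S.V j = ⊥) {x : S.A} (hm : 2 ≤ m)
    (hx : x ∈ S.grading m) {k : ℕ} (hk : x ∈ S.low (k + 1)) : x = 0 := by
  obtain ⟨v, hv, h⟩ := S.exists_gen (by omega) hx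
  have hxv := S.dec_eq_zero hlowest (by omega) h (sub_mem hx (S.V_le m hv))
  rw [sub_eq_zero] at hxv
  subst hxv
  have hd := S.dec_eq_zero hlowest (by omega) (S.d_mem_dec hmin x) (S.d_mem hx)
  exact S.V_exact hmin hv (S.acyclic_plus k x hk hd)

include hmin in
lemma lowest_low_zero {m : ℕ} (hlowest : ∀ j, j < m → S.V j = ⊥) {u : S.A} (hm : 2 ≤ m)
    (hu : u ∈ S.V m) : u ∈ S.low 0 := by
  rw [S.V_low m] at hu
  induction hu using Submodule.iSup_induction' with
  | mem k v hv =>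
    rcases k with _ | k
    · exact hv.2
    · rw [S.lowest_low hmin hlowest hm (S.V_le m hv.1) hv.2]; exact zero_mem _
  | zero => exact zero_mem _
  | add a b _ _ ha hb => exact add_mem ha hb

include hmin in
lemma exists_form {m : ℕ} (hlowest : ∀ j, j < m → S.V j = ⊥) {u : S.A} (hu : u ∈ S.V m)
    (hu0 : u ≠ 0) : ∃ lam : S.A →ₗ[ℚ] ℚ, lam u = 1 ∧ (∀ j ≠ m, ∀ x ∈ S.grading j, lam x = 0) ∧
      (∀ x ∈ S.dec, lam x = 0) ∧ lam 1 = 0 ∧ ∀ x ∈ S.lowGE 1, lam x = 0 := by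
  have hm := S.V_pos hu hu0
  obtain ⟨lam, h1, h2, h3, h4⟩ := Sullivan.exists_lam' hu hu0
  refine ⟨lam, h1, h2, h3, h4, fun x hx => ?_⟩
  rw [← S.lam_pr h2 x]
  induction hx using Submodule.iSup_induction' with
  | mem l x hx => rw [S.lowest_low hmin hlowest hm (S.pr_mem m x) (S.pr_low m hx), map_zero]
  | zero => simp
  | add a b _ _ ha hb => rw [map_add, map_add, ha, hb, add_zero]

lemma lowPr_mul_left {u : S.A} (hu : u ∈ S.low 0) (k : ℕ) (x : S.A) :
    S.lowPr k (u * x) = u * S.lowPr k x := by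
  induction x using S.tri_ind with
  | h q l a x hx =>
    have := S.low_mul 0 l u x hu hx.1.2
    rw [zero_add] at this
    by_cases h : k = l
    · subst h; rw [S.lowPr_of_mem hx.1.2, S.lowPr_of_mem this]
    · rw [S.lowPr_of_ne h hx.1.2, S.lowPr_of_ne h this, mul_zero]
  | h0 => simp
  | hadd x y hx hy => rw [mul_add, map_add, map_add, mul_add, hx, hy]

include hW in
/-- Products of two cocycles of lower degree zero and positive degree are boundaries. -/
lemma exact_mul {h : S.A →ₗ[ℚ] S.A} (hh : ∀ y, S.d (h (S.d y)) = S.d y) {m : ℕ} (hm : 0 < m)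
    {u : S.A} (hu : u ∈ S.grading m) (hdu : S.d u = 0) {b : S.A} (hb : b ∈ S.plus) :
    S.d (h (u * S.lowPr 0 b)) = u * S.lowPr 0 b := by
  induction hb using Submodule.iSup_induction' with
  | mem i b hb =>
    obtain ⟨y, hy⟩ := hW.2.2 m (i + 1) u (S.lowPr 0 b) hm (by omega) hu (S.lowPr_grading 0 hb) hdu
      (S.d_low_zero _ (S.lowPr_mem 0 b))
    rw [← hy]; exact hh y
  | zero => simp
  | add a b _ _ ha hb => simp only [map_add, mul_add, ha, hb]

end BigradedSullivan

end RHT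

/-! ### The derivation of the fibre attached to an indecomposable class of the base -/

namespace RHT

lemma Sullivan.bounded_of_cohomology {F : Sullivan} {N : ℕ}
    (h : ∀ i, N < i → Subsingleton (F.toCDGA.cohomology i)) : F.Bounded N := by
  intro i hi x hx hdx
  have hx' : x ∈ F.toCDGA.cocycles i := ⟨hx, hdx⟩
  have h0 := (h i hi).elim (Submodule.Quotient.mk ⟨x, hx'⟩ : F.toCDGA.cohomology i) 0
  rw [Submodule.Quotient.mk_eq_zero] at h0
  obtain ⟨y, hy⟩ := h0.2
  obtain ⟨k, rfl⟩ : ∃ k, i = k + 1 := ⟨i - 1, by omega⟩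
  exact F.exact_hom hx ⟨y, hy⟩

namespace FibrationModel

section derivation

variable {B F : Sullivan} (P : FibrationModel B.toCDGA F)

lemma proj_plus {b : B.A} (hb : b ∈ B.plus) : P.proj.toAlgHom (P.incl.toAlgHom b) = 0 := by
  have : B.plus ≤ LinearMap.ker (P.proj.toAlgHom.toLinearMap ∘ₗ P.incl.toAlgHom.toLinearMap) :=
    iSup_le fun i x hx => P.proj_incl (i + 1) (Nat.succ_pos i) x hx
  exact this hb

lemma proj_incl_eq (b : B.A) : P.proj.toAlgHom (P.incl.toAlgHom b) = B.aug b • (1 : F.A) := by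
  have := P.proj_plus (B.sub_aug_mem b)
  rw [map_sub, map_sub, sub_eq_zero, map_smul, map_smul, map_one, map_one] at this
  exact this

lemma proj_mu (b : B.A) (x : F.A) : P.proj.toAlgHom (P.mu b x) = B.aug b • x := by
  rw [mu_apply, map_mul, P.proj_incl_eq, P.proj_j, smul_mul_assoc, one_mul]

lemma mu_one (b : B.A) : P.mu b 1 = P.incl.toAlgHom b := by rw [mu_apply, map_one, mul_one]

lemma mu_one_left (x : F.A) : P.mu 1 x = P.j x := by rw [mu_apply, map_one, one_mul]

lemma incl_mul_mu (a b : B.A) (x : F.A) : P.incl.toAlgHom a * P.mu b x = P.mu (a * b) x := by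
  rw [mu_apply, mu_apply, map_mul, mul_assoc]

lemma incl_tau (b : B.A) : P.incl.toAlgHom (B.tau b) = P.T.tau (P.incl.toAlgHom b) := by
  induction b using B.hom_ind with
  | h i b hb => rw [B.tau_of_mem hb, P.T.tau_of_mem (P.incl.map_grading hb), map_smul]
  | h0 => simp
  | hadd x y hx hy => simp only [map_add, hx, hy]

lemma j_tau (b : F.A) : P.j (F.tau b) = P.T.tau (P.j b) := by
  induction b using F.hom_ind with
  | h i b hb => rw [F.tau_of_mem hb, P.T.tau_of_mem (P.j_gr hb), map_smul]
  | h0 => simp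
  | hadd x y hx hy => simp only [map_add, hx, hy]

/-- The differential of `b · j(x)`. -/
lemma d_mu (b : B.A) (x : F.A) :
    P.T.d (P.mu b x) = P.mu (B.d b) x + P.incl.toAlgHom (B.tau b) * P.T.d (P.j x) := by
  rw [mu_apply, P.T.d_mul, ← P.incl.comm_d, ← P.incl_tau, mu_apply]

variable (lam : B.A →ₗ[ℚ] ℚ) {m : ℕ}

lemma intg_j (h1 : lam 1 = 0) (x : F.A) : P.intg lam (P.j x) = 0 := by
  rw [← mu_one_left, intg_mu, h1, zero_smul]

lemma intg_incl (b : B.A) : P.intg lam (P.incl.toAlgHom b) = lam b • (1 : F.A) := by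
  rw [← mu_one, intg_mu]

lemma intg_low (hoff : ∀ j ≠ m, ∀ x ∈ B.grading j, lam x = 0) {q : ℕ} (hq : q < m) {t : P.T.A}
    (ht : t ∈ P.T.grading q) : P.intg lam t = 0 := by
  rw [← P.T.pr_of_mem ht]
  clear ht
  induction t using P.T_ind with
  | h i b hb k x hx =>
    by_cases h : q = i + k
    · rw [h, P.T.pr_of_mem (P.mu_gr hb hx), intg_mu, hoff i (by omega) b hb, zero_smul]
    · rw [P.T.pr_of_ne h (P.mu_gr hb hx), map_zero]
  | h0 => simp
  | hadd x y hx hy => rw [map_add, map_add, hx, hy, add_zero]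

section

variable (hm : Odd m) (hoff : ∀ j ≠ m, ∀ x ∈ B.grading j, lam x = 0)
  (hdec : ∀ x ∈ B.dec, lam x = 0) (h1 : lam 1 = 0)

include hdec h1 in
lemma lam_mul (a b : B.A) : lam (a * b) = B.aug a * lam b + lam a * B.aug b := by
  have h := hdec _ (Submodule.mul_mem_mul (B.sub_aug_mem a) (B.sub_aug_mem b))
  have e : (a - B.aug a • 1) * (b - B.aug b • 1) =
      a * b - B.aug b • a - B.aug a • b + (B.aug a * B.aug b) • 1 := by
    simp only [sub_mul, mul_sub, smul_mul_assoc, mul_smul_comm, one_mul, mul_one, smul_sub,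
      smul_smul]
    rw [mul_comm (B.aug b)]
    abel
  rw [e] at h
  simp only [map_add, map_sub, map_smul, h1, smul_eq_mul] at h
  linarith

include hm hoff in
lemma lam_tau (b : B.A) : lam (B.tau b) = - lam b := by
  induction b using B.hom_ind with
  | h i b hb =>
    rw [B.tau_of_mem hb, map_smul]
    by_cases hi : i = m
    · rw [hi, hm.neg_one_pow, neg_smul, one_smul]
    · rw [hoff i hi b hb]; simp
  | h0 => simp
  | hadd x y hx hy => simp only [map_add, hx, hy]; ring

include hm hoff hdec h1 in
/-- Integration along an odd indecomposable class is a derivation over the projection. -/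
lemma intg_mul (s t : P.T.A) : P.intg lam (s * t) =
    P.intg lam s * P.proj.toAlgHom t + F.tau (P.proj.toAlgHom s) * P.intg lam t := by
  induction s using P.T_ind with
  | h i a ha k x hx =>
    induction t using P.T_ind with
    | h l b hb r y hy =>
      rw [P.mu_mul a hx hb y, map_smul, intg_mu, intg_mu, intg_mu, proj_mu, proj_mu, map_smul,
        F.tau_of_mem hx, lam_mul lam hdec h1, add_smul, smul_add, add_comm]
      simp only [smul_mul_assoc, mul_smul_comm, smul_smul]
      congr 1
      · congr 1
        rcases Nat.eq_zero_or_pos l with rfl | hl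
        · simp
          ring
        · rw [B.aug_of_pos hl hb]; simp
      · congr 1
        by_cases hl : l = m
        · rw [hl, mul_comm k m, pow_mul, hm.neg_one_pow]; ring
        · rw [hoff l hl b hb]; simp
    | h0 => simp
    | hadd x y hx hy => simp only [map_add, mul_add, hx, hy]; abel
  | h0 => simp
  | hadd x y hx hy => simp only [map_add, add_mul, hx, hy]; abel

/-- The derivation `x ↦ ∫ D(j x)` of the fibre defined by a linear form on the base. For a form
of odd degree `m` it has even degree `1 - m`, so no signs occur in `theta_mul` and `theta_d`. -/
noncomputable def theta : F.A →ₗ[ℚ] F.A := P.intg lam ∘ₗ P.T.d ∘ₗ P.j.toLinearMap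

lemma theta_apply (x : F.A) : P.theta lam x = P.intg lam (P.T.d (P.j x)) := rfl

lemma proj_d_j (x : F.A) : P.proj.toAlgHom (P.T.d (P.j x)) = F.d x := by
  rw [P.proj.comm_d, P.proj_j]

include hm hoff hdec h1 in
lemma theta_mul (x y : F.A) : P.theta lam (x * y) = P.theta lam x * y + x * P.theta lam y := by
  simp only [theta_apply]
  rw [map_mul, P.T.d_mul, map_add, P.intg_mul lam hm hoff hdec h1, P.intg_mul lam hm hoff hdec h1,
    ← j_tau, P.proj_j, P.proj_j, P.intg_j lam h1, P.intg_j lam h1, F.tau_tau]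
  simp

variable (hmin : B.Minimal)

include hm hoff hdec h1 hmin in
lemma intg_d (t : P.T.A) :
    P.intg lam (P.T.d t) = P.theta lam (P.proj.toAlgHom t) - F.d (P.intg lam t) := by
  induction t using P.T_ind with
  | h i b hb k x hx =>
    rw [d_mu, map_add, intg_mu, hdec _ (B.d_mem_dec hmin b), P.intg_mul lam hm hoff hdec h1,
      proj_d_j, intg_incl, proj_incl_eq, lam_tau lam hm hoff, proj_mu, intg_mu, ← theta_apply]
    have : B.aug (B.tau b) = B.aug b := by
      rcases Nat.eq_zero_or_pos i with rfl | hi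
      · rw [B.tau_of_mem hb]; simp
      · rw [B.aug_of_pos hi hb, B.aug_of_pos hi (B.tau_mem hb)]
    rw [this]
    simp
    abel
  | h0 => simp
  | hadd x y hx hy => simp only [map_add, hx, hy]; abel

include hm hoff hdec h1 hmin in
lemma theta_d (x : F.A) : P.theta lam (F.d x) = F.d (P.theta lam x) := by
  have := P.intg_d lam hm hoff hdec h1 hmin (P.T.d (P.j x))
  rw [P.T.d_sq, map_zero, proj_d_j, eq_comm, sub_eq_zero] at this
  exact this

include hm hoff hdec h1 hmin in
/-- For a fibre with bounded cohomology, the derivation attached to an odd indecomposable class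
of degree `i + 1` has no constant term on the generators of degree `i`. -/
lemma aug_theta {N : ℕ} (hF : F.Minimal) (hN : F.Bounded N) {i : ℕ} (hi : i + 1 = m) {v : F.A}
    (hv : v ∈ F.V i) : F.aug (P.theta lam v) = 0 := by
  refine Sullivan.no_derivation (P.theta_mul lam hm hoff hdec h1) hF hN
    (P.theta_d lam hm hoff hdec h1 hmin) (fun l hl x hx => ?_) hv
  exact P.intg_low lam hoff (q := l + 1) (by omega) (P.T.d_mem (P.j_gr hx))

end

end derivation

end FibrationModel

end RHT

/-! ### Word length in the total algebra -/

namespace RHT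

namespace FibrationModel

section word

variable {B F : Sullivan} (P : FibrationModel B.toCDGA F)

lemma V_le_genSpan {i : ℕ} {v : P.T.A} (hv : v ∈ P.V i) : v ∈ P.totalGenSpan B.genSpan :=
  Submodule.mem_sup_right (Submodule.mem_iSup_of_mem i hv)

lemma incl_genSpan {w : B.A} (hw : w ∈ B.genSpan) :
    P.incl.toAlgHom w ∈ P.totalGenSpan B.genSpan :=
  Submodule.mem_sup_left ⟨w, hw, rfl⟩

lemma j_genSpan {x : F.A} (hx : x ∈ F.genSpan) : P.j x ∈ P.totalGenSpan B.genSpan := by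
  refine Submodule.mem_sup_right ?_
  rw [P.fiberGenSpan_eq]; exact ⟨x, hx, rfl⟩

/-- Induction over homogeneous generators of the total algebra. -/
lemma genSpan_ind {p : P.T.A → Prop} (hB : ∀ i, ∀ w ∈ B.V i, p (P.incl.toAlgHom w))
    (hF : ∀ i, ∀ v ∈ F.V i, p (P.j v)) (h0 : p 0) (hadd : ∀ x y, p x → p y → p (x + y))
    {t : P.T.A} (ht : t ∈ P.totalGenSpan B.genSpan) : p t := by
  obtain ⟨_, ⟨w, hw, rfl⟩, y, hy, rfl⟩ := Submodule.mem_sup.1 ht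
  rw [fiberGenSpan_eq] at hy
  obtain ⟨x, hx, rfl⟩ := hy
  clear ht
  refine hadd _ _ ?_ ?_
  · change w ∈ B.genSpan at hw
    induction hw using Submodule.iSup_induction' with
    | mem i w hw => exact hB i w hw
    | zero => simpa using h0
    | add a b _ _ ha hb => rw [map_add]; exact hadd _ _ ha hb
  · change x ∈ F.genSpan at hx
    induction hx using Submodule.iSup_induction' with
    | mem i w hw => exact hF i w hw
    | zero => simpa using h0
    | add a b _ _ ha hb => rw [map_add]; exact hadd _ _ ha hb

lemma totalGenSpan_hom : P.totalGenSpan B.genSpan ≤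
    ⨆ i, P.totalGenSpan B.genSpan ⊓ P.T.grading i := by
  intro t ht
  refine P.genSpan_ind (fun i w hw => ?_) (fun i v hv => ?_) (zero_mem _)
    (fun x y hx hy => add_mem hx hy) ht
  · exact Submodule.mem_iSup_of_mem i ⟨P.incl_genSpan (Submodule.mem_iSup_of_mem i hw),
      P.incl.map_grading (B.V_le i hw)⟩
  · exact Submodule.mem_iSup_of_mem i ⟨P.j_genSpan (Submodule.mem_iSup_of_mem i hv),
      P.j_gr (F.V_le i hv)⟩

/-- `Λ^{≥ l}(W ⊕ V)`. -/
abbrev L (l : ℕ) : Submodule ℚ P.T.A := P.totalLengthGE B.genSpan l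

lemma L_mul {a b : ℕ} {x y : P.T.A} (hx : x ∈ P.L a) (hy : y ∈ P.L b) : x * y ∈ P.L (a + b) :=
  pow_top_mul (P.T.top_mul_le P.totalGenSpan_hom) a b (Submodule.mul_mem_mul hx hy)

lemma L_anti {a b : ℕ} (h : a ≤ b) : P.L b ≤ P.L a := pow_top_anti h

lemma genSpan_le_L : P.totalGenSpan B.genSpan ≤ P.L 1 := by
  intro x hx
  unfold L totalLengthGE
  rw [pow_one, ← mul_one x]; exact Submodule.mul_mem_mul hx trivial

lemma L_zero (x : P.T.A) : x ∈ P.L 0 := by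
  unfold L totalLengthGE
  rw [pow_zero, one_mul]; trivial

lemma incl_L {a : ℕ} {b : B.A} (hb : b ∈ B.lengthGE a) : P.incl.toAlgHom b ∈ P.L a := by
  have : (B.lengthGE a).map P.incl.toAlgHom.toLinearMap ≤ P.L a := by
    unfold Sullivan.lengthGE L totalLengthGE
    rw [Submodule.map_mul, Submodule.map_pow]
    exact mul_le_mul' (pow_le_pow_left' (by rintro _ ⟨w, hw, rfl⟩; exact P.incl_genSpan hw) a) le_top
  exact this ⟨b, hb, rfl⟩

lemma j_L {a : ℕ} {x : F.A} (hx : x ∈ F.lengthGE a) : P.j x ∈ P.L a := by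
  have : (F.lengthGE a).map P.j.toLinearMap ≤ P.L a := by
    unfold Sullivan.lengthGE L totalLengthGE
    rw [Submodule.map_mul, Submodule.map_pow]
    exact mul_le_mul' (pow_le_pow_left' (by rintro _ ⟨w, hw, rfl⟩; exact P.j_genSpan hw) a) le_top
  exact this ⟨x, hx, rfl⟩

lemma mu_L {a c l : ℕ} (h : l ≤ a + c) {b : B.A} (hb : b ∈ B.lengthGE a) {x : F.A}
    (hx : x ∈ F.lengthGE c) : P.mu b x ∈ P.L l :=
  P.L_anti h (P.L_mul (P.incl_L hb) (P.j_L hx))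

/-- The elements of word length at least `l`, described through the tensor decomposition. -/
lemma L_le (l : ℕ) : P.L l ≤ Submodule.span ℚ {t | ∃ a c q, l ≤ a + c ∧ ∃ b ∈ B.lengthGE a,
    b ∈ B.grading q ∧ ∃ x ∈ F.lengthGE c, t = P.mu b x} := by
  induction l with
  | zero =>
    intro t ht
    clear ht
    induction t using P.T_ind with
    | h i b hb k x hx =>
      exact Submodule.subset_span
        ⟨0, 0, i, le_rfl, b, B.lengthGE_zero b, hb, x, F.lengthGE_zero x, rfl⟩
    | h0 => exact zero_mem _
    | hadd x y hx hy => exact add_mem hx hy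
  | succ l ih =>
    unfold L totalLengthGE
    rw [pow_succ', mul_assoc, Submodule.mul_le]
    intro g hg s hs
    replace hs := ih hs
    induction hs using Submodule.span_induction with
    | zero => simp
    | add a b _ _ ha hb => rw [mul_add]; exact add_mem ha hb
    | smul r a _ ha => rw [mul_smul_comm]; exact Submodule.smul_mem _ _ ha
    | mem t ht =>
      obtain ⟨a, c, q, hl, b, hb, hbq, x, hx, rfl⟩ := ht
      refine P.genSpan_ind (p := fun g => g * P.mu b x ∈ Submodule.span ℚ _)
        (fun i w hw => ?_) (fun i v hv => ?_) ?_ (fun y z hy hz => ?_) hg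
      · rw [incl_mul_mu]
        refine Submodule.subset_span ⟨1 + a, c, i + q, by omega, w * b, ?_,
          B.mul_mem (B.V_le i hw) hbq, x, hx, rfl⟩
        exact B.mul_mem_lengthGE (B.genSpan_le_lengthGE (Submodule.mem_iSup_of_mem i hw)) hb
      · rw [← mu_one_left, P.mu_mul 1 (F.V_le i hv) hbq x, one_mul]
        refine Submodule.smul_mem _ _ (Submodule.subset_span ⟨a, 1 + c, q, by omega, b, hb, hbq,
          v * x, ?_, rfl⟩)
        exact F.mul_mem_lengthGE (F.genSpan_le_lengthGE (Submodule.mem_iSup_of_mem i hv)) hx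
      · simp
      · rw [add_mul y z]; exact add_mem hy hz

lemma op_L (s : ℕ) (f : B.A →ₗ[ℚ] B.A) (hf : ∀ a, ∀ x ∈ B.lengthGE (a + s), f x ∈ B.lengthGE a)
    {l : ℕ} {t : P.T.A} (ht : t ∈ P.L (l + s)) : P.op f t ∈ P.L l := by
  replace ht := P.L_le _ ht
  induction ht using Submodule.span_induction with
  | zero => simp
  | add a b _ _ ha hb => rw [map_add]; exact add_mem ha hb
  | smul r a _ ha => rw [map_smul]; exact Submodule.smul_mem _ _ ha
  | mem t ht =>
    obtain ⟨a, c, q, hl, b, hb, hbq, x, hx, rfl⟩ := ht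
    rw [op_mu]
    rcases Nat.lt_or_ge a s with h | h
    · exact P.mu_L (by omega) (B.lengthGE_zero _) hx
    · obtain ⟨e, rfl⟩ : ∃ e, a = e + s := ⟨a - s, by omega⟩
      exact P.mu_L (by omega) (hf e b hb) hx

lemma grading_L {i : ℕ} (hi : 0 < i) {t : P.T.A} (ht : t ∈ P.T.grading i) : t ∈ P.L 1 := by
  rw [← P.T.pr_of_mem ht]
  clear ht
  induction t using P.T_ind with
  | h q b hb k x hx =>
    by_cases h : i = q + k
    · rw [h, P.T.pr_of_mem (P.mu_gr hb hx)]
      rcases Nat.eq_zero_or_pos q with rfl | hq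
      · exact P.mu_L (by omega) (B.lengthGE_zero _)
          (F.plus_le_lengthGE (F.mem_plus (by omega) hx)) (a := 0) (c := 1)
      · exact P.mu_L (by omega) (B.plus_le_lengthGE (B.mem_plus hq hb)) (F.lengthGE_zero x)
          (a := 1) (c := 0)
    · rw [P.T.pr_of_ne h (P.mu_gr hb hx)]; exact zero_mem _
  | h0 => simp
  | hadd x y hx hy => rw [map_add]; exact add_mem hx hy

/-- Up to `B⁺ · F⁺`, an element of the total algebra is the sum of a fibre part and a base part. -/
lemma split_aux (q : ℕ) (t : P.T.A) : ∃ b ∈ B.grading q ⊓ B.plus,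
    P.T.pr q t - P.j (P.proj.toAlgHom (P.T.pr q t)) - P.incl.toAlgHom b ∈
      Submodule.map₂ P.mu B.plus F.plus := by
  induction t using P.T_ind with
  | h i b hb k x hx =>
    by_cases h : q = i + k
    · rw [h, P.T.pr_of_mem (P.mu_gr hb hx), proj_mu]
      rcases Nat.eq_zero_or_pos i with rfl | hi
      · refine ⟨0, zero_mem _, ?_⟩
        rw [B.grading_zero hb, map_smul, LinearMap.smul_apply, mu_one_left, ← B.grading_zero hb,
          map_smul, sub_self]
        simp
      · rw [B.aug_of_pos hi hb]
        rcases Nat.eq_zero_or_pos k with rfl | hk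
        · refine ⟨F.aug x • b, Submodule.smul_mem _ _ ⟨hb, B.mem_plus hi hb⟩, ?_⟩
          rw [F.grading_zero hx, map_smul, mu_one, ← F.grading_zero hx]
          simp
        · refine ⟨0, zero_mem _, ?_⟩
          simpa using Submodule.apply_mem_map₂ P.mu (B.mem_plus hi hb) (F.mem_plus hk hx)
    · refine ⟨0, zero_mem _, ?_⟩
      rw [P.T.pr_of_ne h (P.mu_gr hb hx)]; simp
  | h0 => exact ⟨0, zero_mem _, by simp⟩
  | hadd x y hx hy =>
    obtain ⟨b, hb, h⟩ := hx
    obtain ⟨c, hc, h'⟩ := hy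
    refine ⟨b + c, add_mem hb hc, ?_⟩
    convert add_mem h h' using 1
    simp only [map_add]
    abel

lemma split {q : ℕ} {t : P.T.A} (ht : t ∈ P.T.grading q) : ∃ b ∈ B.grading q ⊓ B.plus,
    t - P.j (P.proj.toAlgHom t) - P.incl.toAlgHom b ∈ Submodule.map₂ P.mu B.plus F.plus := by
  have := P.split_aux q t
  rwa [P.T.pr_of_mem ht] at this

end word

section decomposable

variable {B : BigradedSullivan} {F : Sullivan} (P : FibrationModel B.toCDGA F)
  (hmin : B.toSullivan.Minimal) (hW : B.toSullivan.WedgeOddSpheres)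
  (hquad : ∀ x ∈ B.genSpan, B.d x ∈ B.genSpan * B.genSpan)
  (hF : F.Minimal) {N : ℕ} (hN : F.Bounded N)

include hmin hW hquad hF hN

/-- The total differential of a fibre generator is decomposable. -/
lemma d_V_L {i : ℕ} {v : F.A} (hv : v ∈ F.V i) :
    P.T.d (P.j v) ∈ P.totalLengthGE B.genSpan 2 := by
  by_cases hv0 : v = 0
  · subst hv0; simp
  have hi := F.V_pos hv hv0
  have hD := P.T.d_mem (P.j_gr (F.V_le i hv))
  obtain ⟨b, ⟨hb, hbp⟩, h⟩ := P.split hD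
  have hbd : b ∈ B.dec := by
    rcases Nat.even_or_odd (i + 1) with he | ho
    · exact B.even_dec hmin hW hquad he (Nat.succ_pos i) hb
    obtain ⟨w, hw, hbw⟩ := B.exists_gen (Nat.succ_pos i) hb
    by_cases hw0 : w = 0
    · rwa [hw0, sub_zero] at hbw
    exfalso
    obtain ⟨lam, h1, hoff, hdec, hone⟩ := Sullivan.exists_lam' hw hw0
    have hθ := P.aug_theta lam ho hoff hdec hone hmin hF hN rfl hv
    have hM : ∀ s ∈ Submodule.map₂ P.mu B.plus F.plus, F.aug (P.intg lam s) = 0 := by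
      intro s hs
      have : Submodule.map₂ P.mu B.plus F.plus ≤
          LinearMap.ker (F.aug.toLinearMap ∘ₗ P.intg lam) := by
        rw [Submodule.map₂_le]
        intro b _ x hx
        simp [(F.mem_plus_iff).1 hx]
      exact this hs
    have h2 := hM _ h
    simp only [map_sub, P.intg_j lam hone, P.intg_incl, sub_zero, ← theta_apply, hθ,
      map_smul, map_one] at h2
    have h3 := hdec _ hbw
    rw [map_sub, h1] at h3
    simp at h2
    rw [h2] at h3
    norm_num at h3
  have hM : Submodule.map₂ P.mu B.plus F.plus ≤ P.totalLengthGE B.genSpan 2 := by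
    rw [Submodule.map₂_le]
    intro b hb x hx
    exact P.mu_L (a := 1) (c := 1) le_rfl (B.plus_le_lengthGE hb) (F.plus_le_lengthGE hx)
  have e := add_mem (add_mem (hM h) (P.incl_L (B.dec_le_lengthGE hbd)))
    (P.j_L (hF v (Submodule.mem_iSup_of_mem i hv)))
  rw [proj_d_j] at e
  convert e using 1
  abel

/-- The total differential raises word length. -/
lemma d_L (l : ℕ) : ∀ t ∈ P.totalLengthGE B.genSpan l,
    P.T.d t ∈ P.totalLengthGE B.genSpan (l + 1) := by
  induction l with
  | zero =>
    intro t ht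
    clear ht
    induction t using P.T_ind with
    | h i b hb k x hx => exact P.grading_L (Nat.succ_pos _) (P.T.d_mem (P.mu_gr hb hx))
    | h0 => simp
    | hadd x y hx hy => rw [map_add]; exact add_mem hx hy
  | succ l ih =>
    intro t ht
    have : P.totalLengthGE B.genSpan (l + 1) ≤
        (P.totalLengthGE B.genSpan (l + 1 + 1)).comap P.T.d := by
      unfold totalLengthGE
      rw [pow_succ', mul_assoc, Submodule.mul_le]
      intro g hg s hs
      rw [Submodule.mem_comap]
      refine P.genSpan_ind (B := B.toSullivan)
        (p := fun g => P.T.d (g * s) ∈ P.totalLengthGE B.genSpan (l + 1 + 1)) (fun i w hw => ?_) (fun i v hv => ?_) ?_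
        (fun y z hy hz => ?_) hg
      · rw [P.T.leibniz _ _ (P.incl.map_grading (B.V_le i hw)), ← P.incl.comm_d]
        have h1 : B.d w ∈ B.lengthGE 2 := hmin w (Submodule.mem_iSup_of_mem i hw)
        refine add_mem ?_ (Submodule.smul_mem _ _ ?_)
        · exact P.L_anti (by omega) (P.L_mul (P.incl_L h1) hs)
        · exact P.L_anti (by omega) (P.L_mul
            (P.genSpan_le_L (P.incl_genSpan (Submodule.mem_iSup_of_mem i hw))) (ih s hs))
      · rw [P.T.leibniz _ _ (P.j_gr (F.V_le i hv))]
        refine add_mem ?_ (Submodule.smul_mem _ _ ?_)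
        · exact P.L_anti (by omega) (P.L_mul (P.d_V_L hmin hW hquad hF hN hv) hs)
        · exact P.L_anti (by omega) (P.L_mul
            (P.genSpan_le_L (P.j_genSpan (Submodule.mem_iSup_of_mem i hv))) (ih s hs))
      · simp
      · rw [add_mul y z, map_add]; exact add_mem hy hz
    exact this ht

end decomposable

end FibrationModel

end RHT

/-! ### Killing the obstruction along the lower grading -/

namespace RHT

namespace FibrationModel

section operators

variable {B F : Sullivan} (P : FibrationModel B.toCDGA F)

lemma op_comp (f g : B.A →ₗ[ℚ] B.A) (t : P.T.A) : P.op (f ∘ₗ g) t = P.op f (P.op g t) := by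
  induction t using P.T_ind with
  | h i b hb k x hx => simp
  | h0 => simp
  | hadd x y hx hy => simp only [map_add, hx, hy]

lemma op_sub (f g : B.A →ₗ[ℚ] B.A) (t : P.T.A) : P.op (f - g) t = P.op f t - P.op g t := by
  induction t using P.T_ind with
  | h i b hb k x hx => simp
  | h0 => simp
  | hadd x y hx hy => simp only [map_add, hx, hy]; abel

lemma op_id (t : P.T.A) : P.op LinearMap.id t = t := by
  induction t using P.T_ind with
  | h i b hb k x hx => simp
  | h0 => simp
  | hadd x y hx hy => simp only [map_add, hx, hy]

lemma op_map₂ {K K' : Submodule ℚ B.A} {f : B.A →ₗ[ℚ] B.A} (hf : ∀ b ∈ K, f b ∈ K') {t : P.T.A}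
    (ht : t ∈ Submodule.map₂ P.mu K ⊤) : P.op f t ∈ Submodule.map₂ P.mu K' ⊤ := by
  have : Submodule.map₂ P.mu K ⊤ ≤ (Submodule.map₂ P.mu K' ⊤).comap (P.op f) := by
    rw [Submodule.map₂_le]
    intro b hb x hx
    rw [Submodule.mem_comap, op_mu]
    exact Submodule.apply_mem_map₂ _ (hf b hb) hx
  exact this ht

lemma op_grading {f : B.A →ₗ[ℚ] B.A} (hf : ∀ q, ∀ x ∈ B.grading (q + 1), f x ∈ B.grading q)
    (hf0 : ∀ x ∈ B.grading 0, f x = 0) {q : ℕ} {t : P.T.A} (ht : t ∈ P.T.grading (q + 1)) :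
    P.op f t ∈ P.T.grading q := by
  rw [← P.T.pr_of_mem ht]
  clear ht
  induction t using P.T_ind with
  | h i b hb k x hx =>
    by_cases h : q + 1 = i + k
    · rw [h, P.T.pr_of_mem (P.mu_gr hb hx), op_mu]
      rcases i with _ | i
      · rw [hf0 b hb]; simp
      · obtain rfl : q = i + k := by omega
        exact P.mu_gr (hf i b hb) hx
    · rw [P.T.pr_of_ne h (P.mu_gr hb hx), map_zero]; exact zero_mem _
  | h0 => simp
  | hadd x y hx hy => rw [map_add, map_add]; exact add_mem hx hy

lemma pr_mu (i : ℕ) (b : B.A) {k : ℕ} {x : F.A} (hx : x ∈ F.grading k) :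
    P.T.pr (i + k) (P.mu b x) = P.mu (B.pr i b) x := by
  induction b using B.hom_ind with
  | h l b hb =>
    by_cases h : i = l
    · subst h; rw [P.T.pr_of_mem (P.mu_gr hb hx), B.pr_of_mem hb]
    · rw [P.T.pr_of_ne (by omega) (P.mu_gr hb hx), B.pr_of_ne h hb]; simp
  | h0 => simp
  | hadd x y hx hy => simp only [map_add, LinearMap.add_apply, hx, hy]

lemma pr_mu_lt {i k : ℕ} (h : i < k) (b : B.A) {x : F.A} (hx : x ∈ F.grading k) :
    P.T.pr i (P.mu b x) = 0 := by
  induction b using B.hom_ind with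
  | h l b hb => rw [P.T.pr_of_ne (by omega) (P.mu_gr hb hx)]
  | h0 => simp
  | hadd x y hx hy => simp only [map_add, LinearMap.add_apply, hx, hy, add_zero]

lemma pr_map₂ {K K' : Submodule ℚ B.A} {i : ℕ} (hK : ∀ l ≤ i, ∀ b ∈ K, B.pr l b ∈ K') {t : P.T.A}
    (ht : t ∈ Submodule.map₂ P.mu K ⊤) : P.T.pr i t ∈ Submodule.map₂ P.mu K' ⊤ := by
  have : Submodule.map₂ P.mu K ⊤ ≤ (Submodule.map₂ P.mu K' ⊤).comap (P.T.pr i) := by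
    rw [Submodule.map₂_le]
    intro b hb x hx
    clear hx
    rw [Submodule.mem_comap]
    induction x using F.hom_ind with
    | h k x hx =>
      rcases Nat.lt_or_ge i k with h | h
      · rw [P.pr_mu_lt h b hx]; exact zero_mem _
      · obtain ⟨l, rfl⟩ : ∃ l, i = l + k := ⟨i - k, by omega⟩
        rw [P.pr_mu l b hx]
        exact Submodule.apply_mem_map₂ _ (hK l (by omega) b hb) trivial
    | h0 => simp
    | hadd x y hx hy => rw [map_add, map_add]; exact add_mem hx hy
  exact this ht

lemma incl_mul_map₂ {K : Submodule ℚ B.A} (hK : ∀ b ∈ K, ∀ c, b * c ∈ K) {b : B.A} (hb : b ∈ K)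
    (t : P.T.A) : P.incl.toAlgHom b * t ∈ Submodule.map₂ P.mu K ⊤ := by
  induction t using P.T_ind with
  | h i c hc k x hx =>
    rw [incl_mul_mu]
    exact Submodule.apply_mem_map₂ _ (hK b hb c) trivial
  | h0 => simp
  | hadd x y hx hy => rw [mul_add]; exact add_mem hx hy

lemma ker_proj_le {t : P.T.A} (ht : P.proj.toAlgHom t = 0) :
    t ∈ Submodule.map₂ P.mu B.plus ⊤ := by
  rw [P.ker_proj] at ht
  have : Submodule.map P.incl.toAlgHom.toLinearMap (⨆ i, B.grading (i + 1)) * ⊤ ≤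
      Submodule.map₂ P.mu B.plus ⊤ := by
    rw [Submodule.mul_le]
    rintro _ ⟨b, hb, rfl⟩ s _
    exact P.incl_mul_map₂ (fun b hb c => B.plus_mul hb c) hb s
  exact this ht

end operators

section filtration

variable {B : BigradedSullivan} {F : Sullivan} (P : FibrationModel B.toCDGA F)

/-- The part `(ΛW)_{≥ k} ⊗ ΛV` of lower degree at least `k`. -/
noncomputable def TL (k : ℕ) : Submodule ℚ P.T.A := Submodule.map₂ P.mu (B.lowGE k) ⊤

lemma TL_zero (t : P.T.A) : t ∈ P.TL 0 := by
  induction t using P.T_ind with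
  | h i b hb k x hx => exact Submodule.apply_mem_map₂ _ (B.lowGE_zero b) trivial
  | h0 => exact zero_mem _
  | hadd x y hx hy => exact add_mem hx hy

lemma TL_anti {k l : ℕ} (h : k ≤ l) : P.TL l ≤ P.TL k := by
  refine Submodule.map₂_le_map₂ (iSup_le fun j x hx => ?_) le_rfl
  exact B.mem_lowGE (by omega) hx

lemma TL_one_le : P.TL 1 ≤
    Submodule.map P.incl.toAlgHom.toLinearMap (⨆ k, B.low (k + 1)) * P.fiberSub := by
  unfold TL
  rw [Submodule.map₂_le]
  intro b hb x _
  exact Submodule.mul_mem_mul ⟨b, hb, rfl⟩ (P.j_mem x)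

/-- The total differential agrees with `d_B ⊗ 1` up to terms not lowering the lower degree. -/
lemma d_sub_op {k : ℕ} {t : P.T.A} (ht : t ∈ P.TL k) : P.T.d t - P.op B.d t ∈ P.TL k := by
  have : P.TL k ≤ (P.TL k).comap (P.T.d - P.op B.d) := by
    conv_lhs => unfold TL
    rw [Submodule.map₂_le]
    intro b hb x _
    rw [Submodule.mem_comap, LinearMap.sub_apply, op_mu, P.d_mu (B := B.toSullivan),
      add_sub_cancel_left]
    exact P.incl_mul_map₂ (fun b hb c => B.lowGE_mul hb c) (B.tau_lowGE hb) _
  exact this ht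

lemma op_lowPr_TL {j k : ℕ} (h : j < k) {t : P.T.A} (ht : t ∈ P.TL k) :
    P.op (B.lowPr j) t = 0 := by
  have := P.op_map₂ (B := B.toSullivan) (f := B.lowPr j) (K' := ⊥)
    (fun b hb => (Submodule.mem_bot ℚ).2 (B.lowPr_lowGE h hb)) ht
  rwa [Submodule.map₂_bot_left, Submodule.mem_bot] at this

lemma sub_op_lowPr {k : ℕ} {t : P.T.A} (ht : t ∈ P.TL k) :
    t - P.op (B.lowPr k) t ∈ P.TL (k + 1) := by
  have := P.op_map₂ (B := B.toSullivan) (f := LinearMap.id - B.lowPr k) (K' := B.lowGE (k + 1))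
    (fun b hb => B.sub_lowPr hb) ht
  rwa [P.op_sub (B := B.toSullivan), P.op_id (B := B.toSullivan)] at this

lemma pr_TL {k : ℕ} (i : ℕ) {t : P.T.A} (ht : t ∈ P.TL k) : P.T.pr i t ∈ P.TL k := by
  refine P.pr_map₂ (B := B.toSullivan) (fun l _ b hb => ?_) ht
  induction hb using Submodule.iSup_induction' with
  | mem j b hb => exact B.mem_lowGE (by omega) (B.pr_low l hb)
  | zero => simp
  | add a b _ _ ha hb => rw [map_add]; exact add_mem ha hb

lemma TL_bound (q : ℕ) : ∃ K, ∀ t ∈ P.T.grading q, t ∈ P.TL K → t = 0 := by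
  obtain ⟨K, hK⟩ := B.exists_bound q
  refine ⟨K, fun t ht htK => ?_⟩
  have := P.pr_map₂ (B := B.toSullivan) (K' := ⊥) (i := q) (fun l hl b hb => ?_) htK
  · rwa [Submodule.map₂_bot_left, Submodule.mem_bot, P.T.pr_of_mem ht] at this
  · refine (Submodule.mem_bot ℚ).2 (hK l hl _ (B.pr_mem l b) ?_)
    clear htK
    induction hb using Submodule.iSup_induction' with
    | mem j b hb => exact B.mem_lowGE (by omega) (B.pr_low l hb)
    | zero => simp
    | add a b _ _ ha hb => rw [map_add]; exact add_mem ha hb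

lemma proj_TL_one {t : P.T.A} (ht : t ∈ P.TL 1) : P.proj.toAlgHom t = 0 := by
  have : P.TL 1 ≤ LinearMap.ker P.proj.toAlgHom.toLinearMap := by
    unfold TL
    rw [Submodule.map₂_le]
    intro b hb x _
    rw [LinearMap.mem_ker]
    refine (P.proj_mu (B := B.toSullivan) b x).trans ?_
    have haug : B.aug b = 0 := by
      induction hb using Submodule.iSup_induction' with
      | mem j b hb =>
        have h0 : B.pr 0 b = 0 := by
          have h1 := B.lowPr_of_mem (B.pr_low 0 hb)
          rw [B.grading_zero (B.pr_mem 0 b), map_smul, B.lowPr_of_ne (by omega) B.low_one,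
            smul_zero, ← B.grading_zero (B.pr_mem 0 b)] at h1
          exact h1.symm
        have h2 : B.pr 0 (b - B.aug b • 1) = 0 := by
          rw [B.grading_zero (B.pr_mem 0 _), B.aug_plus (B.pr_plus (B.sub_aug_mem b) 0), zero_smul]
        rw [map_sub, h0, map_smul, B.pr_of_mem B.one_mem, zero_sub, neg_eq_zero] at h2
        have h3 := congrArg B.aug h2
        simpa using h3
      | zero => simp
      | add a b _ _ ha hb => rw [map_add, ha, hb, add_zero]
    rw [haug, zero_smul]
  exact this ht

variable {h : B.A →ₗ[ℚ] B.A}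
  (hlow : ∀ k, ∀ x ∈ B.low k, h x ∈ B.low (k + 1))
  (hgr : ∀ q, ∀ x ∈ B.grading (q + 1), h x ∈ B.grading q)
  (hlen : ∀ a, ∀ x ∈ B.lengthGE (a + 1), h x ∈ B.lengthGE a)
  (hgr0 : ∀ x ∈ B.grading 0, h x = 0)
  (hh : ∀ y, B.d (h (B.d y)) = B.d y)
  (hD : ∀ l, ∀ t ∈ P.totalLengthGE B.genSpan l, P.T.d t ∈ P.totalLengthGE B.genSpan (l + 1))

include hlow hgr hlen hgr0 hD in
/-- One step of the construction: if the component of lower degree `k` of the cocycle `z` is a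
`d_B`-boundary, then `z` may be pushed to lower degree `k + 1`. -/
lemma push {k l q : ℕ} {z : P.T.A} (hz : z ∈ P.TL k) (hzL : z ∈ P.totalLengthGE B.genSpan (l + 1))
    (hzq : z ∈ P.T.grading (q + 1))
    (he : P.op (B.d ∘ₗ h ∘ₗ B.lowPr k) z = P.op (B.lowPr k) z) :
    ∃ y ∈ P.TL (k + 1), y ∈ P.totalLengthGE B.genSpan l ∧ z - P.T.d y ∈ P.TL (k + 1) ∧
      z - P.T.d y ∈ P.totalLengthGE B.genSpan (l + 1) ∧ z - P.T.d y ∈ P.T.grading (q + 1) := by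
  have hy1 : P.op (h ∘ₗ B.lowPr k) z ∈ P.TL (k + 1) :=
    P.op_map₂ (B := B.toSullivan) (fun b _ => B.mem_lowGE le_rfl (hlow k (B.lowPr k b) (B.lowPr_mem k b))) hz
  have hy2 : P.op (h ∘ₗ B.lowPr k) z ∈ P.totalLengthGE B.genSpan l :=
    P.op_L (B := B.toSullivan) 1 _ (fun a x hx => hlen a (B.lowPr k x) (B.lowPr_lengthGE k hx)) hzL
  have hy3 : P.op (h ∘ₗ B.lowPr k) z ∈ P.T.grading q :=
    P.op_grading (B := B.toSullivan) (fun q x hx => hgr q (B.lowPr k x) (B.lowPr_grading k hx))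
      (fun x hx => hgr0 (B.lowPr k x) (B.lowPr_grading k hx)) hzq
  refine ⟨_, hy1, hy2, ?_, sub_mem hzL (hD _ _ hy2), sub_mem hzq (P.T.d_mem hy3)⟩
  have h1 := P.sub_op_lowPr hz
  have h2 := P.d_sub_op hy1
  rw [← he, P.op_comp (B := B.toSullivan) B.d (h ∘ₗ B.lowPr k)] at h1
  convert sub_mem h1 h2 using 1
  abel

include hh in
/-- For a cocycle of lower degree at least `k + 1`, the leading component is a `d_B`-boundary,
since the cohomology of the base vanishes in positive lower degree. -/
lemma leading_exact {k : ℕ} {z : P.T.A} (hz : z ∈ P.TL (k + 1)) (hdz : P.T.d z = 0) :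
    P.op (B.d ∘ₗ h ∘ₗ B.lowPr (k + 1)) z = P.op (B.lowPr (k + 1)) z := by
  have h1 : P.op (B.d ∘ₗ B.lowPr (k + 1)) z = 0 := by
    have e : B.d ∘ₗ B.lowPr (k + 1) = B.lowPr k ∘ₗ B.d :=
      LinearMap.ext fun x => (B.lowPr_d k x).symm
    rw [e, P.op_comp (B := B.toSullivan)]
    have h2 := P.op_lowPr_TL (Nat.lt_succ_self k) (P.d_sub_op hz)
    rw [hdz, zero_sub, map_neg, neg_eq_zero] at h2
    exact h2
  obtain ⟨ψ, hψ⟩ := exists_factor (B.d ∘ₗ B.lowPr (k + 1))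
    (B.d ∘ₗ h ∘ₗ B.lowPr (k + 1) - B.lowPr (k + 1)) (fun v hv => by
      rw [LinearMap.sub_apply, sub_eq_zero]
      exact B.exact_of_low hh (B.lowPr_mem (k + 1) v) hv)
  have h2 := congrArg (P.op ψ) h1
  rw [map_zero, ← P.op_comp (B := B.toSullivan)] at h2
  have e : ψ ∘ₗ B.d ∘ₗ B.lowPr (k + 1) = B.d ∘ₗ h ∘ₗ B.lowPr (k + 1) - B.lowPr (k + 1) :=
    LinearMap.ext hψ
  rw [e, P.op_sub (B := B.toSullivan), sub_eq_zero] at h2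
  exact h2

include hlow hgr hlen hgr0 hD hh in
lemma kill_aux {l q K : ℕ} (hK : ∀ t ∈ P.T.grading (q + 1), t ∈ P.TL K → t = 0) (r : ℕ) :
    ∀ k, K = k + 1 + r → ∀ z ∈ P.TL (k + 1), z ∈ P.totalLengthGE B.genSpan (l + 1) →
      z ∈ P.T.grading (q + 1) → P.T.d z = 0 →
      ∃ y ∈ P.TL 1, y ∈ P.totalLengthGE B.genSpan l ∧ P.T.d y = z := by
  induction r with
  | zero =>
    rintro k rfl z hz _ hzq _
    exact ⟨0, zero_mem _, zero_mem _, by rw [map_zero, hK z hzq hz]⟩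
  | succ r ih =>
    intro k hk z hz hzL hzq hdz
    obtain ⟨y, h1, h2, h3, h4, h5⟩ := P.push hlow hgr hlen hgr0 hD hz hzL hzq
      (P.leading_exact hh hz hdz)
    obtain ⟨y', h1', h2', h3'⟩ := ih (k + 1) (by omega) _ h3 h4 h5 (by
      rw [map_sub, hdz, P.T.d_sq, sub_zero])
    exact ⟨y + y', add_mem (P.TL_anti (by omega) h1) h1', add_mem h2 h2', by
      rw [map_add, h3']; abel⟩

include hlow hgr hlen hgr0 hD hh in
/-- A cocycle whose component of lower degree `0` is a `d_B`-boundary is the coboundary of an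
element of positive lower degree and of word length one less. -/
lemma kill {l q : ℕ} {z : P.T.A} (hzL : z ∈ P.totalLengthGE B.genSpan (l + 1))
    (hzq : z ∈ P.T.grading (q + 1)) (hdz : P.T.d z = 0)
    (he : P.op (B.d ∘ₗ h ∘ₗ B.lowPr 0) z = P.op (B.lowPr 0) z) :
    ∃ y ∈ P.TL 1, y ∈ P.totalLengthGE B.genSpan l ∧ P.T.d y = z := by
  obtain ⟨K, hK⟩ := P.TL_bound (q + 1)
  obtain ⟨y, h1, h2, h3, h4, h5⟩ := P.push hlow hgr hlen hgr0 hD (P.TL_zero z) hzL hzq he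
  obtain ⟨y', h1', h2', h3'⟩ := P.kill_aux hlow hgr hlen hgr0 hh hD (l := l) (q := q) (K := K + 1)
    (fun t ht htK => hK t ht (P.TL_anti (Nat.le_succ K) htK)) K 0 (by omega) _ h3 h4 h5
    (by rw [map_sub, hdz, P.T.d_sq, sub_zero])
  exact ⟨y + y', add_mem h1 h1', add_mem h2 h2', by rw [map_add, h3']; abel⟩

end filtration

section main

variable {B : BigradedSullivan} {F : Sullivan} (P : FibrationModel B.toCDGA F)
  (hmin : B.toSullivan.Minimal) (hW : B.toSullivan.WedgeOddSpheres)
  {m : ℕ} {u : B.A} (hu : u ∈ B.V m) (hu0 : u ≠ 0)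
  (hlowest : ∀ j, j < m → B.V j = ⊥)

include hmin hW hu hu0 hlowest in
/-- The component of lower degree `0` of a product of `u` with an element of `B⁺ ⊗ ΛV` is a
`d_B`-boundary, since products vanish in the cohomology of the base. -/
lemma base_exact {h : B.A →ₗ[ℚ] B.A} (hh : ∀ y, B.d (h (B.d y)) = B.d y) (hdu : B.d u = 0)
    {s : P.T.A} (hs : P.proj.toAlgHom s = 0) :
    P.op (B.d ∘ₗ h ∘ₗ B.lowPr 0) (P.incl.toAlgHom u * s) =
      P.op (B.lowPr 0) (P.incl.toAlgHom u * s) := by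
  have hm := B.V_pos hu hu0
  have hul := B.lowest_low_zero hmin hlowest hm hu
  have : Submodule.map₂ P.mu B.plus ⊤ ≤ LinearMap.ker
      ((P.op (B.d ∘ₗ h ∘ₗ B.lowPr 0) - P.op (B.lowPr 0)) ∘ₗ
        LinearMap.mulLeft ℚ (P.incl.toAlgHom u)) := by
    rw [Submodule.map₂_le]
    intro b hb x _
    rw [LinearMap.mem_ker, LinearMap.comp_apply, LinearMap.mulLeft_apply,
      P.incl_mul_mu (B := B.toSullivan), LinearMap.sub_apply, op_mu, op_mu, sub_eq_zero]
    simp only [LinearMap.comp_apply]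
    rw [B.lowPr_mul_left hul, B.exact_mul hW hh (by omega) (B.V_le m hu) hdu hb]
  have h2 := this (P.ker_proj_le (B := B.toSullivan) hs)
  exact sub_eq_zero.1 h2

include hmin hu hu0 hlowest in
/-- Integration against a linear form dual to `u` detects the class `u α`. -/
lemma not_exact (hmodd : Odd m) {N : ℕ} (hN : F.Bounded N) {a : F.A} (haN : a ∈ F.grading N)
    (ha : ¬ F.toCDGA.IsExact a)
    {η : P.T.A} (hη : η ∈ P.TL 1) : ¬ P.T.IsExact (P.mu u a + η) := by
  rintro ⟨y, hy⟩
  have hm := B.V_pos hu hu0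
  obtain ⟨lam, h1, hoff, hdec, hone, hl⟩ := B.exists_form hmin hlowest hu hu0
  obtain ⟨k, rfl⟩ : ∃ k, m = k + 1 := ⟨m - 1, by omega⟩
  have hy' : P.T.d (P.T.pr (k + N) y) = P.mu u a + P.T.pr (k + N + 1) η := by
    rw [← P.T.pr_d, hy, map_add, P.T.pr_of_mem]
    have := P.mu_gr (B.V_le _ hu) haN
    rwa [show k + 1 + N = k + N + 1 by ring] at this
  have hη' := P.pr_TL (k + N + 1) hη
  have hp : F.d (P.proj.toAlgHom (P.T.pr (k + N) y)) = 0 := by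
    rw [← P.proj.comm_d, hy', map_add, P.proj_TL_one hη', P.proj_mu (B := B.toSullivan),
      B.aug_of_pos (Nat.succ_pos k) (B.V_le _ hu), zero_smul, add_zero]
  obtain ⟨w, -, hw⟩ := hN (k + N) (by omega) _ (P.proj.map_grading (P.T.pr_mem (k + N) y)) hp
  have hI := P.intg_d (B := B.toSullivan) lam hmodd hoff hdec hone hmin (P.T.pr (k + N) y)
  have hη0 : P.intg lam (P.T.pr (k + N + 1) η) = 0 := by
    have : P.TL 1 ≤ LinearMap.ker (P.intg lam) := by
      unfold TL
      rw [Submodule.map₂_le]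
      intro b hb x _
      rw [LinearMap.mem_ker, intg_mu, hl b hb, zero_smul]
    exact this hη'
  rw [hy', map_add, hη0, intg_mu, h1, one_smul, add_zero, ← hw,
    P.theta_d (B := B.toSullivan) lam hmodd hoff hdec hone hmin, ← map_sub] at hI
  exact ha ⟨_, hI.symm⟩

end main

end FibrationModel

end RHT

open RHT in
/-- the Claim in the proof of Proposition 4.6.  Let `F → E → B` be a
rational fibration with minimal model `ΛW,d_B → ΛW ⊗ ΛV, D → ΛV, d`, where `F` is a
rational Poincaré duality space with `e₀(F) = n`, `B` is a wedge of odd-dimensional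
spheres and `ΛW, d_B` is the bigraded minimal model of `B` with quadratic differential.
Let `α ∈ Λ^{≥n}V` be a `d`-cocycle representing the fundamental class of `F` and let
`u ∈ W` be a generator of lowest degree (so `d_B u = 0`).  Then there is
`η ∈ Λ^{≥n+1}(W ⊕ V)` with `η ∈ (ΛW)_+ ⊗ ΛV` such that `D(uα + η) = 0`; moreover the
`D`-cocycle `uα + η ∈ Λ^{≥n+1}(W ⊕ V)` is not `D`-exact. -/
theorem halperin_variations_stmt12
    (BB : BigradedSullivan) (hBBmin : BB.toSullivan.Minimal)
    (hBB : BB.toSullivan.WedgeOddSpheres)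
    (hquad : ∀ x ∈ BB.toSullivan.genSpan,
      BB.d x ∈ BB.toSullivan.genSpan * BB.toSullivan.genSpan)
    (SF : Sullivan) (hSFmin : SF.Minimal)
    (N n : ℕ) (hSFpd : SF.PoincareDuality N) (hn : SF.e0 = n)
    (P : FibrationModel BB.toCDGA SF)
    -- `u ∈ W` a generator of lowest degree, with `d_B u = 0`
    (u : BB.A) (m : ℕ) (hu : u ∈ BB.V m) (hu0 : u ≠ 0)
    (hlowest : ∀ j, j < m → BB.V j = ⊥) (hdu : BB.d u = 0)
    -- `α ∈ Λ^{≥n}V ⊆ 1 ⊗ ΛV`, a `d`-cocycle of top degree `N` representing the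
    -- fundamental class of `F`
    (α : P.T.A) (hα1 : α ∈ P.fiberSub)
    (hα2 : α ∈ P.fiberGenSpan ^ n * P.fiberSub)
    (hα3 : α ∈ P.T.grading N)
    (hα4 : SF.d (P.proj.toAlgHom α) = 0)
    (hα5 : ¬ CDGA.IsExact SF.toCDGA (P.proj.toAlgHom α)) :
    ∃ η : P.T.A,
      η ∈ P.totalLengthGE BB.toSullivan.genSpan (n + 1) ∧
      η ∈ (Submodule.map P.incl.toAlgHom.toLinearMap (⨆ k, BB.low (k + 1))) *
        P.fiberSub ∧
      P.T.d (P.incl.toAlgHom u * α + η) = 0 ∧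
      P.incl.toAlgHom u * α + η ∈ P.totalLengthGE BB.toSullivan.genSpan (n + 1) ∧
      ¬ CDGA.IsExact P.T (P.incl.toAlgHom u * α + η) := by
  have hN : SF.Bounded N := Sullivan.bounded_of_cohomology hSFpd.2.1
  have hmodd : Odd m := by
    by_contra hm
    exact hu0 (BB.V_even hBBmin hBB hquad (Nat.not_odd_iff_even.1 hm) hu)
  obtain ⟨h, hlow, hgr, hlen, hgr0, hh⟩ := BB.exists_h hquad
  have hD := fun l => P.d_L hBBmin hBB hquad hSFmin hN l
  have hαL : α ∈ P.totalLengthGE BB.genSpan n :=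
    (mul_le_mul' (pow_le_pow_left' le_sup_right n) le_top :
      P.fiberGenSpan ^ n * P.fiberSub ≤ P.totalLengthGE BB.genSpan n) hα2
  have huL : P.incl.toAlgHom u ∈ P.totalLengthGE BB.genSpan 1 :=
    P.genSpan_le_L (B := BB.toSullivan)
      (P.incl_genSpan (B := BB.toSullivan) (Submodule.mem_iSup_of_mem m hu))
  have hug := P.incl.map_grading (BB.V_le m hu)
  have hdiu : P.T.d (P.incl.toAlgHom u) = 0 := by rw [← P.incl.comm_d, hdu, map_zero]
  have hdu' : ∀ s, P.T.d (P.incl.toAlgHom u * s) = - (P.incl.toAlgHom u * P.T.d s) := by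
    intro s
    rw [P.T.leibniz _ _ hug, hdiu, zero_mul, zero_add, hmodd.neg_one_pow, neg_smul, one_smul]
  have hzL : P.incl.toAlgHom u * P.T.d α ∈ P.totalLengthGE BB.genSpan (n + 1 + 1) := by
    have := P.L_mul (B := BB.toSullivan) huL (hD n α hαL)
    rwa [add_comm 1 (n + 1)] at this
  have hzg : P.incl.toAlgHom u * P.T.d α ∈ P.T.grading (m + N + 1) :=
    P.T.mul_mem (i := m) (j := N + 1) hug (P.T.d_mem hα3)
  obtain ⟨η, hη1, hη2, hη3⟩ := P.kill hlow hgr hlen hgr0 hh hD hzL hzg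
    (by rw [hdu', P.T.d_sq, mul_zero, neg_zero])
    (P.base_exact hBBmin hBB hu hu0 hlowest hh hdu (by rw [P.proj.comm_d, hα4]))
  have huα : P.mu u (P.proj.toAlgHom α) = P.incl.toAlgHom u * α := by
    rw [FibrationModel.mu_apply, P.j_proj hα1]
  refine ⟨η, hη2, P.TL_one_le hη1, ?_, add_mem ?_ hη2, ?_⟩
  · rw [map_add, hdu', hη3, neg_add_cancel]
  · have := P.L_mul (B := BB.toSullivan) huL hαL
    rwa [add_comm 1 n] at this
  · rw [← huα]
    exact P.not_exact hBBmin hu hu0 hlowest hmodd hN (P.proj.map_grading hα3) hα5 hη1
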